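/- Let K be a field of characteristic zero, D ⊆ Δ⁺ a basic subset, and φ : D → K ∖ {0}. The field of invariants K(V_{D,φ})^N of the coadjoint action of N = UT(n,K) on the field of rational functions on the basic variety V_{D,φ} is a purely transcendental extension of K of transcendence degree |C(D)| − |D|; that is, it is generated over K by |C(D)| − |D| algebraically independent elements. -/

import Mathlib

/-- A positive root `(i,j)`: `n ≥ i > j ≥ 1`. -/
def IsPosRoot (n : ℕ) (γ : ℕ × ℕ) : Prop := 1 ≤ γ.2 ∧ γ.2 < γ.1 ∧ γ.1 ≤ n

/-- `γ` is the sum of the roots `α` and `β` (in either order):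
`(i,j) + (j,k) = (i,k)`. -/
def RootSum (α β γ : ℕ × ℕ) : Prop :=
  (α.2 = β.1 ∧ γ = (α.1, β.2)) ∨ (β.2 = α.1 ∧ γ = (β.1, α.2))

/-- A basic subset: a set of positive roots with at most one root in each
row and at most one root in each column. -/
def IsBasic (n : ℕ) (D : Set (ℕ × ℕ)) : Prop :=
  (∀ γ ∈ D, IsPosRoot n γ) ∧
  (∀ α ∈ D, ∀ β ∈ D, α.1 = β.1 → α = β) ∧
  (∀ α ∈ D, ∀ β ∈ D, α.2 = β.2 → α = β)

/-- A positive root `α` is `D`-singular if `α + β ∈ D` for some positive root `β`. -/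
def IsSingular (n : ℕ) (D : Set (ℕ × ℕ)) (α : ℕ × ℕ) : Prop :=
  IsPosRoot n α ∧ ∃ β γ, IsPosRoot n β ∧ RootSum α β γ ∧ γ ∈ D

/-- `M(D) = R(D) \ D`, where `R(D)` is the set of `D`-regular positive roots. -/
def MD (n : ℕ) (D : Set (ℕ × ℕ)) : Set (ℕ × ℕ) :=
  {γ | IsPosRoot n γ ∧ ¬ IsSingular n D γ ∧ γ ∉ D}
open scoped Classical

/-- Marks used in the diagram of a basic subset. -/
inductive Mark : Type
  | otimes : Mark
  | plus : Mark
  | minus : Mark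
  | bullet : Mark
deriving DecidableEq

/-- A marking state of the diagram: a partial assignment of marks to places. -/
abbrev MState : Type := ℕ × ℕ → Option Mark

/-- Step 0 of the diagram construction: every root of `M(D)` is marked `•`. -/
noncomputable def initMark (n : ℕ) (D : Set (ℕ × ℕ)) : MState :=
  fun γ => if γ ∈ MD n D then some Mark.bullet else none

/-- One step of the diagram construction: mark `ξ` with `⊗`, and for every
decomposition `ξ = α + β` with `col α = col ξ`, `row β = row ξ` and both
`α`, `β` unmarked, mark `α` with `+` and `β` with `−`. -/
noncomputable def markStep (s : MState) (ξ : ℕ × ℕ) : MState :=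
  fun γ =>
    if γ = ξ then some Mark.otimes
    else if γ.2 = ξ.2 ∧ ξ.2 < γ.1 ∧ γ.1 < ξ.1 ∧ s γ = none ∧ s (ξ.1, γ.1) = none then
      some Mark.plus
    else if γ.1 = ξ.1 ∧ ξ.2 < γ.2 ∧ γ.2 < ξ.1 ∧ s γ = none ∧ s (γ.2, ξ.2) = none then
      some Mark.minus
    else s γ

/-- The list of all positive roots in decreasing order with respect to `≻`
(`(k,m) ≻ (i,j)` iff `m < j`, or `m = j` and `k > i`). -/
def rootList (n : ℕ) : List (ℕ × ℕ) :=
  (List.range n).flatMap (fun j0 =>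
    (List.range n).filterMap (fun k =>
      if j0 + 1 < n - k then some (n - k, j0 + 1) else none))

/-- Run the diagram construction along a list of places, recording at each
step `i` the pair (`ξ_i`, state after step `i`). -/
noncomputable def diagRun (s : MState) : List (ℕ × ℕ) → List ((ℕ × ℕ) × MState)
  | [] => []
  | ξ :: rest =>
    if s ξ = none then (ξ, markStep s ξ) :: diagRun (markStep s ξ) rest
    else diagRun s rest

/-- The full run of the diagram construction for a basic subset `D`. -/
noncomputable def diagSeq (n : ℕ) (D : Set (ℕ × ℕ)) : List ((ℕ × ℕ) × MState) :=
  diagRun (initMark n D) (rootList n)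

/-- `c`, the number of steps (= number of `⊗` marks) of the diagram. -/
noncomputable def numSteps (n : ℕ) (D : Set (ℕ × ℕ)) : ℕ := (diagSeq n D).length

/-- `ξ_i`, the root marked `⊗` at step `i` (for `1 ≤ i ≤ c`). -/
noncomputable def xiRoot (n : ℕ) (D : Set (ℕ × ℕ)) (i : ℕ) : ℕ × ℕ :=
  (((diagSeq n D).getD (i - 1) ((0, 0), initMark n D))).1

/-- The state of the diagram after step `i` (for `0 ≤ i ≤ c`); the state
"before step `i`" is `stateAfter n D (i-1)`. -/
noncomputable def stateAfter (n : ℕ) (D : Set (ℕ × ℕ)) : ℕ → MState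
  | 0 => initMark n D
  | i + 1 => (((diagSeq n D).getD i ((0, 0), initMark n D))).2

/-- `C(D)`: the set of roots marked `⊗` on the diagram. -/
noncomputable def CD (n : ℕ) (D : Set (ℕ × ℕ)) : Set (ℕ × ℕ) :=
  {γ | γ ∈ (diagSeq n D).map Prod.fst}

/-- `A_γ`: the set of roots of `C(D)` in the same row as `γ`, strictly to the
left of `γ`. -/
noncomputable def AD (n : ℕ) (D : Set (ℕ × ℕ)) (γ : ℕ × ℕ) : Set (ℕ × ℕ) :=
  {γ' | γ' ∈ CD n D ∧ γ'.1 = γ.1 ∧ γ'.2 < γ.2}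
open scoped Classical

/-- The variable set `{x_γ : γ ∈ Δ⁺}`: positive roots of `Δ⁺`. -/
abbrev PRoot (n : ℕ) : Type := {γ : ℕ × ℕ // IsPosRoot n γ}

/-- A point `v : Δ⁺ → K` of `𝔫₋` realized as a strictly lower triangular
matrix (`1`-based roots, `0`-based matrix indices). -/
noncomputable def matOf (n : ℕ) (K : Type) [Field K] (v : PRoot n → K) :
    Matrix (Fin n) (Fin n) K :=
  fun a b =>
    if h : IsPosRoot n ((a : ℕ) + 1, (b : ℕ) + 1) then v ⟨((a : ℕ) + 1, (b : ℕ) + 1), h⟩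
    else 0

/-- The point of `𝔫₋` given by the strictly lower triangular entries of a
matrix. -/
noncomputable def vecOf (n : ℕ) (K : Type) [Field K] (A : Matrix (Fin n) (Fin n) K)
    (γ : PRoot n) : K :=
  A ⟨γ.1.1 - 1, by obtain ⟨h1, h2, h3⟩ := γ.2; omega⟩
    ⟨γ.1.2 - 1, by obtain ⟨h1, h2, h3⟩ := γ.2; omega⟩

/-- `π`: the strictly lower triangular part of a matrix. -/
def lowerPart (n : ℕ) (K : Type) [Field K] (A : Matrix (Fin n) (Fin n) K) :
    Matrix (Fin n) (Fin n) K :=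
  fun a b => if (b : ℕ) < (a : ℕ) then A a b else 0

/-- Membership in `N = UT(n,K)`: upper triangular with units on the diagonal. -/
def IsUni (n : ℕ) (K : Type) [Field K] (g : Matrix (Fin n) (Fin n) K) : Prop :=
  (∀ i : Fin n, g i i = 1) ∧ ∀ i j : Fin n, j < i → g i j = 0

/-- The element `X_{D,φ} = Σ_{ξ ∈ D} φ(ξ) E_ξ` of `𝔫₋`. -/
noncomputable def XDphi (n : ℕ) (K : Type) [Field K] (D : Set (ℕ × ℕ)) (φ : ℕ × ℕ → K) :
    Matrix (Fin n) (Fin n) K :=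
  fun a b => if ((a : ℕ) + 1, (b : ℕ) + 1) ∈ D then φ ((a : ℕ) + 1, (b : ℕ) + 1) else 0

/-- The basic variety `V_{D,φ} = {π(g X_{D,φ} h) : g, h ∈ N}`, as a set of
points of `𝔫₋`. -/
noncomputable def VDvar (n : ℕ) (K : Type) [Field K] (D : Set (ℕ × ℕ)) (φ : ℕ × ℕ → K) :
    Set (PRoot n → K) :=
  {v | ∃ g h : Matrix (Fin n) (Fin n) K, IsUni n K g ∧ IsUni n K h ∧
    v = vecOf n K (lowerPart n K (g * XDphi n K D φ * h))}

/-- The basic cell `V_D^∘ = ⋃_φ V_{D,φ}`, over all `φ : D → K ∖ {0}`. -/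
noncomputable def VDcell (n : ℕ) (K : Type) [Field K] (D : Set (ℕ × ℕ)) :
    Set (PRoot n → K) :=
  {v | ∃ φ : ℕ × ℕ → K, (∀ γ ∈ D, φ γ ≠ 0) ∧ v ∈ VDvar n K D φ}

/-- The vanishing ideal `I(S)` of a set of points `S`. -/
noncomputable def vanishing (σ K : Type) [Field K] (S : Set (σ → K)) :
    Ideal (MvPolynomial σ K) where
  carrier := {f | ∀ v ∈ S, MvPolynomial.eval v f = 0}
  add_mem' := by
    intro a b ha hb v hv
    simp [map_add, ha v hv, hb v hv]
  zero_mem' := by intro v hv; simp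
  smul_mem' := by
    intro c f hf v hv
    simp [smul_eq_mul, hf v hv]
/-- The coadjoint action of `g ∈ N` on a point of `𝔫₋`: `X ↦ π(g X g⁻¹)`. -/
noncomputable def coadjPt (n : ℕ) (K : Type) [Field K]
    (g : Matrix (Fin n) (Fin n) K) (v : PRoot n → K) : PRoot n → K :=
  vecOf n K (lowerPart n K (g * matOf n K v * g⁻¹))

/-- The minor `P^w_{ij}(A)` for `w : ℕ → ℕ` and `1`-based indices `i, j`:
rows `I = w(J') ∪ {i}`, columns `J = J' ∪ {j}`, where
`J' = {b < j : w(b) > i}`, each listed in increasing order. -/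
noncomputable def minorW (n : ℕ) (R : Type) [CommRing R] (w : ℕ → ℕ)
    (A : Matrix (Fin n) (Fin n) R) (i j : ℕ) : R :=
  let J' : Finset (Fin n) := Finset.univ.filter (fun b => (b : ℕ) + 1 < j ∧ i < w ((b : ℕ) + 1))
  let JJ : Finset (Fin n) := J' ∪ Finset.univ.filter (fun b => (b : ℕ) + 1 = j)
  let II : Finset (Fin n) := Finset.univ.filter
    (fun a => (a : ℕ) + 1 = i ∨ ∃ b ∈ J', w ((b : ℕ) + 1) = (a : ℕ) + 1)
  if h : II.card = JJ.card then
    Matrix.det (Matrix.of fun a b : Fin JJ.card =>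
      A ((II.orderIsoOfFin h) a).val ((JJ.orderIsoOfFin rfl) b).val)
  else 0

/-- The generic matrix of `𝔫₋`, whose strictly lower triangular entries are
the variables `x_γ`. -/
noncomputable def genMat (n : ℕ) (K : Type) [Field K] :
    Matrix (Fin n) (Fin n) (MvPolynomial (PRoot n) K) :=
  fun a b =>
    if h : IsPosRoot n ((a : ℕ) + 1, (b : ℕ) + 1) then
      MvPolynomial.X ⟨((a : ℕ) + 1, (b : ℕ) + 1), h⟩
    else 0

/-- The field of rational functions `K(S)` on an (irreducible) subset
`S ⊆ 𝔫₋`: the fraction field of `K[x_γ]/I(S)`. -/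
noncomputable abbrev RatFld (n : ℕ) (K : Type) [Field K] (S : Set (PRoot n → K)) : Type :=
  FractionRing (MvPolynomial (PRoot n) K ⧸ vanishing (PRoot n) K S)

/-- `F ∈ K(S)` is an invariant of the coadjoint action of `N` on `S`:
writing `F = f/h` with `h ∉ I(S)`, for every `g ∈ N` the rational functions
`F ∘ (coadjoint action of g)` and `F` agree on `S`. -/
noncomputable def IsInvariantRat (n : ℕ) (K : Type) [Field K]
    (S : Set (PRoot n → K)) (F : RatFld n K S) : Prop :=
  ∃ f h : MvPolynomial (PRoot n) K,
    h ∉ vanishing (PRoot n) K S ∧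
    algebraMap (MvPolynomial (PRoot n) K ⧸ vanishing (PRoot n) K S) (RatFld n K S)
        (Ideal.Quotient.mk (vanishing (PRoot n) K S) h) * F =
      algebraMap (MvPolynomial (PRoot n) K ⧸ vanishing (PRoot n) K S) (RatFld n K S)
        (Ideal.Quotient.mk (vanishing (PRoot n) K S) f) ∧
    ∀ g : Matrix (Fin n) (Fin n) K, IsUni n K g → ∀ v ∈ S,
      MvPolynomial.eval (coadjPt n K g v) f * MvPolynomial.eval v h =
        MvPolynomial.eval v f * MvPolynomial.eval (coadjPt n K g v) h

section RationalMaps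

open MvPolynomial Filter

variable {K : Type} [Field K] {σ τ υ : Type}

/-- A nonempty irreducible set of points of an affine space. -/
structure IrrSet (σ K : Type) [Field K] where
  /-- The underlying set of points. -/
  carrier : Set (σ → K)
  nonempty : carrier.Nonempty
  irr : ∀ f g : MvPolynomial σ K, (∃ v ∈ carrier, eval v f ≠ 0) →
    (∃ v ∈ carrier, eval v g ≠ 0) → ∃ v ∈ carrier, eval v f ≠ 0 ∧ eval v g ≠ 0

/-- The filter of sets containing a nonempty principal open subset of an irreducible set. -/
def IrrSet.gen (S : IrrSet σ K) : Filter (σ → K) where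
  sets := {U | ∃ h : MvPolynomial σ K, (∃ v ∈ S.carrier, eval v h ≠ 0) ∧
    ∀ v ∈ S.carrier, eval v h ≠ 0 → v ∈ U}
  univ_sets := ⟨1, by obtain ⟨v, hv⟩ := S.nonempty; exact ⟨v, hv, by simp⟩, by simp⟩
  sets_of_superset := by
    rintro U W ⟨h, h1, h2⟩ hUW
    exact ⟨h, h1, fun v hv hh => hUW (h2 v hv hh)⟩
  inter_sets := by
    rintro U W ⟨h, h1, h2⟩ ⟨k, k1, k2⟩
    refine ⟨h * k, ?_, ?_⟩
    · obtain ⟨v, hv, e1, e2⟩ := S.irr h k h1 k1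
      exact ⟨v, hv, by simp [e1, e2]⟩
    · intro v hv hne
      simp only [map_mul, ne_eq, mul_eq_zero, not_or] at hne
      exact ⟨h2 v hv hne.1, k2 v hv hne.2⟩

theorem IrrSet.carrier_mem_gen (S : IrrSet σ K) : S.carrier ∈ S.gen :=
  ⟨1, by obtain ⟨v, hv⟩ := S.nonempty; exact ⟨v, hv, by simp⟩, fun _ hv _ => hv⟩

theorem IrrSet.ne_zero_mem_gen {S : IrrSet σ K} {q : MvPolynomial σ K}
    (h : ∃ v ∈ S.carrier, eval v q ≠ 0) : {v | v ∈ S.carrier ∧ eval v q ≠ 0} ∈ S.gen :=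
  ⟨q, h, fun _ hv hq => ⟨hv, hq⟩⟩

instance (S : IrrSet σ K) : S.gen.NeBot := by
  rw [Filter.neBot_iff, ne_eq, ← Filter.empty_mem_iff_bot]
  rintro ⟨h, ⟨v, hv, hh⟩, h2⟩
  exact h2 v hv hh

/-- A polynomial vanishing generically vanishes identically. -/
theorem IrrSet.eval_eq_zero_of_eventually {S : IrrSet σ K} {p : MvPolynomial σ K}
    (h : ∀ᶠ v in S.gen, eval v p = 0) : ∀ v ∈ S.carrier, eval v p = 0 := by
  by_contra! hc
  obtain ⟨v, hv⟩ := (h.and (IrrSet.ne_zero_mem_gen hc)).exists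
  exact hv.2.2 hv.1

/-- `r` is given on `U` by a single quotient of polynomials. -/
def RegOn (U : Set (σ → K)) (r : (σ → K) → K) : Prop :=
  ∃ a b : MvPolynomial σ K, ∀ p ∈ U, eval p b ≠ 0 ∧ r p = eval p a / eval p b

namespace RegOn
variable {U W : Set (σ → K)} {r s : (σ → K) → K}

theorem mono (h : RegOn U r) (hWU : W ⊆ U) : RegOn W r := by
  obtain ⟨a, b, hab⟩ := h
  exact ⟨a, b, fun p hp => hab p (hWU hp)⟩

theorem congr (h : RegOn U r) (hrs : ∀ p ∈ U, s p = r p) : RegOn U s := by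
  obtain ⟨a, b, hab⟩ := h
  exact ⟨a, b, fun p hp => ⟨(hab p hp).1, (hrs p hp).trans (hab p hp).2⟩⟩

theorem const (c : K) : RegOn U (fun _ => c) := ⟨C c, 1, fun p _ => by simp⟩

theorem coord (i : σ) : RegOn U (fun p => p i) := ⟨X i, 1, fun p _ => by simp⟩

theorem add (hr : RegOn U r) (hs : RegOn U s) : RegOn U (fun p => r p + s p) := by
  obtain ⟨a, b, hab⟩ := hr
  obtain ⟨c, d, hcd⟩ := hs
  refine ⟨a * d + b * c, b * d, fun p hp => ?_⟩
  obtain ⟨h1, h2⟩ := hab p hp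
  obtain ⟨h3, h4⟩ := hcd p hp
  refine ⟨by simp [h1, h3], ?_⟩
  beta_reduce
  rw [h2, h4]
  simp only [map_add, map_mul]
  field_simp

theorem mul (hr : RegOn U r) (hs : RegOn U s) : RegOn U (fun p => r p * s p) := by
  obtain ⟨a, b, hab⟩ := hr
  obtain ⟨c, d, hcd⟩ := hs
  refine ⟨a * c, b * d, fun p hp => ?_⟩
  obtain ⟨h1, h2⟩ := hab p hp
  obtain ⟨h3, h4⟩ := hcd p hp
  refine ⟨by simp [h1, h3], ?_⟩
  beta_reduce
  rw [h2, h4]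
  simp only [map_mul]
  field_simp

theorem neg (hr : RegOn U r) : RegOn U (fun p => - r p) :=
  ((const (-1)).mul hr).congr fun p _ => by ring

theorem sub (hr : RegOn U r) (hs : RegOn U s) : RegOn U (fun p => r p - s p) :=
  (hr.add hs.neg).congr fun p _ => by ring

theorem div (hr : RegOn U r) (hs : RegOn U s) (h0 : ∀ p ∈ U, s p ≠ 0) :
    RegOn U (fun p => r p / s p) := by
  obtain ⟨a, b, hab⟩ := hr
  obtain ⟨c, d, hcd⟩ := hs
  refine ⟨a * d, b * c, fun p hp => ?_⟩
  obtain ⟨h1, h2⟩ := hab p hp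
  obtain ⟨h3, h4⟩ := hcd p hp
  have h5 := h0 p hp
  rw [h4] at h5
  have h6 : eval p c ≠ 0 := fun h => h5 (by simp [h])
  refine ⟨by simp [h1, h6], ?_⟩
  beta_reduce
  rw [h2, h4]
  simp only [map_mul]
  field_simp

theorem sum {ι : Type*} (t : Finset ι) {f : ι → (σ → K) → K} (hf : ∀ i ∈ t, RegOn U (f i)) :
    RegOn U (fun p => ∑ i ∈ t, f i p) := by
  induction t using Finset.induction_on with
  | empty => exact (const 0).congr fun p _ => by simp
  | insert a t ha ih =>
    refine ((hf a (by simp)).add (ih fun i hi => hf i (by simp [hi]))).congr fun p _ => ?_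
    rw [Finset.sum_insert ha]

theorem ite (c : Prop) [Decidable c] (hr : c → RegOn U r) (hs : ¬c → RegOn U s) :
    RegOn U (fun p => if c then r p else s p) := by
  by_cases h : c
  · simpa [h] using hr h
  · simpa [h] using hs h

theorem eval_comp {ρ : (σ → K) → τ → K} (hρ : ∀ i, RegOn U (fun v => ρ v i))
    (f : MvPolynomial τ K) : RegOn U (fun v => eval (ρ v) f) := by
  induction f using MvPolynomial.induction_on with
  | C a => simpa using const a
  | add p q hp hq => simpa using hp.add hq
  | mul_X p i hp => simpa using hp.mul (hρ i)

theorem comp {W : Set (τ → K)} {r : (τ → K) → K} {ρ : (σ → K) → τ → K}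
    (hρ : ∀ i, RegOn U (fun v => ρ v i)) (hr : RegOn W r) (hUW : ∀ v ∈ U, ρ v ∈ W) :
    RegOn U (fun v => r (ρ v)) := by
  obtain ⟨a, b, hab⟩ := hr
  exact ((eval_comp hρ a).div (eval_comp hρ b) fun p hp => (hab _ (hUW p hp)).1).congr
    fun p hp => (hab _ (hUW p hp)).2

end RegOn

/-- `r` is a rational function on the irreducible set `S`. -/
def RatOn (S : IrrSet σ K) (r : (σ → K) → K) : Prop := ∃ U ∈ S.gen, RegOn U r

theorem RatOn.exists_common {S : IrrSet σ K} [Finite τ] {ρ : (σ → K) → τ → K}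
    (hρ : ∀ i, RatOn S (fun v => ρ v i)) : ∃ U ∈ S.gen, ∀ i, RegOn U (fun v => ρ v i) := by
  choose U hU hr using hρ
  exact ⟨⋂ i, U i, Filter.iInter_mem.mpr hU, fun i => (hr i).mono (Set.iInter_subset U i)⟩

theorem RatOn.comp {S : IrrSet σ K} [Finite τ] {ρ : (σ → K) → τ → K}
    (hρ : ∀ i, RatOn S (fun v => ρ v i)) {W : Set (τ → K)} {r : (τ → K) → K} (hr : RegOn W r)
    (hW : ∀ᶠ v in S.gen, ρ v ∈ W) : RatOn S (fun v => r (ρ v)) := by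
  obtain ⟨U, hU, hreg⟩ := RatOn.exists_common hρ
  exact ⟨U ∩ {v | ρ v ∈ W}, Filter.inter_mem hU hW,
    RegOn.comp (fun i => (hreg i).mono Set.inter_subset_left) hr fun v hv => hv.2⟩

/-- The quotient of `S` by `r` is birational to the quotient of `T` by `r'`: there is a dominant
rational map `S → T` matching the relations generically and having a rational section through any
generic set. -/
def Reduces (S : IrrSet σ K) (r : (σ → K) → (σ → K) → Prop) (T : IrrSet τ K)
    (r' : (τ → K) → (τ → K) → Prop) : Prop :=
  ∃ ρ : (σ → K) → τ → K, (∀ i, RatOn S (fun v => ρ v i)) ∧ Tendsto ρ S.gen T.gen ∧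
    (∃ U ∈ S.gen, ∀ v ∈ U, ∀ w ∈ U, r v w ↔ r' (ρ v) (ρ w)) ∧
    ∀ P ∈ S.gen, ∃ s : (τ → K) → σ → K, (∀ i, RatOn T (fun p => s p i)) ∧
      ∀ᶠ p in T.gen, s p ∈ P ∧ r' (ρ (s p)) p

theorem Reduces.trans_eq [Finite σ] [Finite τ] [Finite υ] {S : IrrSet σ K}
    {r : (σ → K) → (σ → K) → Prop} {T : IrrSet τ K} {r' : (τ → K) → (τ → K) → Prop}
    {F : IrrSet υ K} (h₁ : Reduces S r T r') (h₂ : Reduces T r' F Eq) : Reduces S r F Eq := by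
  obtain ⟨ρ₁, hρ₁, ht₁, ⟨U₁, hU₁, hr₁⟩, hs₁⟩ := h₁
  obtain ⟨ρ₂, hρ₂, ht₂, ⟨U₂, hU₂, hr₂⟩, hs₂⟩ := h₂
  refine ⟨fun v => ρ₂ (ρ₁ v), fun i => ?_, ht₂.comp ht₁,
    ⟨U₁ ∩ ρ₁ ⁻¹' U₂, inter_mem hU₁ (ht₁ hU₂), fun v hv w hw =>
      (hr₁ v hv.1 w hw.1).trans (hr₂ _ hv.2 _ hw.2)⟩, fun P hP => ?_⟩
  · obtain ⟨W, hW, hreg⟩ := hρ₂ i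
    exact RatOn.comp hρ₁ hreg (ht₁ hW)
  · obtain ⟨s₁, hs₁r, hs₁e⟩ := hs₁ (P ∩ ρ₁ ⁻¹' U₂) (inter_mem hP (ht₁ hU₂))
    obtain ⟨W, hW, hreg⟩ := RatOn.exists_common hs₁r
    obtain ⟨s₂, hs₂r, hs₂e⟩ := hs₂ _ (inter_mem (inter_mem hs₁e hU₂) hW)
    refine ⟨fun q => s₁ (s₂ q), fun i => RatOn.comp hs₂r (hreg i)
      (hs₂e.mono fun q hq => hq.1.2), hs₂e.mono fun q hq => ?_⟩
    obtain ⟨⟨⟨⟨h1, h2⟩, h3⟩, -⟩, h4⟩ := hq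
    exact ⟨h1.1, ((hr₂ _ h1.2 _ h3).mp h2).trans h4⟩

/-- A criterion for `Reduces` with principal open domains of definition. -/
theorem Reduces.of_sections [Finite τ] {S : IrrSet σ K} {r : (σ → K) → (σ → K) → Prop}
    {T : IrrSet τ K} {r' : (τ → K) → (τ → K) → Prop} (q : MvPolynomial σ K)
    (q' : MvPolynomial τ K) (hq : ∃ v ∈ S.carrier, eval v q ≠ 0)
    (ρ : (σ → K) → τ → K) (hρ : ∀ i, RegOn {v | v ∈ S.carrier ∧ eval v q ≠ 0} (fun v => ρ v i))
    (hT : ∀ v ∈ S.carrier, eval v q ≠ 0 → ρ v ∈ T.carrier ∧ eval (ρ v) q' ≠ 0)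
    (hr : ∀ v ∈ S.carrier, eval v q ≠ 0 → ∀ w ∈ S.carrier, eval w q ≠ 0 →
      (r v w ↔ r' (ρ v) (ρ w)))
    (s : (σ → K) → (τ → K) → σ → K)
    (hs : ∀ x ∈ S.carrier, eval x q ≠ 0 →
      (∀ i, RegOn {p | p ∈ T.carrier ∧ eval p q' ≠ 0} (fun p => s x p i)) ∧
      (∀ p ∈ T.carrier, eval p q' ≠ 0 →
        s x p ∈ S.carrier ∧ eval (s x p) q ≠ 0 ∧ r' (ρ (s x p)) p) ∧
      s x (ρ x) = x)
    (hsurj : ∀ p ∈ T.carrier, eval p q' ≠ 0 → ∃ x ∈ S.carrier, eval x q ≠ 0 ∧ ρ x = p) :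
    Reduces S r T r' := by
  have hq' : ∃ v ∈ T.carrier, eval v q' ≠ 0 := by
    obtain ⟨v, hv, h⟩ := hq
    exact ⟨ρ v, hT v hv h⟩
  have hSq := IrrSet.ne_zero_mem_gen hq
  have hTq := IrrSet.ne_zero_mem_gen hq'
  refine ⟨ρ, fun i => ⟨_, hSq, hρ i⟩, ?_, ⟨_, hSq, fun v hv w hw => hr v hv.1 hv.2 w hw.1 hw.2⟩,
    ?_⟩
  · rintro W ⟨h, ⟨p, hp, hhp⟩, hW⟩
    obtain ⟨x, hx, e1, e2⟩ := T.irr h q' ⟨p, hp, hhp⟩ hq'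
    obtain ⟨y, hy, hqy, rfl⟩ := hsurj x hx e2
    obtain ⟨a, b, hab⟩ := RegOn.eval_comp hρ h
    beta_reduce at hab
    have ha : eval y a ≠ 0 := by
      intro h0
      apply e1
      rw [(hab y ⟨hy, hqy⟩).2, h0, zero_div]
    refine ⟨a * q, ⟨y, hy, by simp [ha, hqy]⟩, fun v hv hne => ?_⟩
    simp only [map_mul, ne_eq, mul_eq_zero, not_or] at hne
    refine hW _ (hT v hv hne.2).1 ?_
    have := hab v ⟨hv, hne.2⟩
    rw [this.2]
    exact div_ne_zero hne.1 this.1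
  · rintro P ⟨h, hh, hP⟩
    obtain ⟨x, hx, e1, e2⟩ := S.irr h q hh hq
    obtain ⟨h1, h2, h3⟩ := hs x hx e2
    refine ⟨s x, fun i => ⟨_, hTq, h1 i⟩, ?_⟩
    obtain ⟨a, b, hab⟩ := RegOn.eval_comp h1 h
    beta_reduce at hab
    have hx' := hT x hx e2
    have ha : eval (ρ x) a ≠ 0 := by
      intro h0
      apply e1
      have := (hab (ρ x) hx').2
      rwa [h3, h0, zero_div] at this
    have hm := IrrSet.ne_zero_mem_gen (S := T) ⟨ρ x, hx'.1, ha⟩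
    filter_upwards [hm, hTq] with p hp hp'
    obtain ⟨g1, g2, g3⟩ := h2 p hp'.1 hp'.2
    refine ⟨hP _ g1 ?_, g3⟩
    have := hab p hp'
    rw [this.2]
    exact div_ne_zero hp.2 this.1

end RationalMaps

section Invariants

open MvPolynomial Filter

variable {K : Type} [Field K]

theorem eval_aeval_eq {τ κ : Type} (z : κ → K) (u : τ → MvPolynomial κ K)
    (P : MvPolynomial τ K) : eval z (aeval u P) = eval (fun t => eval z (u t)) P := by
  induction P using MvPolynomial.induction_on with
  | C a => simp [algebraMap_eq]
  | add p q hp hq => rw [map_add, map_add, map_add, hp, hq]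
  | mul_X p i hp => rw [map_mul, map_mul, map_mul, hp, aeval_X, eval_X]

instance (n : ℕ) : Finite (PRoot n) := by
  refine Finite.of_injective (β := Fin (n + 1) × Fin (n + 1))
    (fun γ => (⟨γ.1.1, by have := γ.2.2.2; omega⟩,
      ⟨γ.1.2, by have := γ.2.2.2; have := γ.2.2.1; omega⟩)) ?_
  rintro ⟨⟨a, b⟩, h⟩ ⟨⟨c, d⟩, h'⟩ heq
  simpa using heq

/-- The coordinate affine subspace through `y₀` with free coordinates in `Fr`. -/
noncomputable def affineIrr {τ : Type} [Infinite K] (Fr : Set τ) (y₀ : τ → K) : IrrSet τ K where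
  carrier := {y | ∀ t, t ∉ Fr → y t = y₀ t}
  nonempty := ⟨y₀, fun _ _ => rfl⟩
  irr := by
    intro f g hf hg
    set sub : MvPolynomial τ K → MvPolynomial τ K :=
      fun f => aeval (fun t => if t ∈ Fr then X t else C (y₀ t)) f with hsub
    have hev : ∀ (z : τ → K) f, eval z (sub f) =
        eval (fun t => if t ∈ Fr then z t else y₀ t) f := by
      intro z f
      rw [hsub]
      beta_reduce
      rw [eval_aeval_eq]
      congr 2
      funext t
      by_cases ht : t ∈ Fr <;> simp [ht]
    have key : ∀ f, (∃ v : τ → K, (∀ t, t ∉ Fr → v t = y₀ t) ∧ eval v f ≠ 0) → sub f ≠ 0 := by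
      rintro f ⟨v, hv, hne⟩ h0
      apply hne
      have : (fun t => if t ∈ Fr then v t else y₀ t) = v := by
        funext t
        by_cases ht : t ∈ Fr <;> simp [ht, hv]
      rw [← this, ← hev, h0, map_zero]
    have hmul := mul_ne_zero (key f hf) (key g hg)
    obtain ⟨z, hz⟩ : ∃ z : τ → K, eval z (sub f * sub g) ≠ 0 := by
      by_contra! hc
      exact hmul (MvPolynomial.funext fun z => by simpa using hc z)
    rw [map_mul, hev, hev] at hz
    exact ⟨_, fun t ht => by simp [ht], left_ne_zero_of_mul hz, right_ne_zero_of_mul hz⟩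

/-- The irreducible set attached to a set with prime vanishing ideal. -/
def IrrSet.ofPrime {σ : Type} (S : Set (σ → K)) (hI : (vanishing σ K S).IsPrime) : IrrSet σ K where
  carrier := S
  nonempty := by
    by_contra hS
    rw [Set.not_nonempty_iff_eq_empty] at hS
    apply hI.ne_top
    rw [Ideal.eq_top_iff_one]
    intro v hv
    simp [hS] at hv
  irr := by
    rintro f g ⟨v, hv, hf⟩ ⟨w, hw, hg⟩
    by_contra! hc
    have : f * g ∈ vanishing σ K S := by
      intro u hu
      by_cases h : eval u f = 0
      · simp [h]
      · simp [hc u hu h]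
    rcases hI.mem_or_mem this with h | h
    · exact hf (h v hv)
    · exact hg (h w hw)

variable {n : ℕ} {S : Set (PRoot n → K)}

/-- A polynomial viewed as a rational function on `S`. -/
noncomputable def toRat (n : ℕ) (S : Set (PRoot n → K)) :
    MvPolynomial (PRoot n) K →+* RatFld n K S :=
  (algebraMap (MvPolynomial (PRoot n) K ⧸ vanishing (PRoot n) K S) (RatFld n K S)).comp
    (Ideal.Quotient.mk (vanishing (PRoot n) K S))

theorem toRat_eq_zero {f : MvPolynomial (PRoot n) K} :
    toRat n S f = 0 ↔ f ∈ vanishing (PRoot n) K S := by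
  rw [toRat, RingHom.comp_apply, FaithfulSMul.algebraMap_eq_zero_iff,
    Ideal.Quotient.eq_zero_iff_mem]

theorem toRat_C (c : K) : toRat n S (C c) = algebraMap K (RatFld n K S) c := by
  rw [IsScalarTower.algebraMap_apply K
    (MvPolynomial (PRoot n) K ⧸ vanishing (PRoot n) K S) (RatFld n K S)]
  rfl

theorem not_mem_vanishing {σ : Type} {S : Set (σ → K)} {f : MvPolynomial σ K} :
    f ∉ vanishing σ K S ↔ ∃ v ∈ S, eval v f ≠ 0 := by
  constructor
  · intro h
    by_contra! hc
    exact h hc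
  · rintro ⟨v, hv, h⟩ hf
    exact h (hf v hv)

variable [hI : (vanishing (PRoot n) K S).IsPrime]

/-- The element `F` of the fraction field is represented by the function `r`. -/
def Represents (F : RatFld n K S) (r : (PRoot n → K) → K) : Prop :=
  ∃ a b : MvPolynomial (PRoot n) K, b ∉ vanishing (PRoot n) K S ∧
    toRat n S b * F = toRat n S a ∧
    ∀ᶠ v in (IrrSet.ofPrime S hI).gen, r v * eval v b = eval v a

theorem ofPrime_ne_zero {b : MvPolynomial (PRoot n) K} (hb : b ∉ vanishing (PRoot n) K S) :
    ∀ᶠ v in (IrrSet.ofPrime S hI).gen, eval v b ≠ 0 :=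
  Filter.mem_of_superset
    (IrrSet.ne_zero_mem_gen (S := IrrSet.ofPrime S hI) (not_mem_vanishing.mp hb)) fun _ hv => hv.2

namespace Represents

theorem congr {F : RatFld n K S} {r s : (PRoot n → K) → K} (h : Represents F r)
    (hrs : ∀ᶠ v in (IrrSet.ofPrime S hI).gen, s v = r v) : Represents F s := by
  obtain ⟨a, b, hb, he, hv⟩ := h
  exact ⟨a, b, hb, he, by filter_upwards [hv, hrs] with v h1 h2; rw [h2, h1]⟩

theorem eq {F G : RatFld n K S} {r : (PRoot n → K) → K} (hF : Represents F r)
    (hG : Represents G r) : F = G := by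
  obtain ⟨a, b, hb, he, hv⟩ := hF
  obtain ⟨c, d, hd, he', hv'⟩ := hG
  have hz : a * d - c * b ∈ vanishing (PRoot n) K S := by
    refine IrrSet.eval_eq_zero_of_eventually (S := IrrSet.ofPrime S hI) ?_
    filter_upwards [hv, hv'] with v h1 h2
    simp only [map_sub, map_mul, ← h1, ← h2]
    ring
  rw [← toRat_eq_zero, map_sub, map_mul, map_mul, ← he, ← he'] at hz
  have h1 := mt toRat_eq_zero.mp hb
  have h2 := mt toRat_eq_zero.mp hd
  have : toRat n S b * toRat n S d * (F - G) = 0 := by rw [← hz]; ring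
  simpa [h1, h2, sub_eq_zero] using this

theorem eventually_eq_zero {r : (PRoot n → K) → K} (h : Represents (0 : RatFld n K S) r) :
    ∀ᶠ v in (IrrSet.ofPrime S hI).gen, r v = 0 := by
  obtain ⟨a, b, hb, he, hv⟩ := h
  rw [mul_zero] at he
  have ha := toRat_eq_zero.mp he.symm
  filter_upwards [hv, ofPrime_ne_zero hb, (IrrSet.ofPrime S hI).carrier_mem_gen] with v h1 h2 h3
  rw [ha v h3] at h1
  simpa [h2] using h1

theorem const (c : K) : Represents (algebraMap K (RatFld n K S) c) (fun _ => c) := by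
  refine ⟨C c, 1, fun h => hI.ne_top ((Ideal.eq_top_iff_one _).mpr h), ?_, ?_⟩
  · rw [map_one, one_mul, toRat_C]
  · simp

theorem add {F G : RatFld n K S} {r s : (PRoot n → K) → K} (hF : Represents F r)
    (hG : Represents G s) : Represents (F + G) (fun v => r v + s v) := by
  obtain ⟨a, b, hb, he, hv⟩ := hF
  obtain ⟨c, d, hd, he', hv'⟩ := hG
  refine ⟨a * d + b * c, b * d, fun h => (hI.mem_or_mem h).elim hb hd, ?_, ?_⟩
  · simp only [map_add, map_mul, ← he, ← he']
    ring
  · filter_upwards [hv, hv'] with v h1 h2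
    simp only [map_add, map_mul, ← h1, ← h2]
    ring

theorem mul {F G : RatFld n K S} {r s : (PRoot n → K) → K} (hF : Represents F r)
    (hG : Represents G s) : Represents (F * G) (fun v => r v * s v) := by
  obtain ⟨a, b, hb, he, hv⟩ := hF
  obtain ⟨c, d, hd, he', hv'⟩ := hG
  refine ⟨a * c, b * d, fun h => (hI.mem_or_mem h).elim hb hd, ?_, ?_⟩
  · simp only [map_mul, ← he, ← he']
    ring
  · filter_upwards [hv, hv'] with v h1 h2
    simp only [map_mul, ← h1, ← h2]
    ring

theorem aeval {κ : Type} {F : κ → RatFld n K S} {r : κ → (PRoot n → K) → K}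
    (h : ∀ k, Represents (F k) (r k)) (f : MvPolynomial κ K) :
    Represents (MvPolynomial.aeval F f) (fun v => eval (fun k => r k v) f) := by
  induction f using MvPolynomial.induction_on with
  | C a => simpa [algebraMap_eq] using const a
  | add p q hp hq => simpa using hp.add hq
  | mul_X p i hp => simpa using hp.mul (h i)

theorem of_ratOn {r : (PRoot n → K) → K} (h : RatOn (IrrSet.ofPrime S hI) r) :
    ∃ F : RatFld n K S, Represents F r := by
  obtain ⟨U, hU, a, b, hab⟩ := h
  have hb : b ∉ vanishing (PRoot n) K S := by
    obtain ⟨v, hv, hv'⟩ := (inter_mem hU (IrrSet.ofPrime S hI).carrier_mem_gen |>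
      Filter.nonempty_of_mem)
    exact not_mem_vanishing.mpr ⟨v, hv', (hab v hv).1⟩
  refine ⟨toRat n S a / toRat n S b, a, b, hb, ?_, ?_⟩
  · have := mt toRat_eq_zero.mp hb
    field_simp
  · filter_upwards [hU] with v hv
    obtain ⟨h1, h2⟩ := hab v hv
    rw [h2]
    field_simp

end Represents

variable (n S) in
/-- The invariants form an intermediate field. -/
noncomputable def invariantField : IntermediateField K (RatFld n K S) where
  carrier := {F | IsInvariantRat n K S F}
  mul_mem' := by
    rintro F G ⟨f, h, hh, he, hv⟩ ⟨f', h', hh', he', hv'⟩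
    refine ⟨f * f', h * h', fun hm => (hI.mem_or_mem hm).elim hh hh', ?_, fun g hg v hvS => ?_⟩
    · simp only [map_mul, ← he, ← he']
      ring
    · simp only [map_mul]
      linear_combination (eval (coadjPt n K g v) f' * eval v h') * hv g hg v hvS +
        (eval v f * eval (coadjPt n K g v) h) * hv' g hg v hvS
  add_mem' := by
    rintro F G ⟨f, h, hh, he, hv⟩ ⟨f', h', hh', he', hv'⟩
    refine ⟨f * h' + f' * h, h * h', fun hm => (hI.mem_or_mem hm).elim hh hh', ?_,
      fun g hg v hvS => ?_⟩
    · simp only [map_mul, map_add, ← he, ← he']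
      ring
    · simp only [map_mul, map_add]
      linear_combination (eval (coadjPt n K g v) h' * eval v h') * hv g hg v hvS +
        (eval v h * eval (coadjPt n K g v) h) * hv' g hg v hvS
  algebraMap_mem' := by
    intro c
    refine ⟨C c, 1, fun h => hI.ne_top ((Ideal.eq_top_iff_one _).mpr h), ?_, ?_⟩
    · rw [map_one, map_one, one_mul]
      exact (toRat_C c).symm
    · simp
  inv_mem' := by
    rintro F ⟨f, h, hh, he, hv⟩
    by_cases hF : F = 0
    · subst hF
      refine ⟨0, 1, fun h => hI.ne_top ((Ideal.eq_top_iff_one _).mpr h), ?_, ?_⟩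
      · simp
      · simp
    · have hh' := mt toRat_eq_zero.mp hh
      refine ⟨h, f, ?_, ?_, fun g hg v hvS => by linear_combination - hv g hg v hvS⟩
      · intro hf
        have he' : toRat n S h * F = toRat n S f := he
        rw [toRat_eq_zero.mpr hf] at he'
        simp [hh', hF] at he'
      · rw [← he]
        field_simp

/-- The invariant field of `S` is purely transcendental once the quotient of `S` by the group is
birational to an affine space. -/
theorem exists_generators_of_reduces [Infinite K] {τ κ : Type} [Finite τ]
    (htend : ∀ g : Matrix (Fin n) (Fin n) K, IsUni n K g →
      Tendsto (coadjPt n K g) (IrrSet.ofPrime S hI).gen (IrrSet.ofPrime S hI).gen)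
    (hpoly : ∀ (g : Matrix (Fin n) (Fin n) K) (f : MvPolynomial (PRoot n) K),
      ∃ f' : MvPolynomial (PRoot n) K, ∀ v, eval v f' = eval (coadjPt n K g v) f)
    {Fr : Set τ} {y₀ : τ → K} (e : κ → τ) (he : Function.Injective e) (hFr : Set.range e = Fr)
    (hred : Reduces (IrrSet.ofPrime S hI)
      (fun v w => ∃ g, IsUni n K g ∧ coadjPt n K g v = w) (affineIrr Fr y₀) Eq) :
    ∃ F : κ → RatFld n K S,
      (∀ ξ, IsInvariantRat n K S (F ξ)) ∧ AlgebraicIndependent K F ∧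
      (∀ G ∈ IntermediateField.adjoin K (Set.range F), IsInvariantRat n K S G) ∧
      (∀ G, IsInvariantRat n K S G → G ∈ IntermediateField.adjoin K (Set.range F)) := by
  obtain ⟨ρ, hρ, ht, ⟨U, hU, hr⟩, hs⟩ := hred
  choose F hF using fun k => Represents.of_ratOn (hρ (e k))
  have hinv : ∀ ξ, IsInvariantRat n K S (F ξ) := by
    intro k
    obtain ⟨a, b, hb, hab, hv⟩ := hF k
    refine ⟨a, b, hb, hab, fun g hg => ?_⟩
    obtain ⟨a', ha'⟩ := hpoly g a
    obtain ⟨b', hb'⟩ := hpoly g b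
    have := IrrSet.eval_eq_zero_of_eventually (S := IrrSet.ofPrime S hI)
      (p := a' * b - a * b') (by
        filter_upwards [hv, (htend g hg).eventually hv, hU, htend g hg hU] with v h1 h2 h3 h4
        have h5 : ρ v = ρ (coadjPt n K g v) := (hr v h3 _ h4).mp ⟨g, hg, rfl⟩
        simp only [map_sub, map_mul, ha', hb', ← h1, ← h2, h5]
        ring)
    intro v hvS
    have h := this v hvS
    simp only [map_sub, map_mul, ha', hb'] at h
    linear_combination h
  -- a nonzero polynomial in the free coordinates is generically nonzero along `ρ`
  have hne : ∀ f : MvPolynomial κ K, f ≠ 0 →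
      ∀ᶠ v in (IrrSet.ofPrime S hI).gen, eval (fun k => ρ v (e k)) f ≠ 0 := by
    intro f hf
    obtain ⟨z, hz⟩ : ∃ z : κ → K, eval z f ≠ 0 := by
      by_contra! hc
      exact hf (MvPolynomial.funext fun z => by simpa using hc z)
    have hx : ∃ y ∈ (affineIrr Fr y₀).carrier, eval y (rename e f) ≠ 0 := by
      refine ⟨fun t => if h : ∃ k, e k = t then z h.choose else y₀ t, fun t ht => ?_, ?_⟩
      · beta_reduce
        rw [dif_neg]
        rwa [← hFr] at ht
      · rw [eval_rename]
        convert hz using 2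
        congr 1
        funext k
        have hk : ∃ k', e k' = e k := ⟨k, rfl⟩
        simp only [Function.comp_apply, hk, dite_true]
        rw [he hk.choose_spec]
    filter_upwards [ht (IrrSet.ne_zero_mem_gen hx)] with v hv
    have := hv.2
    rwa [eval_rename] at this
  have hzero : ∀ f : MvPolynomial κ K, aeval F f = 0 → f = 0 := by
    intro f hf
    by_contra hf0
    have h1 := Represents.aeval hF f
    rw [hf] at h1
    obtain ⟨v, h2, h3⟩ := (h1.eventually_eq_zero.and (hne f hf0)).exists
    exact h3 h2
  refine ⟨F, hinv, (algebraicIndependent_iff).mpr hzero, fun G hG => ?_, ?_⟩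
  · have hle : IntermediateField.adjoin K (Set.range F) ≤ invariantField n S := by
      rw [IntermediateField.adjoin_le_iff]
      rintro _ ⟨k, rfl⟩
      exact hinv k
    exact hle hG
  · rintro G ⟨f, h, hh, hG, hv⟩
    have hhne := ofPrime_ne_zero hh
    obtain ⟨s, hsr, hse⟩ := hs _ (inter_mem (inter_mem hU hhne)
      (IrrSet.ofPrime S hI).carrier_mem_gen)
    obtain ⟨W, hW, hreg⟩ := RatOn.exists_common hsr
    have hq : RegOn (W ∩ {p | eval (s p) h ≠ 0}) (fun p => eval (s p) f / eval (s p) h) :=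
      (RegOn.eval_comp (fun i => (hreg i).mono Set.inter_subset_left) f).div
        (RegOn.eval_comp (fun i => (hreg i).mono Set.inter_subset_left) h) fun p hp => hp.2
    obtain ⟨A, B, hAB⟩ := hq
    set sub : MvPolynomial τ K → MvPolynomial κ K := fun P =>
      aeval (fun t => if h : ∃ k, e k = t then X h.choose else C (y₀ t)) P with hsub
    have hsubev : ∀ v, ρ v ∈ (affineIrr Fr y₀).carrier → ∀ P,
        eval (fun k => ρ v (e k)) (sub P) = eval (ρ v) P := by
      intro v hv P
      rw [hsub]
      beta_reduce
      rw [eval_aeval_eq]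
      congr 2
      funext t
      by_cases ht : ∃ k, e k = t
      · simp only [ht, dite_true, eval_X]
        rw [ht.choose_spec]
      · simp only [ht, dite_false, eval_C]
        exact (hv t (by rwa [← hFr])).symm
    have hgen : ∀ᶠ v in (IrrSet.ofPrime S hI).gen,
        eval (ρ v) B ≠ 0 ∧ eval v f / eval v h * eval (ρ v) B = eval (ρ v) A := by
      filter_upwards [ht hse, ht hW, hU, hhne, (IrrSet.ofPrime S hI).carrier_mem_gen]
        with v h1 h2 h3 h4 h5
      obtain ⟨⟨⟨h6, h7⟩, h8⟩, h9⟩ := h1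
      obtain ⟨h10, h11⟩ := hAB (ρ v) ⟨h2, h7⟩
      refine ⟨h10, ?_⟩
      obtain ⟨g, hg, hgs⟩ := (hr v h3 _ h6).mpr h9.symm
      have := hv g hg v h5
      rw [hgs] at this
      have h12 : eval v f / eval v h = eval (ρ v) A / eval (ρ v) B := by
        rw [← h11]
        have h7' : eval (s (ρ v)) h ≠ 0 := h7
        field_simp
        linear_combination - this
      rw [h12]
      field_simp
    have hcar : ∀ᶠ v in (IrrSet.ofPrime S hI).gen, ρ v ∈ (affineIrr Fr y₀).carrier :=
      ht (affineIrr Fr y₀).carrier_mem_gen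
    have hGr : Represents G (fun v => eval v f / eval v h) := by
      refine ⟨f, h, hh, hG, ?_⟩
      filter_upwards [hhne] with v h1
      field_simp
    have hA := (Represents.aeval hF (sub A)).congr (s := fun v => eval (ρ v) A)
      (hcar.mono fun v hv => (hsubev v hv A).symm)
    have hB := (Represents.aeval hF (sub B)).congr (s := fun v => eval (ρ v) B)
      (hcar.mono fun v hv => (hsubev v hv B).symm)
    have hprod : G * aeval F (sub B) = aeval F (sub A) :=
      (hGr.mul hB).eq (hA.congr (hgen.mono fun v hv => hv.2))
    have hB0 : aeval F (sub B) ≠ 0 := by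
      intro h0
      rw [h0] at hB
      obtain ⟨v, h1, h2⟩ := (hB.eventually_eq_zero.and hgen).exists
      exact h2.1 h1
    have hmem : ∀ P : MvPolynomial κ K, aeval F P ∈ IntermediateField.adjoin K (Set.range F) := by
      intro P
      apply IntermediateField.algebra_adjoin_le_adjoin
      rw [Algebra.adjoin_range_eq_range_aeval]
      exact ⟨P, rfl⟩
    rw [eq_div_of_mul_eq hB0 hprod]
    exact div_mem (hmem _) (hmem _)

end Invariants

section Bump

variable {n : ℕ}

/-- The places `(e, k)` carrying the coordinates attached to the labelling `c`. -/
def Tri (c : Fin n → ℕ) (k e : Fin n) : Prop :=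
  (k : ℕ) < (e : ℕ) ∧ c k < c e ∧ c e ≤ (k : ℕ)

/-- `(i, d)` is the place to be bumped: `d` is the first column carrying coordinates and `i` is the
lowest row of that column. -/
structure IsBump (c : Fin n → ℕ) (d i : Fin n) : Prop where
  inj : Function.Injective c
  tri : Tri c d i
  min : ∀ k e, Tri c k e → (d : ℕ) ≤ (k : ℕ)
  max : ∀ e, Tri c d e → (e : ℕ) ≤ (i : ℕ)

/-- The labelling after a bump. -/
def bumpLabel (c : Fin n → ℕ) (d i : Fin n) : Fin n → ℕ := fun a => c (Equiv.swap d i a)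

theorem bumpLabel_injective {c : Fin n → ℕ} (hc : Function.Injective c) (d i : Fin n) :
    Function.Injective (bumpLabel c d i) :=
  hc.comp (Equiv.swap d i).injective

theorem bumpLabel_left (c : Fin n → ℕ) (d i : Fin n) : bumpLabel c d i d = c i := by
  simp [bumpLabel]

theorem bumpLabel_right (c : Fin n → ℕ) (d i : Fin n) : bumpLabel c d i i = c d := by
  simp [bumpLabel]

theorem bumpLabel_of_ne (c : Fin n → ℕ) {d i a : Fin n} (h1 : a ≠ d) (h2 : a ≠ i) :
    bumpLabel c d i a = c a := by
  simp [bumpLabel, Equiv.swap_apply_of_ne_of_ne h1 h2]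

theorem IsBump.tri_iff {c : Fin n → ℕ} {d i : Fin n} (h : IsBump c d i) (k e : Fin n) :
    Tri (bumpLabel c d i) k e ↔
      Tri c k e ∧ ¬(k = d ∧ c e ≤ c i) ∧ ¬(e = i ∧ Tri c d k) := by
  obtain ⟨h1, h2, h3⟩ := h.tri
  have hne : d ≠ i := fun hh => by simp [hh] at h1
  have m1 := h.min k e
  have m2 := h.min k d
  have m3 := h.min k i
  have m4 := h.max e
  have m5 := h.max k
  have i1 := fun hh => congrArg Fin.val (@h.inj e i hh)
  have i2 := fun hh => congrArg Fin.val (@h.inj k i hh)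
  have i3 := fun hh => congrArg Fin.val (@h.inj e d hh)
  have i4 := fun hh => congrArg Fin.val (@h.inj k d hh)
  rcases eq_or_ne e d with rfl | hed
  · rcases eq_or_ne k i with rfl | hki
    · simp only [Tri, Fin.ext_iff, true_and, not_le, bumpLabel_left, bumpLabel_right] at *
      omega
    · rcases eq_or_ne k e with rfl | hkd
      · simp [Tri]
      · simp only [Tri, Fin.ext_iff, true_and, not_le, bumpLabel_left,
          bumpLabel_of_ne c hkd hki] at *
        have := Fin.val_ne_of_ne hkd
        have := Fin.val_ne_of_ne hki
        omega
  · rcases eq_or_ne e i with rfl | hei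
    · rcases eq_or_ne k d with rfl | hkd
      · simp only [Tri, Fin.ext_iff, true_and, not_le, bumpLabel_left, bumpLabel_right] at *
        omega
      · rcases eq_or_ne k e with rfl | hki
        · simp [Tri]
        · simp only [Tri, Fin.ext_iff, true_and, bumpLabel_right,
            bumpLabel_of_ne c hkd hki] at *
          have := Fin.val_ne_of_ne hkd
          have := Fin.val_ne_of_ne hki
          omega
    · have := Fin.val_ne_of_ne hei
      have := Fin.val_ne_of_ne hed
      rcases eq_or_ne k d with rfl | hkd
      · simp only [Tri, Fin.ext_iff, true_and, not_le, bumpLabel_left,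
          bumpLabel_of_ne c hed hei] at *
        omega
      · have := Fin.val_ne_of_ne hkd
        rcases eq_or_ne k i with rfl | hki
        · simp only [Tri, Fin.ext_iff, bumpLabel_right,
            bumpLabel_of_ne c hed hei] at *
          omega
        · simp only [Tri, Fin.ext_iff, bumpLabel_of_ne c hed hei,
            bumpLabel_of_ne c hkd hki] at *
          omega

theorem IsBump.tri_of {c : Fin n → ℕ} {d i : Fin n} (h : IsBump c d i) {k e : Fin n}
    (ht : Tri (bumpLabel c d i) k e) : Tri c k e := ((h.tri_iff k e).mp ht).1

end Bump

section BumpMatrix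

open Matrix

variable {K : Type} [Field K] {n : ℕ}

/-- Rows below `d` of `g` are unipotent of the pattern prescribed by `c`. -/
def IsPatAbove (c : Fin n → ℕ) (d : Fin n) (g : Matrix (Fin n) (Fin n) K) : Prop :=
  ∀ k : Fin n, (d : ℕ) < (k : ℕ) → g k k = 1 ∧
    ∀ l : Fin n, k ≠ l → g k l ≠ 0 → (k : ℕ) < (l : ℕ) ∧ c k < c l

/-- The unipotent matrices of the pattern prescribed by `c`. -/
def IsPat (c : Fin n → ℕ) (g : Matrix (Fin n) (Fin n) K) : Prop :=
  (∀ k, g k k = 1) ∧ ∀ k l : Fin n, k ≠ l → g k l ≠ 0 → (k : ℕ) < (l : ℕ) ∧ c k < c l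

/-- `Y` is supported on the places of `Tri c`. -/
def SuppTri (c : Fin n → ℕ) (Y : Matrix (Fin n) (Fin n) K) : Prop :=
  ∀ e k, Y e k ≠ 0 → Tri c k e

/-- `g` intertwines `Y` and `W` on the places of `Tri c`. -/
def Intertwines (c : Fin n → ℕ) (Y W g : Matrix (Fin n) (Fin n) K) : Prop :=
  ∀ k e, Tri c k e → (W * g) e k = (g * Y) e k

/-- The matrix with column `d` replaced by zero. -/
def cutCol (d : Fin n) (Y : Matrix (Fin n) (Fin n) K) : Matrix (Fin n) (Fin n) K :=
  fun e k => if k = d then 0 else Y e k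

/-- The elementary matrix adding multiples of row `i` to the other rows. -/
def colAdd (i : Fin n) (β : Fin n → K) : Matrix (Fin n) (Fin n) K :=
  1 + Matrix.of fun a b => if b = i then β a else 0

theorem colAdd_mul (i : Fin n) (β : Fin n → K) (A : Matrix (Fin n) (Fin n) K) (e k : Fin n) :
    (colAdd i β * A) e k = A e k + β e * A i k := by
  rw [colAdd, add_mul, one_mul, Matrix.add_apply]
  simp [Matrix.mul_apply]

theorem mul_colAdd (i : Fin n) (β : Fin n → K) (A : Matrix (Fin n) (Fin n) K) (e k : Fin n) :
    (A * colAdd i β) e k = A e k + if k = i then ∑ b, A e b * β b else 0 := by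
  rw [colAdd, mul_add, mul_one, Matrix.add_apply]
  by_cases h : k = i <;> simp [Matrix.mul_apply, h]

theorem colAdd_mul_neg {i : Fin n} {β : Fin n → K} (h : β i = 0) :
    colAdd i β * colAdd i (-β) = 1 := by
  ext e k
  rw [colAdd_mul]
  by_cases hk : k = i
  · simp [colAdd, hk, h, Matrix.one_apply]
  · simp [colAdd, hk, Ne.symm hk, Matrix.one_apply]

/-- The multipliers clearing column `d` with the pivot in row `i`. -/
noncomputable def pivotRatio (d i : Fin n) (Y : Matrix (Fin n) (Fin n) K) : Fin n → K :=
  fun e => if e = i then 0 else Y e d / Y i d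

theorem pivotRatio_self (d i : Fin n) (Y : Matrix (Fin n) (Fin n) K) : pivotRatio d i Y i = 0 := by
  simp [pivotRatio]

theorem pivotRatio_of_ne {d i e : Fin n} (Y : Matrix (Fin n) (Fin n) K) (h : e ≠ i) :
    pivotRatio d i Y e = Y e d / Y i d := by
  simp [pivotRatio, h]

/-- The conjugate of `Y` without its column `d` by the elementary matrix clearing column `d`. -/
noncomputable def pivotConj (d i : Fin n) (Y : Matrix (Fin n) (Fin n) K) :
    Matrix (Fin n) (Fin n) K :=
  colAdd i (-pivotRatio d i Y) * cutCol d Y * colAdd i (pivotRatio d i Y)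

/-- The matrix of coordinates after a bump. -/
noncomputable def bumpMat (c : Fin n → ℕ) (d i : Fin n) (Y : Matrix (Fin n) (Fin n) K) :
    Matrix (Fin n) (Fin n) K :=
  fun e k => if Tri (bumpLabel c d i) k e then (if k = d then Y e d else pivotConj d i Y e k) else 0

theorem suppTri_bumpMat (c : Fin n → ℕ) (d i : Fin n) (Y : Matrix (Fin n) (Fin n) K) :
    SuppTri (bumpLabel c d i) (bumpMat c d i Y) := by
  intro e k h
  by_contra hc
  simp [bumpMat, hc] at h

theorem mul_colAdd_pivot {d i : Fin n} (Y A : Matrix (Fin n) (Fin n) K) (hY : Y i d ≠ 0)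
    (e : Fin n) :
    (A * colAdd i (pivotRatio d i Y)) e i = (∑ b, A e b * Y b d) / Y i d := by
  rw [mul_colAdd, if_pos rfl, Finset.sum_div, ← Finset.add_sum_erase _ _ (Finset.mem_univ i),
    ← Finset.add_sum_erase Finset.univ (fun b => A e b * Y b d / Y i d) (Finset.mem_univ i),
    pivotRatio_self, mul_div_assoc, div_self hY, mul_zero, zero_add, mul_one]
  congr 1
  refine Finset.sum_congr rfl fun b hb => ?_
  rw [pivotRatio_of_ne _ (Finset.ne_of_mem_erase hb), mul_div_assoc]

theorem intertwines_iff {c : Fin n → ℕ} {d : Fin n} (hmin : ∀ k e, Tri c k e → (d : ℕ) ≤ (k : ℕ))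
    {Y W g : Matrix (Fin n) (Fin n) K} (hW : SuppTri c W) (hg : IsPat c g) :
    Intertwines c Y W g ↔ (∀ e, Tri c d e → W e d = ∑ l, g e l * Y l d) ∧
      ∀ k e, Tri c k e → k ≠ d → (g * cutCol d Y - cutCol d W * g) e k = W e d * g d k := by
  have hsplit : ∀ e k, (W * g) e k = W e d * g d k + (cutCol d W * g) e k := by
    intro e k
    rw [Matrix.mul_apply, Matrix.mul_apply, ← Finset.add_sum_erase _ _ (Finset.mem_univ d),
      ← Finset.add_sum_erase Finset.univ (fun j => cutCol d W e j * g j k) (Finset.mem_univ d)]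
    have : cutCol d W e d = 0 := by simp [cutCol]
    rw [this, zero_mul, zero_add]
    congr 1
    refine Finset.sum_congr rfl fun b hb => ?_
    simp [cutCol, Finset.ne_of_mem_erase hb]
  have hcol : ∀ e, (cutCol d W * g) e d = 0 := by
    intro e
    rw [Matrix.mul_apply]
    refine Finset.sum_eq_zero fun l _ => ?_
    by_contra hne
    have h1 := left_ne_zero_of_mul hne
    have h2 := right_ne_zero_of_mul hne
    by_cases hl : l = d
    · simp [cutCol, hl] at h1
    · have h3 : W e l ≠ 0 := by simpa [cutCol, hl] using h1
      have h4 := hmin _ _ (hW _ _ h3)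
      have h5 := (hg.2 _ _ hl h2).1
      omega
  have hcut : ∀ e k, k ≠ d → (g * cutCol d Y) e k = (g * Y) e k := by
    intro e k hk
    simp [Matrix.mul_apply, cutCol, hk]
  constructor
  · intro h
    refine ⟨fun e he => ?_, fun k e hke hk => ?_⟩
    · have := h d e he
      rwa [hsplit, hcol, hg.1, mul_one, add_zero, Matrix.mul_apply] at this
    · have := h k e hke
      rw [hsplit] at this
      rw [Matrix.sub_apply, hcut e k hk, ← this]
      ring
  · rintro ⟨h1, h2⟩ k e hke
    by_cases hk : k = d
    · subst hk
      rw [hsplit, hcol, hg.1, h1 e hke, Matrix.mul_apply]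
      ring
    · have := h2 k e hke hk
      rw [Matrix.sub_apply, hcut e k hk] at this
      rw [hsplit]
      linear_combination - this

/-- Products vanish at the places `(e, k)` with `k < c e`. -/
theorem mul_eq_zero_of_lt {c : Fin n → ℕ} {d : Fin n} {A g : Matrix (Fin n) (Fin n) K}
    (hA : ∀ e k, A e k ≠ 0 → c e ≤ (k : ℕ) ∧ (d : ℕ) < (k : ℕ)) (hg : IsPatAbove c d g)
    {e k : Fin n} (hde : (d : ℕ) < (e : ℕ)) (h : (k : ℕ) < c e) :
    (g * A) e k = 0 ∧ (A * g) e k = 0 := by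
  rw [Matrix.mul_apply, Matrix.mul_apply]
  constructor
  · refine Finset.sum_eq_zero fun l _ => ?_
    by_contra hne
    have h1 := left_ne_zero_of_mul hne
    have h2 := hA _ _ (right_ne_zero_of_mul hne)
    by_cases hl : e = l
    · subst hl; omega
    · have := (hg e hde).2 l hl h1
      omega
  · refine Finset.sum_eq_zero fun l _ => ?_
    by_contra hne
    have h1 := hA _ _ (left_ne_zero_of_mul hne)
    have h2 := right_ne_zero_of_mul hne
    by_cases hl : l = k
    · subst hl; omega
    · have := (hg l h1.2).2 k hl h2
      omega

/-- Products at the places of `Tri c` only see the places of `Tri c`. -/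
theorem mul_eq_mul_mask {c : Fin n → ℕ} {d : Fin n} {A A' g : Matrix (Fin n) (Fin n) K}
    (hA : ∀ e k, A e k ≠ 0 → c e ≤ (k : ℕ) ∧ (d : ℕ) < (k : ℕ)) (hg : IsPatAbove c d g)
    (hA' : ∀ e k, A' e k = if Tri c k e ∧ k ≠ d then A e k else 0)
    {e k : Fin n} (hde : (d : ℕ) < (e : ℕ)) (h : Tri c k e) :
    (g * A') e k = (g * A) e k ∧ (A' * g) e k = (A * g) e k := by
  obtain ⟨t1, t2, t3⟩ := h
  simp only [Matrix.mul_apply]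
  constructor
  · refine Finset.sum_congr rfl fun l _ => ?_
    by_cases h1 : g e l = 0
    · simp [h1]
    by_cases h2 : A l k = 0
    · simp [h2, hA']
    obtain ⟨h3, h4⟩ := hA _ _ h2
    have hkd : k ≠ d := fun hh => by simp [hh] at h4
    rw [hA', if_pos]
    refine ⟨?_, hkd⟩
    by_cases hl : e = l
    · subst hl; exact ⟨t1, t2, t3⟩
    · have := (hg e hde).2 l hl h1
      exact ⟨by omega, by omega, h3⟩
  · refine Finset.sum_congr rfl fun l _ => ?_
    by_cases h1 : g l k = 0
    · simp [h1]
    by_cases h2 : A e l = 0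
    · simp [h2, hA']
    obtain ⟨h3, h4⟩ := hA _ _ h2
    have hld : l ≠ d := fun hh => by simp [hh] at h4
    rw [hA', if_pos]
    refine ⟨?_, hld⟩
    by_cases hl : l = k
    · subst hl; exact ⟨t1, t2, t3⟩
    · have := (hg l h4).2 k hl h1
      exact ⟨by omega, by omega, h3⟩

/-- Products only depend on the rows below `d`. -/
theorem mul_congr_above {d : Fin n} {A B g g' : Matrix (Fin n) (Fin n) K}
    (hB : ∀ e k : Fin n, B e k ≠ 0 → (d : ℕ) < (k : ℕ))
    (hgg : ∀ k l : Fin n, (d : ℕ) < (k : ℕ) → g' k l = g k l) {e : Fin n}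
    (hde : (d : ℕ) < (e : ℕ)) (k : Fin n) : (g' * A - B * g') e k = (g * A - B * g) e k := by
  simp only [Matrix.sub_apply, Matrix.mul_apply]
  congr 1
  · exact Finset.sum_congr rfl fun l _ => by rw [hgg e l hde]
  · refine Finset.sum_congr rfl fun l _ => ?_
    by_cases h : B e l = 0
    · simp [h]
    · rw [hgg l k (hB _ _ h)]

theorem cutCol_ne_zero {c : Fin n → ℕ} {d i : Fin n} (h : IsBump c d i)
    {Y : Matrix (Fin n) (Fin n) K} (hY : SuppTri c Y) {e k : Fin n} (hne : cutCol d Y e k ≠ 0) :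
    Tri c k e ∧ (d : ℕ) < (k : ℕ) := by
  by_cases hk : k = d
  · simp [cutCol, hk] at hne
  · have h1 : Y e k ≠ 0 := by simpa [cutCol, hk] using hne
    have h2 := hY _ _ h1
    have h3 := h.min _ _ h2
    have h4 := Fin.val_ne_of_ne hk
    exact ⟨h2, by omega⟩

theorem pivotRatio_ne_zero {c : Fin n → ℕ} {d i : Fin n} {Y : Matrix (Fin n) (Fin n) K}
    (hY : SuppTri c Y) {e : Fin n} (hne : pivotRatio d i Y e ≠ 0) : Tri c d e ∧ e ≠ i := by
  by_cases he : e = i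
  · simp [pivotRatio, he] at hne
  · rw [pivotRatio_of_ne _ he] at hne
    refine ⟨hY _ _ fun h0 => hne (by simp [h0]), he⟩

theorem pivotConj_apply (d i : Fin n) (Y : Matrix (Fin n) (Fin n) K) (e k : Fin n) :
    pivotConj d i Y e k =
      (cutCol d Y e k - pivotRatio d i Y e * cutCol d Y i k) + if k = i then
        ∑ b, (cutCol d Y e b - pivotRatio d i Y e * cutCol d Y i b) * pivotRatio d i Y b
        else 0 := by
  rw [pivotConj, mul_colAdd]
  simp only [colAdd_mul, Pi.neg_apply, neg_mul, ← sub_eq_add_neg]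

/-- The conjugated matrix vanishes at the places `(e, k)` with `k < c' e`. -/
theorem pivotConj_ne_zero {c : Fin n → ℕ} {d i : Fin n} (h : IsBump c d i)
    {Y : Matrix (Fin n) (Fin n) K} (hY : SuppTri c Y) {e k : Fin n}
    (hne : pivotConj d i Y e k ≠ 0) :
    bumpLabel c d i e ≤ (k : ℕ) ∧ (d : ℕ) < (k : ℕ) := by
  obtain ⟨t1, t2, t3⟩ := h.tri
  have hup : ∀ b, pivotRatio d i Y b ≠ 0 → Tri c d b ∧ b ≠ i := fun b => pivotRatio_ne_zero hY
  have hcut : ∀ e k, cutCol d Y e k ≠ 0 → Tri c k e ∧ (d : ℕ) < (k : ℕ) :=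
    fun e k => cutCol_ne_zero h hY
  have hrow : ∀ k, cutCol d Y e k - pivotRatio d i Y e * cutCol d Y i k ≠ 0 →
      bumpLabel c d i e ≤ (k : ℕ) ∧ (d : ℕ) < (k : ℕ) := by
    intro k hk
    by_cases h1 : cutCol d Y e k = 0
    · rw [h1, zero_sub, neg_ne_zero] at hk
      obtain ⟨⟨h2, h3, h4⟩, h5⟩ := hup _ (left_ne_zero_of_mul hk)
      have h6 := hcut _ _ (right_ne_zero_of_mul hk)
      refine ⟨?_, h6.2⟩
      rw [bumpLabel_of_ne c (fun hh => by simp [hh] at h2) h5]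
      omega
    · obtain ⟨⟨h2, h3, h4⟩, h5⟩ := hcut _ _ h1
      refine ⟨?_, h5⟩
      rcases eq_or_ne e d with rfl | hed
      · omega
      rcases eq_or_ne e i with rfl | hei
      · rw [bumpLabel_right]; omega
      · rw [bumpLabel_of_ne c hed hei]; omega
  rw [pivotConj_apply] at hne
  by_cases h1 : cutCol d Y e k - pivotRatio d i Y e * cutCol d Y i k = 0
  · rw [h1, zero_add] at hne
    split_ifs at hne with hk
    · subst hk
      obtain ⟨b, -, hb⟩ := Finset.exists_ne_zero_of_sum_ne_zero hne
      have h2 := hrow b (left_ne_zero_of_mul hb)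
      have h3 := h.max _ (hup _ (right_ne_zero_of_mul hb)).1
      exact ⟨by omega, t1⟩
    · exact absurd rfl hne
  · exact hrow k h1

theorem cutCol_bumpMat (c : Fin n → ℕ) (d i : Fin n) (Y : Matrix (Fin n) (Fin n) K)
    (e k : Fin n) : cutCol d (bumpMat c d i Y) e k =
      if Tri (bumpLabel c d i) k e ∧ k ≠ d then pivotConj d i Y e k else 0 := by
  by_cases hk : k = d
  · simp [cutCol, hk]
  · simp [cutCol, bumpMat, hk]

end BumpMatrix

section BumpEquiv

open Matrix

variable {K : Type} [Field K] {n : ℕ}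

theorem sum_mul_colAdd_neg_pivot {d i : Fin n} (Y A : Matrix (Fin n) (Fin n) K) (hY : Y i d ≠ 0)
    (e : Fin n) :
    ∑ l, (A * colAdd i (-pivotRatio d i Y)) e l * Y l d = A e i * Y i d := by
  have h1 : ∀ l, (A * colAdd i (-pivotRatio d i Y)) e l * Y l d =
      A e l * Y l d + if l = i then (∑ b, A e b * (-pivotRatio d i Y) b) * Y i d else 0 := by
    intro l
    rw [mul_colAdd]
    split_ifs with h
    · subst h; ring
    · ring
  rw [Finset.sum_congr rfl fun l _ => h1 l, Finset.sum_add_distrib, Finset.sum_ite_eq',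
    if_pos (Finset.mem_univ i), Finset.sum_mul, ← Finset.sum_add_distrib, Finset.sum_eq_single i]
  · simp [pivotRatio_self]
  · intro b _ hb
    rw [Pi.neg_apply, pivotRatio_of_ne _ hb]
    field_simp
    ring
  · simp

theorem conj_commutator {d i : Fin n} (Y W g : Matrix (Fin n) (Fin n) K) :
    (colAdd i (-pivotRatio d i W) * g * colAdd i (pivotRatio d i Y)) * pivotConj d i Y -
      pivotConj d i W * (colAdd i (-pivotRatio d i W) * g * colAdd i (pivotRatio d i Y)) =
    colAdd i (-pivotRatio d i W) * (g * cutCol d Y - cutCol d W * g) *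
      colAdd i (pivotRatio d i Y) := by
  have hY := colAdd_mul_neg (pivotRatio_self d i Y)
  have hW := colAdd_mul_neg (pivotRatio_self d i W)
  simp only [pivotConj, mul_sub, sub_mul]
  congr 1
  · calc _ = colAdd i (-pivotRatio d i W) * g *
        (colAdd i (pivotRatio d i Y) * colAdd i (-pivotRatio d i Y)) * cutCol d Y *
        colAdd i (pivotRatio d i Y) := by simp only [Matrix.mul_assoc]
      _ = _ := by rw [hY]; simp only [Matrix.mul_assoc, Matrix.one_mul]
  · calc _ = colAdd i (-pivotRatio d i W) * cutCol d W *
        (colAdd i (pivotRatio d i W) * colAdd i (-pivotRatio d i W)) * g *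
        colAdd i (pivotRatio d i Y) := by simp only [Matrix.mul_assoc]
      _ = _ := by rw [hW]; simp only [Matrix.mul_assoc, Matrix.one_mul]

theorem conj_commutator_symm {d i : Fin n} (Y W g : Matrix (Fin n) (Fin n) K) :
    (colAdd i (pivotRatio d i W) * g * colAdd i (-pivotRatio d i Y)) * cutCol d Y -
      cutCol d W * (colAdd i (pivotRatio d i W) * g * colAdd i (-pivotRatio d i Y)) =
    colAdd i (pivotRatio d i W) * (g * pivotConj d i Y - pivotConj d i W * g) *
      colAdd i (-pivotRatio d i Y) := by
  have hY := colAdd_mul_neg (pivotRatio_self d i Y)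
  have hW := colAdd_mul_neg (pivotRatio_self d i W)
  simp only [pivotConj, mul_sub, sub_mul]
  congr 1
  · calc _ = colAdd i (pivotRatio d i W) * g *
        colAdd i (-pivotRatio d i Y) * cutCol d Y * 1 := by
          simp only [Matrix.mul_assoc, Matrix.mul_one]
      _ = _ := by rw [← hY]; simp only [Matrix.mul_assoc]
  · calc _ = 1 * cutCol d W * colAdd i (pivotRatio d i W) * g *
        colAdd i (-pivotRatio d i Y) := by simp only [Matrix.mul_assoc, Matrix.one_mul]
      _ = _ := by rw [← hW]; simp only [Matrix.mul_assoc]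

theorem colAdd_mul_colAdd (i : Fin n) (β γ : Fin n → K) (A : Matrix (Fin n) (Fin n) K)
    (e k : Fin n) : (colAdd i β * A * colAdd i γ) e k =
      (A e k + β e * A i k) + if k = i then ∑ b, (A e b + β e * A i b) * γ b else 0 := by
  rw [mul_colAdd]
  simp only [colAdd_mul]

theorem IsPat.above {c : Fin n → ℕ} {g : Matrix (Fin n) (Fin n) K} (h : IsPat c g) (d : Fin n) :
    IsPatAbove c d g := fun k _ => ⟨h.1 k, h.2 k⟩

/-- The commutator of the masked matrices agrees with that of the unmasked ones. -/
theorem masked_commutator {c : Fin n → ℕ} {d i : Fin n} (h : IsBump c d i)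
    {Y W g : Matrix (Fin n) (Fin n) K} (hY : SuppTri c Y) (hW : SuppTri c W)
    (hg : IsPat (bumpLabel c d i) g) {k e : Fin n} (hke : Tri (bumpLabel c d i) k e) :
    (g * cutCol d (bumpMat c d i Y) - cutCol d (bumpMat c d i W) * g) e k =
      (g * pivotConj d i Y - pivotConj d i W * g) e k := by
  have hd := h.min _ _ (h.tri_of hke)
  have hde : (d : ℕ) < e := lt_of_le_of_lt hd hke.1
  rw [Matrix.sub_apply, Matrix.sub_apply,
    (mul_eq_mul_mask (A := pivotConj d i Y) (fun _ _ => pivotConj_ne_zero h hY) (hg.above d)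
      (cutCol_bumpMat c d i Y) hde hke).1,
    (mul_eq_mul_mask (A := pivotConj d i W) (fun _ _ => pivotConj_ne_zero h hW) (hg.above d)
      (cutCol_bumpMat c d i W) hde hke).2]

theorem bumpMat_left (c : Fin n → ℕ) (d i : Fin n) (Y : Matrix (Fin n) (Fin n) K) (e : Fin n) :
    bumpMat c d i Y e d = if Tri (bumpLabel c d i) d e then Y e d else 0 := by
  simp [bumpMat]

theorem intertwines_bump {c : Fin n → ℕ} {d i : Fin n} (h : IsBump c d i)
    {Y W g : Matrix (Fin n) (Fin n) K} (hY : SuppTri c Y) (hW : SuppTri c W) (hYi : Y i d ≠ 0)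
    (hWi : W i d ≠ 0) (hg : IsPat c g) (hI : Intertwines c Y W g) :
    Y i d = W i d ∧ ∃ g', IsPat (bumpLabel c d i) g' ∧
      Intertwines (bumpLabel c d i) (bumpMat c d i Y) (bumpMat c d i W) g' := by
  obtain ⟨H1, H2⟩ := (intertwines_iff h.min hW hg).mp hI
  obtain ⟨t1, t2, t3⟩ := h.tri
  have hup : ∀ b, Y b d ≠ 0 → Tri c d b := fun b hb => hY _ _ hb
  have hβY : ∀ b, pivotRatio d i Y b ≠ 0 → Tri c d b ∧ b ≠ i := fun b => pivotRatio_ne_zero hY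
  have hβW : ∀ b, ¬ Tri c d b → pivotRatio d i W b = 0 := fun b hb => by
    by_contra h0; exact hb (pivotRatio_ne_zero hW h0).1
  have hgi : ∀ l, Tri c d l → l ≠ i → g i l = 0 := by
    intro l hl hli
    by_contra h0
    have := hg.2 i l hli.symm h0
    have := h.max l hl
    omega
  have hgvi : ∑ l, g i l * Y l d = Y i d := by
    rw [Finset.sum_eq_single i, hg.1, one_mul]
    · intro b _ hb
      by_cases h0 : Y b d = 0
      · rw [h0, mul_zero]
      · rw [hgi b (hup b h0) hb, zero_mul]
    · simp
  have huv : W i d = Y i d := by rw [H1 i h.tri, hgvi]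
  refine ⟨huv.symm, ?_⟩
  have hdi : d ≠ i := fun hh => by simp [hh] at t1
  have hlab : ∀ l : Fin n, (d : ℕ) < l → l ≠ i → bumpLabel c d i l = c l := fun l hl hli =>
    bumpLabel_of_ne c (fun hh => by simp [hh] at hl) hli
  set E := g * cutCol d Y - cutCol d W * g with hE
  set gh := colAdd i (-pivotRatio d i W) * g * colAdd i (pivotRatio d i Y) with hgh
  have hne : ∀ e k, k ≠ i → gh e k = g e k - pivotRatio d i W e * g i k := by
    intro e k hk
    rw [hgh, colAdd_mul_colAdd, if_neg hk]; simp [sub_eq_add_neg]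
  have hcol : ∀ e, gh e i = ((∑ b, g e b * Y b d) - pivotRatio d i W e * Y i d) / Y i d := by
    intro e
    rw [hgh, mul_colAdd_pivot _ _ hYi]
    simp only [colAdd_mul, add_mul, Finset.sum_add_distrib, Pi.neg_apply, mul_assoc,
      ← Finset.mul_sum, hgvi]
    ring
  have hpat : IsPatAbove (bumpLabel c d i) d gh := by
    intro k hdk
    rcases eq_or_ne k i with rfl | hki
    · have hz := pivotRatio_self d k W
      refine ⟨by rw [hcol, hgvi, hz]; field_simp; simp, fun l hl h0 => ?_⟩
      rw [hne _ _ hl.symm, hz, zero_mul, sub_zero] at h0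
      obtain ⟨h1, h2⟩ := hg.2 _ _ hl h0
      rw [bumpLabel_right, hlab l (by omega) hl.symm]
      omega
    by_cases hkU : Tri c d k
    · have hki' : (k : ℕ) < i := lt_of_le_of_ne (h.max k hkU) (Fin.val_ne_of_ne hki)
      refine ⟨by rw [hne _ _ hki, hg.1, hgi k hkU hki]; simp, fun l hl h0 => ?_⟩
      rcases eq_or_ne l i with rfl | hli
      · exfalso; apply h0
        rw [hcol, ← H1 k hkU, pivotRatio_of_ne _ hki, huv]
        field_simp
        simp
      rw [hne _ _ hli] at h0
      obtain ⟨k1, k2, k3⟩ := hkU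
      by_cases h1 : g k l = 0
      · rw [h1, zero_sub, neg_ne_zero] at h0
        obtain ⟨h1, h2⟩ := hg.2 i l hli.symm (right_ne_zero_of_mul h0)
        rw [hlab k hdk hki, hlab l (by omega) hli]
        refine ⟨by omega, ?_⟩
        by_contra h3
        have := h.max l ⟨by omega, by omega, by omega⟩
        omega
      · obtain ⟨h1, h2⟩ := hg.2 k l hl h1
        rw [hlab k hdk hki, hlab l (by omega) hli]
        omega
    · have hz := hβW k hkU
      refine ⟨by rw [hne _ _ hki, hg.1, hz]; simp, fun l hl h0 => ?_⟩
      rcases eq_or_ne l i with rfl | hli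
      · rw [hcol, hz, zero_mul, sub_zero] at h0
        have h1 : ∑ b, g k b * Y b d ≠ 0 := fun hh => h0 (by rw [hh, zero_div])
        obtain ⟨b, -, hb⟩ := Finset.exists_ne_zero_of_sum_ne_zero h1
        have hbU := hup b (right_ne_zero_of_mul hb)
        have hkb : k ≠ b := fun hh => hkU (hh ▸ hbU)
        obtain ⟨h2, h3⟩ := hg.2 k b hkb (left_ne_zero_of_mul hb)
        have h4 := h.max b hbU
        obtain ⟨b1, b2, b3⟩ := hbU
        rw [hlab k hdk hki, bumpLabel_right]
        refine ⟨by omega, ?_⟩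
        by_contra h5
        have h6 : c k ≠ c d := fun hh => by have := h.inj hh; simp [this] at hdk
        exact hkU ⟨hdk, by omega, by omega⟩
      · rw [hne _ _ hli, hz, zero_mul, sub_zero] at h0
        obtain ⟨h1, h2⟩ := hg.2 k l hl h0
        rw [hlab k hdk hki, hlab l (by omega) hli]
        omega
  set g' : Matrix (Fin n) (Fin n) K := fun k l =>
    if (d : ℕ) < k then gh k l else if k = d ∧ l ≠ d then
      (if (d : ℕ) < l ∧ c i < c l then g d l - E i l / W i d else 0) else (1 : Matrix _ _ K) k l
    with hg'
  have hg'gh : ∀ k l : Fin n, (d : ℕ) < k → g' k l = gh k l := fun k l hk => by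
    simp only [hg', if_pos hk]
  have hg'pat : IsPat (bumpLabel c d i) g' := by
    refine ⟨fun k => ?_, fun k l hkl h0 => ?_⟩
    · by_cases hk : (d : ℕ) < k
      · rw [hg'gh k k hk]; exact (hpat k hk).1
      · simp only [hg', if_neg hk]
        rw [if_neg (by tauto), Matrix.one_apply_eq]
    · by_cases hk : (d : ℕ) < k
      · rw [hg'gh k l hk] at h0; exact (hpat k hk).2 l hkl h0
      · simp only [hg', if_neg hk] at h0
        split_ifs at h0 with h1 h2
        · obtain ⟨rfl, h1⟩ := h1
          have hli : l ≠ i := fun hh => by simp [hh] at h2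
          rw [bumpLabel_left, hlab l h2.1 hli]
          exact h2
        · exact absurd rfl h0
        · rw [Matrix.one_apply_ne hkl] at h0
          exact absurd rfl h0
  refine ⟨g', hg'pat, (intertwines_iff (fun k e hke => h.min k e (h.tri_of hke))
    (suppTri_bumpMat c d i W) hg'pat).mpr ⟨fun e he => ?_, fun k e hke hkd => ?_⟩⟩
  · obtain ⟨he1, he2, he3⟩ := (h.tri_iff d e).mp he
    rw [bumpMat_left, if_pos he, H1 e he1]
    refine Finset.sum_congr rfl fun l _ => ?_
    rw [hg'gh e l he1.1, bumpMat_left]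
    split_ifs with hl
    · obtain ⟨hl1, hl2, hl3⟩ := (h.tri_iff d l).mp hl
      have hli : l ≠ i := fun hh => hl2 ⟨rfl, by rw [hh]⟩
      rw [hne e l hli, hgi l hl1 hli]
      ring
    · by_cases h0 : Y l d = 0
      · simp [h0]
      have hlU := hup l h0
      have hl2 : c l ≤ c i := by
        by_contra hcc
        refine hl ((h.tri_iff d l).mpr ⟨hlU, fun hh => hcc hh.2, fun hh => ?_⟩)
        have := hh.2.1; omega
      have hce : c i < c e := by
        by_contra hcc; exact he2 ⟨rfl, by omega⟩
      have : g e l = 0 := by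
        by_contra h1
        have hel : e ≠ l := fun hh => by subst hh; omega
        have := hg.2 e l hel h1
        omega
      simp [this]
  · rw [masked_commutator h hY hW hg'pat hke]
    obtain ⟨hke1, hke2, hke3⟩ := (h.tri_iff k e).mp hke
    have hdk : (d : ℕ) < k := lt_of_le_of_ne (h.min k e hke1) (Fin.val_ne_of_ne hkd.symm)
    have hde : (d : ℕ) < e := hdk.trans hke1.1
    rw [mul_congr_above (fun e k h0 => (pivotConj_ne_zero h hW h0).2) hg'gh hde, hgh,
      conj_commutator, colAdd_mul_colAdd, bumpMat_left]
    have hEke : E e k = W e d * g d k := H2 k e hke1 hkd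
    have hg'd : g' d k = if c i < c k then g d k - E i k / W i d else 0 := by
      simp only [hg', lt_irrefl, if_false, hdk, true_and]
      rw [if_pos hkd]
    rw [hg'd, ← hE, hEke]
    obtain ⟨s1, s2, s3⟩ := hke1
    rcases eq_or_ne e i with rfl | hei
    · have hki : k ≠ e := fun hh => by simp [hh] at s1
      have h1 : ¬ Tri (bumpLabel c d e) d e := fun hh => by
        have := (h.tri_iff d e).mp hh; simp at this
      rw [if_neg hki, if_neg h1, Pi.neg_apply, pivotRatio_self]
      have : g d k = 0 := by
        by_contra h0
        have := hg.2 d k hkd.symm h0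
        exact hke3 ⟨rfl, hdk, by omega, by omega⟩
      simp [this]
    by_cases heU : Tri c d e
    · have hei' : (e : ℕ) < i := lt_of_le_of_ne (h.max e heU) (Fin.val_ne_of_ne hei)
      have hki : k ≠ i := fun hh => by subst hh; omega
      rw [if_neg hki, Pi.neg_apply, pivotRatio_of_ne _ hei]
      by_cases hck : c i < c k
      · have h1 : Tri (bumpLabel c d i) d e := (h.tri_iff d e).mpr
          ⟨heU, fun hh => by omega, fun hh => hei hh.1⟩
        rw [if_pos hck, if_pos h1]
        ring
      · have hck' : c k ≠ c i := fun hh => hki (h.inj hh)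
        have h2 : E i k = W i d * g d k := H2 k i ⟨by omega, by omega, by omega⟩ hkd
        rw [if_neg hck, h2]
        field_simp
        ring
    · have h1 : ¬ Tri (bumpLabel c d i) d e := fun hh => heU (h.tri_of hh)
      have hW0 : W e d = 0 := by
        by_contra h0; exact heU (hW _ _ h0)
      rw [if_neg h1, hW0, Pi.neg_apply, hβW e heU]
      simp only [neg_zero, zero_mul, add_zero, zero_add]
      split_ifs with hki
      · subst hki
        refine Finset.sum_eq_zero fun b _ => ?_
        by_cases hb0 : pivotRatio d k Y b = 0
        · rw [hb0, mul_zero]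
        obtain ⟨hbU, hbi⟩ := hβY b hb0
        have hbk := h.max b hbU
        have : E e b = 0 := by
          by_cases hb : (b : ℕ) < c e
          · have hcut : ∀ Z : Matrix (Fin n) (Fin n) K, SuppTri c Z → ∀ e k,
                cutCol d Z e k ≠ 0 → c e ≤ (k : ℕ) ∧ (d : ℕ) < k := fun Z hZ e k hz =>
              ⟨(cutCol_ne_zero h hZ hz).1.2.2, (cutCol_ne_zero h hZ hz).2⟩
            rw [hE, Matrix.sub_apply, (mul_eq_zero_of_lt (hcut Y hY) (hg.above d) hde hb).1,
              (mul_eq_zero_of_lt (hcut W hW) (hg.above d) hde hb).2, sub_zero]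
          · obtain ⟨b1, b2, b3⟩ := hbU
            have hced : (d : ℕ) < c e := by
              by_contra hcc; exact heU ⟨hde, by omega, by omega⟩
            rw [H2 b e ⟨by omega, by omega, by omega⟩ (fun hh => by subst hh; omega), hW0,
              zero_mul]
        rw [this, zero_mul]
      · rfl

theorem intertwines_of_bump {c : Fin n → ℕ} {d i : Fin n} (h : IsBump c d i)
    {Y W g' : Matrix (Fin n) (Fin n) K} (hY : SuppTri c Y) (hW : SuppTri c W) (hYi : Y i d ≠ 0)
    (hYW : Y i d = W i d) (hg' : IsPat (bumpLabel c d i) g')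
    (hI : Intertwines (bumpLabel c d i) (bumpMat c d i Y) (bumpMat c d i W) g') :
    ∃ g, IsPat c g ∧ Intertwines c Y W g := by
  obtain ⟨H1, H2'⟩ := (intertwines_iff (fun k e hke => h.min k e (h.tri_of hke))
    (suppTri_bumpMat c d i W) hg').mp hI
  obtain ⟨t1, t2, t3⟩ := h.tri
  have hWi : W i d ≠ 0 := hYW ▸ hYi
  have hβY : ∀ b, pivotRatio d i Y b ≠ 0 → Tri c d b ∧ b ≠ i := fun b => pivotRatio_ne_zero hY
  have hβW : ∀ b, ¬ Tri c d b → pivotRatio d i W b = 0 := fun b hb => by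
    by_contra h0; exact hb (pivotRatio_ne_zero hW h0).1
  have hdi : d ≠ i := fun hh => by simp [hh] at t1
  have hlab : ∀ l : Fin n, (d : ℕ) < l → l ≠ i → bumpLabel c d i l = c l := fun l hl hli =>
    bumpLabel_of_ne c (fun hh => by simp [hh] at hl) hli
  have hlabi := bumpLabel_right c d i
  have hlabd := bumpLabel_left c d i
  set E' := g' * pivotConj d i Y - pivotConj d i W * g' with hE'
  have H2 : ∀ k e, Tri (bumpLabel c d i) k e → k ≠ d → E' e k =
      (if Tri (bumpLabel c d i) d e then W e d else 0) * g' d k := by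
    intro k e hke hkd
    rw [← bumpMat_left, ← H2' k e hke hkd, masked_commutator h hY hW hg' hke]
  have hgi : ∀ l, Tri c d l → l ≠ i → g' i l = 0 := by
    intro l hl hli
    by_contra h0
    have := hg'.2 i l hli.symm h0
    have := h.max l hl
    omega
  have hgU : ∀ k, Tri c d k → k ≠ i → g' k i = 0 := by
    intro k hk hki
    by_contra h0
    have h1 := (hg'.2 k i hki h0).2
    rw [hlabi, hlab k hk.1 hki] at h1
    have := hk.2.1
    omega
  have hsum0 : ∑ b, g' i b * pivotRatio d i Y b = 0 := by
    refine Finset.sum_eq_zero fun b _ => ?_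
    by_cases hb : pivotRatio d i Y b = 0
    · rw [hb, mul_zero]
    · rw [hgi b (hβY b hb).1 (hβY b hb).2, zero_mul]
  set g0 := colAdd i (pivotRatio d i W) * g' * colAdd i (-pivotRatio d i Y) with hg0
  have hne : ∀ e k, k ≠ i → g0 e k = g' e k + pivotRatio d i W e * g' i k := by
    intro e k hk
    rw [hg0, colAdd_mul_colAdd, if_neg hk, add_zero]
  have hcol : ∀ e, g0 e i = g' e i + pivotRatio d i W e - ∑ b, g' e b * pivotRatio d i Y b := by
    intro e
    rw [hg0, colAdd_mul_colAdd, if_pos rfl, hg'.1, mul_one]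
    simp only [add_mul, Finset.sum_add_distrib, Pi.neg_apply, mul_neg, mul_assoc,
      Finset.sum_neg_distrib, ← Finset.mul_sum, hsum0]
    ring
  have hpat : IsPatAbove c d g0 := by
    intro k hdk
    rcases eq_or_ne k i with rfl | hki
    · have hz := pivotRatio_self d k W
      refine ⟨by rw [hcol, hsum0, hz, hg'.1]; ring, fun l hl h0 => ?_⟩
      rw [hne _ _ hl.symm, hz, zero_mul, add_zero] at h0
      obtain ⟨h1, h2⟩ := hg'.2 _ _ hl h0
      rw [hlabi, hlab l (by omega) hl.symm] at h2
      refine ⟨h1, ?_⟩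
      by_contra h3
      have := h.max l ⟨by omega, by omega, by omega⟩
      omega
    by_cases hkU : Tri c d k
    · have hki' : (k : ℕ) < i := lt_of_le_of_ne (h.max k hkU) (Fin.val_ne_of_ne hki)
      refine ⟨by rw [hne _ _ hki, hg'.1, hgi k hkU hki]; simp, fun l hl h0 => ?_⟩
      rcases eq_or_ne l i with rfl | hli
      · refine ⟨hki', ?_⟩
        by_contra hcc
        apply h0
        have hck : c k ≠ c l := fun hh => hki (h.inj hh)
        have hkt : Tri (bumpLabel c d l) d k := (h.tri_iff d k).mpr
          ⟨hkU, fun hh => by omega, fun hh => hki hh.1⟩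
        have h1 := H1 k hkt
        rw [bumpMat_left, if_pos hkt] at h1
        rw [hcol, hgU k hkU hki, zero_add, pivotRatio_of_ne _ hki, h1, Finset.sum_div, sub_eq_zero]
        refine Finset.sum_congr rfl fun b _ => ?_
        rw [bumpMat_left]
        by_cases hgk : g' k b = 0
        · simp [hgk]
        have hbl : b ≠ l := fun hh => hgk (by rw [hh, hgU k hkU hki])
        rw [pivotRatio_of_ne _ hbl, ← hYW]
        split_ifs with hb
        · ring
        · by_cases hb0 : Y b d = 0
          · simp [hb0]
          exfalso
          have hbU := hY _ _ hb0
          have hcb : c b ≤ c l := by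
            by_contra hcc
            exact hb ((h.tri_iff d b).mpr ⟨hbU, fun hh => hcc hh.2, fun hh => hbl hh.1⟩)
          rcases eq_or_ne k b with rfl | hkb
          · exact hb hkt
          · have h2 := (hg'.2 k b hkb hgk).2
            rw [hlab k hdk hki, hlab b hbU.1 hbl] at h2
            omega
      rw [hne _ _ hli] at h0
      obtain ⟨k1, k2, k3⟩ := hkU
      by_cases h1 : g' k l = 0
      · rw [h1, zero_add] at h0
        obtain ⟨h1, h2⟩ := hg'.2 i l hli.symm (right_ne_zero_of_mul h0)
        rw [hlabi, hlab l (by omega) hli] at h2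
        refine ⟨by omega, ?_⟩
        by_contra h3
        have := h.max l ⟨by omega, by omega, by omega⟩
        omega
      · obtain ⟨h1, h2⟩ := hg'.2 k l hl h1
        rw [hlab k hdk hki, hlab l (by omega) hli] at h2
        omega
    · have hz := hβW k hkU
      refine ⟨by rw [hne _ _ hki, hg'.1, hz]; simp, fun l hl h0 => ?_⟩
      rcases eq_or_ne l i with rfl | hli
      · rw [hcol, hz, add_zero] at h0
        by_cases h1 : g' k l = 0
        · rw [h1, zero_sub, neg_ne_zero] at h0
          obtain ⟨b, -, hb⟩ := Finset.exists_ne_zero_of_sum_ne_zero h0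
          obtain ⟨hbU, hbl⟩ := hβY b (right_ne_zero_of_mul hb)
          have hkb : k ≠ b := fun hh => hkU (hh ▸ hbU)
          obtain ⟨h2, h3⟩ := hg'.2 k b hkb (left_ne_zero_of_mul hb)
          have h4 := h.max b hbU
          obtain ⟨b1, b2, b3⟩ := hbU
          rw [hlab k hdk hki, hlab b b1 hbl] at h3
          refine ⟨by omega, ?_⟩
          by_contra h5
          exact hkU ⟨hdk, by omega, by omega⟩
        · obtain ⟨h2, h3⟩ := hg'.2 k l hl h1
          rw [hlab k hdk hki, hlabi] at h3
          omega
      · rw [hne _ _ hli, hz, zero_mul, add_zero] at h0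
        obtain ⟨h1, h2⟩ := hg'.2 k l hl h0
        rw [hlab k hdk hki, hlab l (by omega) hli] at h2
        omega
  set E := colAdd i (pivotRatio d i W) * E' * colAdd i (-pivotRatio d i Y) with hE
  set g : Matrix (Fin n) (Fin n) K := fun k l =>
    if (d : ℕ) < k then g0 k l else if k = d ∧ l ≠ d then
      (if Tri c d l then g' d l + E i l / W i d else 0) else (1 : Matrix _ _ K) k l
    with hgdef
  have hgg0 : ∀ k l : Fin n, (d : ℕ) < k → g k l = g0 k l := fun k l hk => by
    simp only [hgdef, if_pos hk]
  have hgpat : IsPat c g := by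
    refine ⟨fun k => ?_, fun k l hkl h0 => ?_⟩
    · by_cases hk : (d : ℕ) < k
      · rw [hgg0 k k hk]; exact (hpat k hk).1
      · simp only [hgdef, if_neg hk]
        rw [if_neg (by tauto), Matrix.one_apply_eq]
    · by_cases hk : (d : ℕ) < k
      · rw [hgg0 k l hk] at h0; exact (hpat k hk).2 l hkl h0
      · simp only [hgdef, if_neg hk] at h0
        split_ifs at h0 with h1 h2
        · obtain ⟨rfl, h1⟩ := h1
          exact ⟨h2.1, h2.2.1⟩
        · exact absurd rfl h0
        · rw [Matrix.one_apply_ne hkl] at h0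
          exact absurd rfl h0
  refine ⟨g, hgpat, (intertwines_iff h.min hW hgpat).mpr ⟨fun e he => ?_, fun k e hke hkd => ?_⟩⟩
  · rw [Finset.sum_congr rfl fun l _ => by rw [hgg0 e l he.1], hg0,
      sum_mul_colAdd_neg_pivot _ _ hYi, colAdd_mul, hg'.1]
    rcases eq_or_ne e i with rfl | hei
    · rw [hg'.1, pivotRatio_self, hYW]; ring
    · rw [hgU e he hei, pivotRatio_of_ne _ hei, hYW]
      field_simp
      ring
  · have hdk : (d : ℕ) < k := lt_of_le_of_ne (h.min k e hke) (Fin.val_ne_of_ne hkd.symm)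
    have hde : (d : ℕ) < e := hdk.trans hke.1
    rw [mul_congr_above (fun e k h0 => (cutCol_ne_zero h hW h0).2) hgg0 hde, hg0,
      conj_commutator_symm, ← hE', ← hE]
    have hgd : g d k = if Tri c d k then g' d k + E i k / W i d else 0 := by
      simp [hgdef, hkd]
    rw [hgd]
    obtain ⟨s1, s2, s3⟩ := hke
    have hEe : E e k = E' e k + pivotRatio d i W e * E' i k + if k = i then
        ∑ b, (E' e b + pivotRatio d i W e * E' i b) * (-pivotRatio d i Y) b else 0 := by
      rw [hE, colAdd_mul_colAdd]
    have hEi : k ≠ i → E i k = E' i k := fun hki => by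
      rw [hE, colAdd_mul_colAdd, if_neg hki, pivotRatio_self]; ring
    have hid : ¬ Tri (bumpLabel c d i) d i := fun hh => by
      have := (h.tri_iff d i).mp hh; simp at this
    rcases eq_or_ne e i with rfl | hei
    · have hki : k ≠ e := fun hh => by simp [hh] at s1
      split_ifs with hkU
      · have : g' d k = 0 := by
          by_contra h0
          have h1 := (hg'.2 d k hkd.symm h0).2
          rw [hlabd, hlab k hdk hki] at h1
          omega
        rw [this]
        field_simp
        simp
      · have h1 : Tri (bumpLabel c d e) k e := (h.tri_iff k e).mpr
          ⟨⟨s1, s2, s3⟩, fun hh => hkd hh.1, fun hh => hkU hh.2⟩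
        rw [hEi hki, H2 k e h1 hkd, if_neg hid]
        ring
    have hke' : Tri (bumpLabel c d i) k e := (h.tri_iff k e).mpr
      ⟨⟨s1, s2, s3⟩, fun hh => hkd hh.1, fun hh => hei hh.1⟩
    have h2 := H2 k e hke' hkd
    by_cases heU : Tri c d e
    · have hei' : (e : ℕ) < i := lt_of_le_of_ne (h.max e heU) (Fin.val_ne_of_ne hei)
      have hki : k ≠ i := fun hh => by subst hh; omega
      obtain ⟨e1, e2, e3⟩ := heU
      rw [hEe, if_neg hki, h2, hEi hki, pivotRatio_of_ne _ hei]
      by_cases h0 : g' d k = 0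
      · split_ifs with hh1 hkU hkU
        · rw [h0]; ring
        · have : Tri (bumpLabel c d i) k i := (h.tri_iff k i).mpr ⟨⟨by omega, by
            by_contra hcc; exact hkU ⟨hdk, by omega, by omega⟩, by omega⟩, fun hh => hkd hh.1,
            fun hh => hkU hh.2⟩
          rw [H2 k i this hkd, if_neg hid, h0]; ring
        · rw [h0]; ring
        · have : Tri (bumpLabel c d i) k i := (h.tri_iff k i).mpr ⟨⟨by omega, by
            by_contra hcc; exact hkU ⟨hdk, by omega, by omega⟩, by omega⟩, fun hh => hkd hh.1,
            fun hh => hkU hh.2⟩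
          rw [H2 k i this hkd, if_neg hid, h0]; ring
      · have h1 := (hg'.2 d k hkd.symm h0).2
        rw [hlabd, hlab k hdk hki] at h1
        have hde' : Tri (bumpLabel c d i) d e := (h.tri_iff d e).mpr
          ⟨⟨e1, e2, e3⟩, fun hh => by omega, fun hh => hei hh.1⟩
        rw [if_pos hde', if_pos ⟨hdk, by omega, by omega⟩]
        ring
    · have hW0 : W e d = 0 := by
        by_contra h0; exact heU (hW _ _ h0)
      rw [hEe, h2, hW0, hβW e heU]
      simp only [ite_self, zero_mul, add_zero, zero_add]
      split_ifs with hki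
      · subst hki
        refine Finset.sum_eq_zero fun b _ => ?_
        by_cases hb0 : pivotRatio d k Y b = 0
        · rw [Pi.neg_apply, hb0, neg_zero, mul_zero]
        obtain ⟨hbU, hbi⟩ := hβY b hb0
        have hbk := h.max b hbU
        have : E' e b = 0 := by
          by_cases hb : (b : ℕ) < c e
          · rw [← hlab e hde hei] at hb
            rw [hE', Matrix.sub_apply, (mul_eq_zero_of_lt (A := pivotConj d k Y)
              (fun _ _ => pivotConj_ne_zero h hY)
                (hg'.above d) hde hb).1,
              (mul_eq_zero_of_lt (A := pivotConj d k W)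
                (fun _ _ => pivotConj_ne_zero h hW) (hg'.above d) hde hb).2,
              sub_zero]
          · obtain ⟨b1, b2, b3⟩ := hbU
            have hced : (d : ℕ) < c e := by
              by_contra hcc; exact heU ⟨hde, by omega, by omega⟩
            have hbd : b ≠ d := fun hh => by subst hh; omega
            rw [H2 b e ((h.tri_iff b e).mpr ⟨⟨by omega, by omega, by omega⟩, fun hh => hbd hh.1,
              fun hh => hei hh.1⟩) hbd, hW0]
            simp
        rw [this, zero_mul]
      · rfl

end BumpEquiv

section BumpStep

open Matrix MvPolynomial

variable {K : Type} [Field K] {n : ℕ}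

/-- The matrix whose bump is `P`, with prescribed column `d` and row `i`. -/
noncomputable def unbumpMat (c : Fin n → ℕ) (d i : Fin n) (P : Matrix (Fin n) (Fin n) K)
    (v r : Fin n → K) : Matrix (Fin n) (Fin n) K :=
  fun e k => if Tri c k e then
    (if k = d then v e else if e = i then r k else if Tri c d e then P e k + v e / v i * r k
      else if k = i then P e i - ∑ b, P e b * (if Tri c d b ∧ b ≠ i then v b / v i else 0)
      else P e k) else 0

theorem pivotRatio_eq_ite {c : Fin n → ℕ} {d i : Fin n} {Y : Matrix (Fin n) (Fin n) K}
    (hY : SuppTri c Y) (b : Fin n) :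
    pivotRatio d i Y b = if Tri c d b ∧ b ≠ i then Y b d / Y i d else 0 := by
  split_ifs with h
  · exact pivotRatio_of_ne _ h.2
  · by_contra h0
    exact h (pivotRatio_ne_zero hY h0)

theorem suppTri_unbumpMat (c : Fin n → ℕ) (d i : Fin n) (P : Matrix (Fin n) (Fin n) K)
    (v r : Fin n → K) : SuppTri c (unbumpMat c d i P v r) := by
  intro e k h
  by_contra hc
  simp [unbumpMat, hc] at h

theorem bumpMat_unbumpMat {c : Fin n → ℕ} {d i : Fin n} (h : IsBump c d i)
    {P : Matrix (Fin n) (Fin n) K} {v r : Fin n → K} (hP : SuppTri (bumpLabel c d i) P)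
    (hr : ∀ k, Tri (bumpLabel c d i) k i → r k = P i k) (hr' : ∀ k, ¬ Tri c k i → r k = 0)
    (hv : ∀ e, Tri (bumpLabel c d i) d e → v e = P e d) :
    bumpMat c d i (unbumpMat c d i P v r) = P := by
  have hZ := suppTri_unbumpMat c d i P v r
  have hZd : ∀ e, Tri c d e → unbumpMat c d i P v r e d = v e := fun e he => by
    simp [unbumpMat, he]
  have hβ : ∀ b, pivotRatio d i (unbumpMat c d i P v r) b =
      if Tri c d b ∧ b ≠ i then v b / v i else 0 := fun b => by
    rw [pivotRatio_eq_ite hZ]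
    split_ifs with hb
    · rw [hZd b hb.1, hZd i h.tri]
    · rfl
  ext e k
  by_cases hke : Tri (bumpLabel c d i) k e
  swap
  · rw [bumpMat, if_neg hke]
    by_contra h0
    exact hke (hP _ _ (Ne.symm h0))
  obtain ⟨hke1, hke2, hke3⟩ := (h.tri_iff k e).mp hke
  rw [bumpMat, if_pos hke]
  by_cases hkd : k = d
  · subst hkd
    rw [if_pos rfl, hZd e hke1, hv e hke]
  rw [if_neg hkd, pivotConj_apply]
  simp only [hβ]
  have hcut : ∀ e k, k ≠ d → cutCol d (unbumpMat c d i P v r) e k = unbumpMat c d i P v r e k :=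
    fun e k hk => by simp [cutCol, hk]
  rcases eq_or_ne e i with rfl | hei
  · have hki : k ≠ e := fun hh => by have := hke1.1; simp [hh] at this
    rw [if_neg (by tauto), if_neg hki, hcut _ _ hkd, unbumpMat, if_pos hke1, if_neg hkd,
      if_pos rfl, hr k hke]
    ring
  by_cases heU : Tri c d e
  · have hki : k ≠ i := fun hh => by
      subst hh
      have := hke1.1
      have := h.max e heU
      omega
    rw [if_pos ⟨heU, hei⟩, if_neg hki, hcut _ _ hkd, hcut _ _ hkd, unbumpMat, unbumpMat,
      if_pos hke1, if_neg hkd, if_neg hei, if_pos heU, if_neg hkd, if_pos rfl]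
    by_cases hki' : Tri c k i
    · rw [if_pos hki']; ring
    · rw [if_neg hki', hr' k hki']; ring
  · rw [if_neg (by tauto), hcut _ _ hkd, unbumpMat, if_pos hke1, if_neg hkd, if_neg hei,
      if_neg heU]
    split_ifs with hki
    · subst hki
      simp only [zero_mul, sub_zero]
      rw [sub_add_eq_add_sub, add_sub_assoc, add_eq_left, sub_eq_zero]
      refine Finset.sum_congr rfl fun b _ => ?_
      split_ifs with hb
      · have hbd : b ≠ d := fun hh => by have := hb.1.1; simp [hh] at this
        rw [hcut _ _ hbd]
        simp only [unbumpMat, if_neg hbd, if_neg hei, if_neg heU, if_neg hb.2]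
        split_ifs with hbe
        · rfl
        · by_cases h0 : P e b = 0
          · rw [h0]
          · exact absurd (h.tri_of (hP _ _ h0)) hbe
      · simp
    · ring

theorem unbumpMat_bumpMat {c : Fin n → ℕ} {d i : Fin n} (h : IsBump c d i)
    {Y : Matrix (Fin n) (Fin n) K} (hY : SuppTri c Y) {v r : Fin n → K}
    (hv : ∀ e, Tri c d e → v e = Y e d) (hr : ∀ k, Tri c k i → k ≠ d → r k = Y i k)
    (hr' : ∀ k, ¬ Tri c k i → r k = 0) :
    unbumpMat c d i (bumpMat c d i Y) v r = Y := by
  ext e k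
  by_cases hke : Tri c k e
  swap
  · rw [unbumpMat, if_neg hke]
    by_contra h0
    exact hke (hY _ _ (Ne.symm h0))
  rw [unbumpMat, if_pos hke]
  by_cases hkd : k = d
  · subst hkd
    rw [if_pos rfl, hv e hke]
  rw [if_neg hkd]
  rcases eq_or_ne e i with rfl | hei
  · rw [if_pos rfl, hr k hke hkd]
  have hcut : ∀ e k, k ≠ d → cutCol d Y e k = Y e k := fun e k hk => by simp [cutCol, hk]
  have hke' : Tri (bumpLabel c d i) k e := (h.tri_iff k e).mpr
    ⟨hke, fun hh => hkd hh.1, fun hh => hei hh.1⟩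
  rw [if_neg hei]
  by_cases heU : Tri c d e
  · have hki : k ≠ i := fun hh => by
      subst hh
      have := hke.1
      have := h.max e heU
      omega
    rw [if_pos heU, bumpMat, if_pos hke', if_neg hkd, pivotConj_apply, if_neg hki, hcut _ _ hkd,
      hcut _ _ hkd, pivotRatio_of_ne _ hei, hv e heU, hv i h.tri]
    by_cases hki' : Tri c k i
    · rw [hr k hki' hkd]; ring
    · have h1 : Y i k = 0 := by
        by_contra h0; exact hki' (hY _ _ h0)
      rw [h1, hr' k hki']; ring
  · have hz : pivotRatio d i Y e = 0 := by
      rw [pivotRatio_eq_ite hY, if_neg (by tauto)]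
    rw [if_neg heU]
    split_ifs with hki
    · subst hki
      rw [bumpMat, if_pos hke', if_neg hkd, pivotConj_apply, if_pos rfl, hz, hcut _ _ hkd]
      simp only [zero_mul, sub_zero]
      rw [add_sub_assoc, add_eq_left, sub_eq_zero]
      refine Finset.sum_congr rfl fun b _ => ?_
      rw [pivotRatio_eq_ite hY]
      split_ifs with hb
      · have hbd : b ≠ d := fun hh => by have := hb.1.1; simp [hh] at this
        rw [hcut _ _ hbd, hv b hb.1, hv k h.tri]
        by_cases h0 : Tri c b e
        · have hb' : Tri (bumpLabel c d k) b e := (h.tri_iff b e).mpr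
            ⟨h0, fun hh => hbd hh.1, fun hh => hei hh.1⟩
          rw [bumpMat, if_pos hb', if_neg hbd, pivotConj_apply, if_neg hb.2, hz, hcut _ _ hbd]
          ring
        · have h1 : Y e b = 0 := by
            by_contra h1; exact h0 (hY _ _ h1)
          have h2 : bumpMat c d k Y e b = 0 := by
            by_contra h2; exact h0 (h.tri_of (suppTri_bumpMat _ _ _ _ _ _ h2))
          rw [h1, h2]
      · simp
    · rw [bumpMat, if_pos hke', if_neg hkd, pivotConj_apply, if_neg hki, hz, hcut _ _ hkd]
      ring

/-- The matrix of coordinates of a point at the places of `Tri c`. -/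
noncomputable def maskMat (c : Fin n → ℕ) (y : Fin n × Fin n → K) : Matrix (Fin n) (Fin n) K :=
  fun e k => if Tri c k e then y (e, k) else 0

theorem suppTri_maskMat (c : Fin n → ℕ) (y : Fin n × Fin n → K) : SuppTri c (maskMat c y) := by
  intro e k h
  by_contra hc
  simp [maskMat, hc] at h

/-- The free coordinates attached to the labelling `c`. -/
def freePlaces (c : Fin n → ℕ) : Set (Fin n × Fin n) := {t | Tri c t.2 t.1 ∧ c t.1 ≠ (t.2 : ℕ)}

/-- The relation on points attached to the labelling `c` and the set `Col` of invariant
coordinates. -/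
def BumpRel (c : Fin n → ℕ) (Col : Set (Fin n × Fin n)) (y w : Fin n × Fin n → K) : Prop :=
  (∀ t ∈ Col, y t = w t) ∧ ∃ g, IsPat c g ∧ Intertwines c (maskMat c y) (maskMat c w) g

theorem BumpRel.refl (c : Fin n → ℕ) (Col : Set (Fin n × Fin n)) (y : Fin n × Fin n → K) :
    BumpRel c Col y y := by
  refine ⟨fun _ _ => rfl, 1, ⟨fun k => by simp, fun k l hkl h0 => ?_⟩, fun k e _ => by simp⟩
  exact absurd (Matrix.one_apply_ne hkl) h0

/-- The invariant coordinates after a bump. -/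
noncomputable def bumpCol (c : Fin n → ℕ) (d i : Fin n) (Col : Set (Fin n × Fin n)) :
    Set (Fin n × Fin n) := if c i = d then Col else insert (i, d) Col

/-- The coordinates of a point after a bump. -/
noncomputable def bumpPt (c : Fin n → ℕ) (d i : Fin n) (Col : Set (Fin n × Fin n))
    (y₀ y : Fin n × Fin n → K) : Fin n × Fin n → K :=
  fun t => if Tri (bumpLabel c d i) t.2 t.1 then bumpMat c d i (maskMat c y) t.1 t.2
    else if t = (i, d) ∨ t ∈ Col then y t else y₀ t

theorem maskMat_bumpPt (c : Fin n → ℕ) (d i : Fin n) (Col : Set (Fin n × Fin n))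
    (y₀ y : Fin n × Fin n → K) :
    maskMat (bumpLabel c d i) (bumpPt c d i Col y₀ y) = bumpMat c d i (maskMat c y) := by
  ext e k
  by_cases h : Tri (bumpLabel c d i) k e
  · simp [maskMat, bumpPt, h]
  · simp [maskMat, bumpMat, h]

/-- The prescribed column of the section of a bump. -/
noncomputable def sectCol (c : Fin n → ℕ) (d i : Fin n) (x p : Fin n × Fin n → K) : Fin n → K :=
  fun e => if Tri (bumpLabel c d i) d e ∨ e = i then p (e, d) else x (e, d)

/-- The prescribed row of the section of a bump. -/
noncomputable def sectRow (c : Fin n → ℕ) (d i : Fin n) (x p : Fin n × Fin n → K) : Fin n → K :=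
  fun k => if Tri (bumpLabel c d i) k i then p (i, k) else if Tri c k i then x (i, k) else 0

/-- The section of a bump through `x`. -/
noncomputable def bumpSect (c : Fin n → ℕ) (d i : Fin n) (Col : Set (Fin n × Fin n))
    (y₀ x p : Fin n × Fin n → K) : Fin n × Fin n → K :=
  fun t => if Tri c t.2 t.1 then unbumpMat c d i (maskMat (bumpLabel c d i) p)
      (sectCol c d i x p) (sectRow c d i x p) t.1 t.2
    else if t ∈ Col then p t else y₀ t

theorem maskMat_bumpSect (c : Fin n → ℕ) (d i : Fin n) (Col : Set (Fin n × Fin n))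
    (y₀ x p : Fin n × Fin n → K) :
    maskMat c (bumpSect c d i Col y₀ x p) = unbumpMat c d i (maskMat (bumpLabel c d i) p)
      (sectCol c d i x p) (sectRow c d i x p) := by
  ext e k
  by_cases h : Tri c k e
  · simp [maskMat, bumpSect, h]
  · simp [maskMat, unbumpMat, h]

theorem regOn_maskMat {c : Fin n → ℕ} {U : Set (Fin n × Fin n → K)} (e k : Fin n) :
    RegOn U (fun y => maskMat c y e k) :=
  RegOn.ite _ (fun _ => RegOn.coord _) fun _ => RegOn.const 0

theorem regOn_bumpPt {c : Fin n → ℕ} {d i : Fin n} (h : Tri c d i) {Col : Set (Fin n × Fin n)}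
    {y₀ : Fin n × Fin n → K} {U : Set (Fin n × Fin n → K)} (hU : ∀ y ∈ U, y (i, d) ≠ 0)
    (t : Fin n × Fin n) : RegOn U (fun y => bumpPt c d i Col y₀ y t) := by
  have hβ : ∀ e, RegOn U (fun y => pivotRatio d i (maskMat c y) e) := fun e =>
    RegOn.ite _ (fun _ => RegOn.const 0) fun _ => (regOn_maskMat e d).div (regOn_maskMat i d)
      fun y hy => by simpa [maskMat, h] using hU y hy
  have hcut : ∀ e k, RegOn U (fun y => cutCol d (maskMat c y) e k) := fun e k =>
    RegOn.ite _ (fun _ => RegOn.const 0) fun _ => regOn_maskMat e k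
  have hrow : ∀ e k, RegOn U (fun y => cutCol d (maskMat c y) e k -
      pivotRatio d i (maskMat c y) e * cutCol d (maskMat c y) i k) := fun e k =>
    (hcut e k).sub ((hβ e).mul (hcut i k))
  refine RegOn.ite _ (fun ht => ?_) fun _ => RegOn.ite _ (fun _ => RegOn.coord _)
    fun _ => RegOn.const _
  refine RegOn.ite _ (fun _ => ?_) fun _ => RegOn.const 0
  refine RegOn.ite _ (fun _ => regOn_maskMat _ _) fun _ => ?_
  refine RegOn.congr (r := fun y => _) ((hrow t.1 t.2).add (RegOn.ite (t.2 = i)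
    (fun _ => RegOn.sum Finset.univ fun b _ => (hrow t.1 b).mul (hβ b))
    fun _ => RegOn.const 0)) fun y _ => ?_
  rw [pivotConj_apply]

theorem regOn_bumpSect {c : Fin n → ℕ} {d i : Fin n} {Col : Set (Fin n × Fin n)}
    {y₀ x : Fin n × Fin n → K} {U : Set (Fin n × Fin n → K)} (hU : ∀ y ∈ U, y (i, d) ≠ 0)
    (t : Fin n × Fin n) : RegOn U (fun p => bumpSect c d i Col y₀ x p t) := by
  have hv : ∀ e, RegOn U (fun p => sectCol c d i x p e) := fun e =>
    RegOn.ite _ (fun _ => RegOn.coord _) fun _ => RegOn.const _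
  have hr : ∀ e, RegOn U (fun p => sectRow c d i x p e) := fun e =>
    RegOn.ite _ (fun _ => RegOn.coord _) fun _ => RegOn.ite _ (fun _ => RegOn.const _)
      fun _ => RegOn.const 0
  have hvv : ∀ e, RegOn U (fun p => sectCol c d i x p e / sectCol c d i x p i) := fun e =>
    (hv e).div (hv i) fun p hp => by simpa [sectCol] using hU p hp
  refine RegOn.ite _ (fun _ => ?_) fun _ => RegOn.ite _ (fun _ => RegOn.coord _)
    fun _ => RegOn.const _
  refine RegOn.ite _ (fun _ => ?_) fun _ => RegOn.const 0
  refine RegOn.ite _ (fun _ => hv _) fun _ => RegOn.ite _ (fun _ => hr _) fun _ =>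
    RegOn.ite _ (fun _ => (regOn_maskMat _ _).add ((hvv _).mul (hr _))) fun _ =>
    RegOn.ite _ (fun _ => (regOn_maskMat _ _).sub (RegOn.sum _ fun b _ =>
      (regOn_maskMat _ _).mul (RegOn.ite _ (fun _ => hvv b) fun _ => RegOn.const 0)))
    fun _ => regOn_maskMat _ _

/-- At the fixed places the labelling is not changed by a bump. -/
theorem IsBump.tri_of_fixed {c : Fin n → ℕ} {d i : Fin n} (h : IsBump c d i) {k e : Fin n}
    (hke : Tri (bumpLabel c d i) k e) (hf : bumpLabel c d i e = k) : e ≠ i ∧ c e = k := by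
  have hke1 := h.tri_of hke
  have hm := h.min _ _ hke1
  obtain ⟨t1, t2, t3⟩ := h.tri
  have hei : e ≠ i := by
    rintro rfl
    rw [bumpLabel_right] at hf
    omega
  have hed : e ≠ d := by
    rintro rfl
    have := hke1.1
    omega
  rw [bumpLabel_of_ne c hed hei] at hf
  exact ⟨hei, hf⟩

theorem bumpMat_of_fixed {c : Fin n → ℕ} {d i : Fin n} (h : IsBump c d i)
    {Y : Matrix (Fin n) (Fin n) K} (hY : SuppTri c Y) {k e : Fin n}
    (hke : Tri (bumpLabel c d i) k e) (hf : bumpLabel c d i e = k) :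
    bumpMat c d i Y e k = Y e k := by
  obtain ⟨hei, hce⟩ := h.tri_of_fixed hke hf
  have hke1 := h.tri_of hke
  have hm := h.min _ _ hke1
  rw [bumpMat, if_pos hke]
  split_ifs with hkd
  · rw [hkd]
  have hkd' := Fin.val_ne_of_ne hkd
  have hz : pivotRatio d i Y e = 0 := by
    rw [pivotRatio_eq_ite hY, if_neg]
    rintro ⟨⟨-, -, h3⟩, -⟩
    omega
  rw [pivotConj_apply, hz]
  simp only [zero_mul, sub_zero]
  rw [cutCol, if_neg hkd]
  split_ifs with hki
  · rw [add_eq_left]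
    refine Finset.sum_eq_zero fun b _ => ?_
    by_cases hb : pivotRatio d i Y b = 0
    · rw [hb, mul_zero]
    by_cases hb' : cutCol d Y e b = 0
    · rw [hb', zero_mul]
    have h1 := (cutCol_ne_zero h hY hb').1.2.2
    obtain ⟨h2, h3⟩ := pivotRatio_ne_zero hY hb
    have h4 := h.max b h2
    have h5 := Fin.val_ne_of_ne h3
    subst hki
    omega
  · rw [add_zero]

theorem unbumpMat_of_fixed {c : Fin n → ℕ} {d i : Fin n} (h : IsBump c d i)
    {P : Matrix (Fin n) (Fin n) K} (hP : SuppTri (bumpLabel c d i) P) (v r : Fin n → K)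
    {k e : Fin n} (hke : Tri c k e) (hf : c e = k) (hkd : k ≠ d) :
    unbumpMat c d i P v r e k = P e k := by
  have hm := h.min _ _ hke
  have hkd' := Fin.val_ne_of_ne hkd
  obtain ⟨t1, t2, t3⟩ := h.tri
  have hei : e ≠ i := by
    rintro rfl
    omega
  have heU : ¬ Tri c d e := fun hh => by
    have := hh.2.2
    omega
  rw [unbumpMat, if_pos hke, if_neg hkd, if_neg hei, if_neg heU]
  split_ifs with hki
  · subst hki
    rw [sub_eq_self]
    refine Finset.sum_eq_zero fun b _ => ?_
    by_cases hb : P e b = 0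
    · rw [hb, zero_mul]
    have h1 := (h.tri_of (hP _ _ hb)).2.2
    rw [if_neg, mul_zero]
    rintro ⟨h2, h3⟩
    have h4 := h.max b h2
    have h5 := Fin.val_ne_of_ne h3
    omega
  · rfl

theorem reduces_bump [Infinite K] {c : Fin n → ℕ} {d i : Fin n} (h : IsBump c d i)
    {Col : Set (Fin n × Fin n)} {y₀ : Fin n × Fin n → K}
    (hCol : ∀ t ∈ Col, ¬ Tri c t.2 t.1) (hy₀ : ∀ k e, Tri c k e → c e = k → y₀ (e, k) ≠ 0) :
    Reduces (affineIrr (freePlaces c ∪ Col) y₀) (BumpRel c Col)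
      (affineIrr (freePlaces (bumpLabel c d i) ∪ bumpCol c d i Col) y₀)
      (BumpRel (bumpLabel c d i) (bumpCol c d i Col)) := by
  have hid : ¬ Tri (bumpLabel c d i) d i := fun hh => by
    have := (h.tri_iff d i).mp hh; simp at this
  have hidCol : (i, d) ∉ Col := fun hh => hCol _ hh h.tri
  have hCol' : ∀ t ∈ bumpCol c d i Col, t = (i, d) ∨ t ∈ Col := by
    intro t ht
    rw [bumpCol] at ht
    split_ifs at ht
    · exact Or.inr ht
    · simpa using ht
  have hCol'' : ∀ t ∈ Col, t ∈ bumpCol c d i Col := by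
    intro t ht
    rw [bumpCol]
    split_ifs
    · exact ht
    · exact Set.mem_insert_of_mem _ ht
  have hmask : ∀ y : Fin n × Fin n → K, maskMat c y i d = y (i, d) := fun y => by
    simp [maskMat, h.tri]
  have hptid : ∀ y, bumpPt c d i Col y₀ y (i, d) = y (i, d) := fun y => by
    simp [bumpPt, hid]
  have hptCol : ∀ y, ∀ t ∈ Col, bumpPt c d i Col y₀ y t = y t := fun y t ht => by
    rw [bumpPt, if_neg (fun hh => hCol t ht (h.tri_of hh)), if_pos (Or.inr ht)]
  have hqx : ∃ x ∈ (affineIrr (freePlaces c ∪ Col) y₀).carrier,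
      eval x (X (i, d) : MvPolynomial (Fin n × Fin n) K) ≠ 0 := by
    refine ⟨fun t => if t ∈ freePlaces c then 1 else y₀ t, fun t ht => ?_, ?_⟩
    · exact if_neg fun hh => ht (Or.inl hh)
    · rw [eval_X]
      split_ifs with hh
      · exact one_ne_zero
      · exact hy₀ d i h.tri (by by_contra hcc; exact hh ⟨h.tri, hcc⟩)
  have hsect : ∀ x ∈ (affineIrr (freePlaces c ∪ Col) y₀).carrier, ∀ p ∈ (affineIrr
      (freePlaces (bumpLabel c d i) ∪ bumpCol c d i Col) y₀).carrier,
      p (i, d) ≠ 0 → bumpSect c d i Col y₀ x p ∈ (affineIrr (freePlaces c ∪ Col) y₀).carrier ∧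
        bumpSect c d i Col y₀ x p (i, d) ≠ 0 ∧
          bumpPt c d i Col y₀ (bumpSect c d i Col y₀ x p) = p := by
    intro x hx p hp hpid
    have hsid : bumpSect c d i Col y₀ x p (i, d) = p (i, d) := by
      simp [bumpSect, h.tri, unbumpMat, sectCol]
    refine ⟨?_, hsid ▸ hpid, ?_⟩
    · rintro ⟨e, k⟩ ht
      by_cases hke : Tri c k e
      swap
      · simp only [bumpSect, if_neg hke]
        rw [if_neg fun hh => ht (Or.inr hh)]
      have hce : c e = k := by by_contra hcc; exact ht (Or.inl ⟨hke, hcc⟩)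
      simp only [bumpSect, if_pos hke]
      have hpfix : Tri (bumpLabel c d i) k e → p (e, k) = y₀ (e, k) := by
        intro hke'
        have hei : e ≠ i := by
          rintro rfl
          have hkd : k = d := by
            have := h.tri.2.2
            have := h.min _ _ hke
            exact Fin.ext (by omega)
          exact hid (hkd ▸ hke')
        have hed : e ≠ d := by
          rintro rfl
          have := h.min _ _ hke
          have := hke.1
          omega
        refine hp _ ?_
        rintro (hh | hh)
        · apply hh.2
          simp only [bumpLabel_of_ne c hed hei, hce]
        · rcases hCol' _ hh with h1 | h1
          · exact hei (congrArg Prod.fst h1)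
          · exact hCol _ h1 hke
      by_cases hkd : k = d
      · subst hkd
        rw [unbumpMat, if_pos hke, if_pos rfl, sectCol]
        split_ifs with h1
        · rcases h1 with h1 | rfl
          · exact hpfix h1
          · refine hp _ ?_
            rintro (hh | hh)
            · exact hid hh.1
            · rw [bumpCol, if_pos hce] at hh
              exact hidCol hh
        · exact hx _ ht
      · rw [unbumpMat_of_fixed h (suppTri_maskMat _ _) _ _ hke hce hkd, maskMat]
        have hke' : Tri (bumpLabel c d i) k e := (h.tri_iff k e).mpr
          ⟨hke, fun hh => hkd hh.1, fun hh => by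
            have h1 := h.tri.2.2
            have h2 := h.min _ _ hke
            have h3 := Fin.val_ne_of_ne hkd
            rw [hh.1] at hce
            omega⟩
        rw [if_pos hke', hpfix hke']
    · funext t
      obtain ⟨e, k⟩ := t
      by_cases hke : Tri (bumpLabel c d i) k e
      · simp only [bumpPt, if_pos hke]
        rw [maskMat_bumpSect, bumpMat_unbumpMat h (suppTri_maskMat _ _), maskMat, if_pos hke]
        · intro k hk
          simp [sectRow, maskMat, hk]
        · intro k hk
          have : ¬ Tri (bumpLabel c d i) k i := fun hh => hk (h.tri_of hh)
          simp [sectRow, hk, this]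
        · intro e he
          simp [sectCol, maskMat, he]
      · simp only [bumpPt, if_neg hke]
        split_ifs with ht
        · rcases ht with ht | ht
          · rw [ht, hsid]
          · rw [bumpSect, if_neg (hCol _ ht), if_pos ht]
        · refine (hp _ ?_).symm
          rintro (hh | hh)
          · exact hke hh.1
          · exact ht (hCol' _ hh)
  refine Reduces.of_sections (X (i, d)) (X (i, d)) hqx (bumpPt c d i Col y₀)
    (regOn_bumpPt h.tri fun y hy => by simpa using hy.2) ?_ ?_ (bumpSect c d i Col y₀) ?_ ?_
  · intro y hy hyid
    refine ⟨?_, by simpa [hptid] using hyid⟩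
    rintro ⟨e, k⟩ ht
    by_cases hke : Tri (bumpLabel c d i) k e
    · have hf : bumpLabel c d i e = k := by by_contra hcc; exact ht (Or.inl ⟨hke, hcc⟩)
      simp only [bumpPt, if_pos hke]
      rw [bumpMat_of_fixed h (suppTri_maskMat _ _) hke hf, maskMat, if_pos (h.tri_of hke)]
      refine hy _ ?_
      rintro (hh | hh)
      · exact hh.2 (h.tri_of_fixed hke hf).2
      · exact hCol _ hh (h.tri_of hke)
    · simp only [bumpPt, if_neg hke]
      split_ifs with h1
      · refine hy _ ?_
        rintro (hh | hh)
        · rcases h1 with h1 | h1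
          · obtain ⟨rfl, rfl⟩ := Prod.mk.inj h1
            refine ht (Or.inr ?_)
            rw [bumpCol, if_neg hh.2]
            exact Set.mem_insert _ _
          · exact hCol _ h1 hh.1
        · exact ht (Or.inr (hCol'' _ hh))
      · rfl
  · intro y hy hyid w hw hwid
    rw [eval_X] at hyid hwid
    have key : (∃ g, IsPat c g ∧ Intertwines c (maskMat c y) (maskMat c w) g) ↔
        y (i, d) = w (i, d) ∧ ∃ g', IsPat (bumpLabel c d i) g' ∧ Intertwines (bumpLabel c d i)
          (bumpMat c d i (maskMat c y)) (bumpMat c d i (maskMat c w)) g' := by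
      constructor
      · rintro ⟨g, hg, hI⟩
        have := intertwines_bump h (suppTri_maskMat c y) (suppTri_maskMat c w)
          (by rwa [hmask]) (by rwa [hmask]) hg hI
        rwa [hmask, hmask] at this
      · rintro ⟨h1, g', hg', hI⟩
        exact intertwines_of_bump h (suppTri_maskMat c y) (suppTri_maskMat c w)
          (by rwa [hmask]) (by rwa [hmask, hmask]) hg' hI
    rw [BumpRel, BumpRel, maskMat_bumpPt, maskMat_bumpPt, key]
    constructor
    · rintro ⟨h1, h2, h3⟩
      refine ⟨fun t ht => ?_, h3⟩
      rcases hCol' t ht with rfl | ht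
      · rw [hptid, hptid, h2]
      · rw [hptCol _ _ ht, hptCol _ _ ht, h1 t ht]
    · rintro ⟨h1, h3⟩
      refine ⟨fun t ht => ?_, ?_, h3⟩
      · have := h1 t (hCol'' t ht)
        rwa [hptCol _ _ ht, hptCol _ _ ht] at this
      · by_cases hci : c i = d
        · have hnot : (i, d) ∉ freePlaces c ∪ Col := by
            rintro (hh | hh)
            · exact hh.2 hci
            · exact hidCol hh
          rw [hy _ hnot, hw _ hnot]
        · have := h1 (i, d) (by rw [bumpCol, if_neg hci]; exact Set.mem_insert _ _)
          rwa [hptid, hptid] at this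
  · intro x hx hxid
    refine ⟨regOn_bumpSect fun y hy => by simpa using hy.2, fun p hp hpid => ?_, ?_⟩
    · rw [eval_X] at hpid
      obtain ⟨h1, h2, h3⟩ := hsect x hx p hp hpid
      exact ⟨h1, by rwa [eval_X], by rw [h3]; exact BumpRel.refl _ _ _⟩
    · funext t
      obtain ⟨e, k⟩ := t
      by_cases hke : Tri c k e
      · simp only [bumpSect, if_pos hke]
        rw [maskMat_bumpPt, unbumpMat_bumpMat h (suppTri_maskMat c x), maskMat, if_pos hke]
        · intro e he
          rw [sectCol, maskMat, if_pos he]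
          split_ifs with h1
          · rcases h1 with h1 | rfl
            · simp [bumpPt, h1, bumpMat_left, maskMat, he]
            · exact hptid x
          · rfl
        · intro k hk hkd
          rw [sectRow, maskMat, if_pos hk]
          split_ifs with h1
          · have hki : k ≠ i := fun hh => by have := hk.1; simp [hh] at this
            simp [bumpPt, h1, bumpMat, hkd, pivotConj_apply, hki, pivotRatio_self, cutCol, maskMat,
              hk]
          · rfl
        · intro k hk
          have : ¬ Tri (bumpLabel c d i) k i := fun hh => hk (h.tri_of hh)
          simp [sectRow, hk, this]
      · simp only [bumpSect, if_neg hke]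
        split_ifs with h1
        · exact hptCol x _ h1
        · refine (hx _ ?_).symm
          rintro (hh | hh)
          · exact hke hh.1
          · exact h1 hh
  · intro p hp hpid
    obtain ⟨x, hx, hxid⟩ := hqx
    rw [eval_X] at hpid
    obtain ⟨h1, h2, h3⟩ := hsect x hx p hp hpid
    exact ⟨_, h1, by rwa [eval_X], h3⟩

/-- A sequence of bumps exhausting all coordinates. -/
inductive BumpChain : (Fin n → ℕ) → List (Fin n × Fin n) → Prop
  | nil {c : Fin n → ℕ} (h : ∀ k e, ¬ Tri c k e) : BumpChain c []
  | cons {c : Fin n → ℕ} {d i : Fin n} {l : List (Fin n × Fin n)} (h : IsBump c d i)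
      (hl : BumpChain (bumpLabel c d i) l) : BumpChain c ((i, d) :: l)

theorem reduces_chain [Infinite K] {c : Fin n → ℕ} {l : List (Fin n × Fin n)}
    (h : BumpChain c l) {F : Set (Fin n × Fin n)} {y₀ : Fin n × Fin n → K} :
    ∀ {Col : Set (Fin n × Fin n)}, (∀ t ∈ Col, ¬ Tri c t.2 t.1) →
    (∀ k e, Tri c k e → (c e = k ↔ (e, k) ∈ F)) → (∀ t ∈ F, y₀ t ≠ 0) →
    Reduces (affineIrr (freePlaces c ∪ Col) y₀) (BumpRel c Col)
      (affineIrr (Col ∪ {t | t ∈ l ∧ t ∉ F}) y₀) Eq := by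
  induction h with
  | @nil c h =>
    intro Col hCol hF hy₀
    have hfree : freePlaces c ∪ Col = Col ∪ {t | t ∈ ([] : List (Fin n × Fin n)) ∧ t ∉ F} := by
      ext t
      have : ¬ Tri c t.2 t.1 := h _ _
      simp [freePlaces, this]
    rw [hfree]
    refine Reduces.of_sections 1 1 ⟨y₀, fun _ _ => rfl, by simp⟩ id (fun t => RegOn.coord t)
      (fun v hv hq => ⟨hv, hq⟩) (fun v hv _ w hw _ => ⟨fun hvw => ?_, fun hvw => ?_⟩)
      (fun _ p => p) (fun x hx _ => ⟨fun t => RegOn.coord t, fun p hp hq => ⟨hp, hq, rfl⟩, rfl⟩)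
      fun p hp hq => ⟨p, hp, hq, rfl⟩
    · funext t
      by_cases ht : t ∈ Col
      · exact hvw.1 t ht
      · have ht' : t ∉ Col ∪ {t | t ∈ ([] : List (Fin n × Fin n)) ∧ t ∉ F} := by simpa using ht
        exact (hv t ht').trans (hw t ht').symm
    · simp only [id] at hvw
      rw [hvw]
      exact BumpRel.refl _ _ _
  | @cons c d i l h hl ih =>
    intro Col hCol hF hy₀
    have hid : ¬ Tri (bumpLabel c d i) d i := fun hh => by
      have := (h.tri_iff d i).mp hh; simp at this
    have h1 := reduces_bump h hCol (y₀ := y₀) fun k e hke hce => hy₀ _ ((hF k e hke).mp hce)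
    have h2 := ih (Col := bumpCol c d i Col) (fun t ht => ?_) (fun k e hke => ⟨fun hf => ?_,
      fun hf => ?_⟩) hy₀
    · refine h1.trans_eq ?_
      have hset : Col ∪ {t | t ∈ (i, d) :: l ∧ t ∉ F} =
          bumpCol c d i Col ∪ {t | t ∈ l ∧ t ∉ F} := by
        have hiff := hF d i h.tri
        ext t
        by_cases hci : c i = d
        · have hdF := hiff.mp hci
          simp only [bumpCol, if_pos hci, Set.mem_union, Set.mem_ofPred_eq, List.mem_cons]
          constructor
          · rintro (ht | ⟨rfl | ht, ht'⟩)
            · exact Or.inl ht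
            · exact absurd hdF ht'
            · exact Or.inr ⟨ht, ht'⟩
          · tauto
        · have hdF : (i, d) ∉ F := fun hh => hci (hiff.mpr hh)
          simp only [bumpCol, if_neg hci, Set.mem_union, Set.mem_ofPred_eq, List.mem_cons,
            Set.mem_insert_iff]
          constructor
          · tauto
          · rintro ((rfl | ht) | ht)
            · exact Or.inr ⟨Or.inl rfl, hdF⟩
            · exact Or.inl ht
            · exact Or.inr ⟨Or.inr ht.1, ht.2⟩
      rw [hset]
      exact h2
    · intro hh
      rw [bumpCol] at ht
      split_ifs at ht
      · exact hCol t ht (h.tri_of hh)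
      · rcases ht with rfl | ht
        · exact hid hh
        · exact hCol t ht (h.tri_of hh)
    · exact (hF k e (h.tri_of hke)).mp (h.tri_of_fixed hke hf).2
    · have hke1 := h.tri_of hke
      have hce := (hF k e hke1).mpr hf
      have hm := h.min _ _ hke1
      have hei : e ≠ i := by
        rintro rfl
        have hkd : k = d := Fin.ext (by have := h.tri.2.2; omega)
        exact hid (hkd ▸ hke)
      have hed : e ≠ d := by
        rintro rfl
        have := hke1.1
        omega
      rw [bumpLabel_of_ne c hed hei, hce]

end BumpStep

section Orbits
variable {n : ℕ} {K : Type} [Field K]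

/-- Two matrices with the same strictly lower triangular part. -/
def LowEq (A B : Matrix (Fin n) (Fin n) K) : Prop := ∀ a b : Fin n, b < a → A a b = B a b

namespace LowEq
variable {A B C : Matrix (Fin n) (Fin n) K}

theorem refl (A : Matrix (Fin n) (Fin n) K) : LowEq A A := fun _ _ _ => rfl

theorem symm (h : LowEq A B) : LowEq B A := fun a b hab => (h a b hab).symm

theorem trans (h : LowEq A B) (h' : LowEq B C) : LowEq A C :=
  fun a b hab => (h a b hab).trans (h' a b hab)

theorem mul_left {g : Matrix (Fin n) (Fin n) K} (hg : IsUni n K g) (h : LowEq A B) :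
    LowEq (g * A) (g * B) := by
  intro a b hab
  simp only [Matrix.mul_apply]
  refine Finset.sum_congr rfl fun l _ => ?_
  rcases lt_or_ge l a with hl | hl
  · rw [hg.2 a l hl, zero_mul, zero_mul]
  · rw [h l b (lt_of_lt_of_le hab hl)]

theorem mul_right {g : Matrix (Fin n) (Fin n) K} (hg : IsUni n K g) (h : LowEq A B) :
    LowEq (A * g) (B * g) := by
  intro a b hab
  simp only [Matrix.mul_apply]
  refine Finset.sum_congr rfl fun l _ => ?_
  rcases lt_or_ge b l with hl | hl
  · rw [hg.2 l b hl, mul_zero, mul_zero]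
  · rw [h a l (lt_of_le_of_lt hl hab)]

end LowEq

theorem lowEq_lowerPart (A : Matrix (Fin n) (Fin n) K) : LowEq (lowerPart n K A) A := by
  intro a b hab
  simp [lowerPart, hab]

namespace IsUni
variable {g h : Matrix (Fin n) (Fin n) K}

theorem one : IsUni n K 1 :=
  ⟨fun i => Matrix.one_apply_eq i, fun _ _ hij => Matrix.one_apply_ne hij.ne'⟩

theorem mul (hg : IsUni n K g) (hh : IsUni n K h) : IsUni n K (g * h) := by
  constructor
  · intro i
    rw [Matrix.mul_apply, Finset.sum_eq_single i]
    · rw [hg.1, hh.1, one_mul]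
    · intro l _ hl
      rcases lt_or_gt_of_ne hl with hl | hl
      · rw [hg.2 i l hl, zero_mul]
      · rw [hh.2 l i hl, mul_zero]
    · simp
  · intro i j hij
    rw [Matrix.mul_apply]
    refine Finset.sum_eq_zero fun l _ => ?_
    rcases lt_or_ge l i with hl | hl
    · rw [hg.2 i l hl, zero_mul]
    · rw [hh.2 l j (lt_of_lt_of_le hij hl), mul_zero]

theorem blockTriangular (hg : IsUni n K g) : g.BlockTriangular id := fun i j hij => hg.2 i j hij

theorem det (hg : IsUni n K g) : g.det = 1 := by
  rw [Matrix.det_of_isUpperTriangular hg.blockTriangular]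
  exact Finset.prod_eq_one fun i _ => hg.1 i

theorem isUnit_det (hg : IsUni n K g) : IsUnit g.det := by rw [hg.det]; exact isUnit_one

theorem mul_inv (hg : IsUni n K g) : g * g⁻¹ = 1 := Matrix.mul_nonsing_inv g hg.isUnit_det

theorem inv_mul (hg : IsUni n K g) : g⁻¹ * g = 1 := Matrix.nonsing_inv_mul g hg.isUnit_det

theorem inv (hg : IsUni n K g) : IsUni n K g⁻¹ := by
  have : Invertible g := g.invertibleOfIsUnitDet hg.isUnit_det
  have hb : (g⁻¹).BlockTriangular id := Matrix.blockTriangular_inv_of_blockTriangular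
    hg.blockTriangular
  refine ⟨fun i => ?_, fun i j hij => hb hij⟩
  have h := congrFun (congrFun hg.mul_inv i) i
  rw [Matrix.mul_apply, Finset.sum_eq_single i, hg.1, one_mul, Matrix.one_apply_eq] at h
  · exact h
  · intro l _ hl
    rcases lt_or_gt_of_ne hl with hl | hl
    · rw [hg.2 i l hl, zero_mul]
    · rw [hb hl, mul_zero]
  · simp

end IsUni

/-- Conjugacy of strictly lower triangular parts under the unitriangular group. -/
def CoadjRel (A B : Matrix (Fin n) (Fin n) K) : Prop :=
  ∃ g, IsUni n K g ∧ LowEq (g * A) (B * g)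

namespace CoadjRel
variable {A B C : Matrix (Fin n) (Fin n) K}

theorem symm (h : CoadjRel A B) : CoadjRel B A := by
  obtain ⟨g, hg, h⟩ := h
  refine ⟨g⁻¹, hg.inv, ?_⟩
  have := (h.mul_left hg.inv).mul_right hg.inv
  rw [← Matrix.mul_assoc, hg.inv_mul, Matrix.one_mul, Matrix.mul_assoc, Matrix.mul_assoc,
    hg.mul_inv, Matrix.mul_one] at this
  exact this.symm

theorem trans (h : CoadjRel A B) (h' : CoadjRel B C) : CoadjRel A C := by
  obtain ⟨g, hg, h⟩ := h
  obtain ⟨g', hg', h'⟩ := h'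
  refine ⟨g' * g, hg'.mul hg, ?_⟩
  rw [Matrix.mul_assoc, ← Matrix.mul_assoc C]
  refine (h.mul_left hg').trans ?_
  rw [← Matrix.mul_assoc]
  exact h'.mul_right hg

end CoadjRel

theorem matOf_vecOf (A : Matrix (Fin n) (Fin n) K) : LowEq (matOf n K (vecOf n K A)) A := by
  intro a b hab
  have : IsPosRoot n ((a : ℕ) + 1, (b : ℕ) + 1) := by
    refine ⟨?_, ?_, ?_⟩ <;> simp <;> omega
  simp [matOf, this, vecOf]

theorem vecOf_eq_iff {A B : Matrix (Fin n) (Fin n) K} : vecOf n K A = vecOf n K B ↔ LowEq A B := by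
  constructor
  · intro h
    exact (matOf_vecOf A).symm.trans (h ▸ matOf_vecOf B)
  · intro h
    funext γ
    obtain ⟨⟨i, j⟩, h1, h2, h3⟩ := γ
    refine h _ _ ?_
    simp only [Fin.lt_def] at *
    omega

theorem vecOf_matOf (v : PRoot n → K) : vecOf n K (matOf n K v) = v := by
  funext γ
  obtain ⟨⟨i, j⟩, h1, h2, h3⟩ := γ
  simp only at h1 h2 h3
  have e1 : i - 1 + 1 = i := by omega
  have e2 : j - 1 + 1 = j := by omega
  have : IsPosRoot n (i, j) := ⟨h1, h2, h3⟩
  simp [vecOf, matOf, e1, e2, this]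

theorem coadjPt_eq_iff {g : Matrix (Fin n) (Fin n) K} (hg : IsUni n K g) (v w : PRoot n → K) :
    coadjPt n K g v = w ↔ LowEq (g * matOf n K v) (matOf n K w * g) := by
  conv_lhs => rw [← vecOf_matOf w]
  rw [coadjPt, vecOf_eq_iff]
  constructor
  · intro h
    have := ((lowEq_lowerPart _).symm.trans h).mul_right hg
    rwa [Matrix.mul_assoc _ g⁻¹, hg.inv_mul, Matrix.mul_one] at this
  · intro h
    have := h.mul_right hg.inv
    rw [Matrix.mul_assoc _ g, hg.mul_inv, Matrix.mul_one] at this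
    exact (lowEq_lowerPart _).trans this

theorem coadjRel_iff (v w : PRoot n → K) :
    (∃ g, IsUni n K g ∧ coadjPt n K g v = w) ↔ CoadjRel (matOf n K v) (matOf n K w) := by
  constructor
  · rintro ⟨g, hg, h⟩
    exact ⟨g, hg, (coadjPt_eq_iff hg v w).mp h⟩
  · rintro ⟨g, hg, h⟩
    exact ⟨g, hg, (coadjPt_eq_iff hg v w).mpr h⟩

theorem mem_VDvar {D : Set (ℕ × ℕ)} {φ : ℕ × ℕ → K} {v : PRoot n → K} :
    v ∈ VDvar n K D φ ↔ ∃ g h : Matrix (Fin n) (Fin n) K, IsUni n K g ∧ IsUni n K h ∧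
      LowEq (matOf n K v) (g * XDphi n K D φ * h) := by
  constructor
  · rintro ⟨g, h, hg, hh, rfl⟩
    exact ⟨g, h, hg, hh, (matOf_vecOf _).trans (lowEq_lowerPart _)⟩
  · rintro ⟨g, h, hg, hh, he⟩
    refine ⟨g, h, hg, hh, ?_⟩
    rw [← vecOf_matOf v, vecOf_eq_iff]
    exact he.trans (lowEq_lowerPart _).symm

theorem coadjPt_mem_VDvar {D : Set (ℕ × ℕ)} {φ : ℕ × ℕ → K} {v : PRoot n → K}
    {g : Matrix (Fin n) (Fin n) K} (hg : IsUni n K g) (hv : v ∈ VDvar n K D φ) :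
    coadjPt n K g v ∈ VDvar n K D φ := by
  obtain ⟨a, b, ha, hb, h⟩ := mem_VDvar.mp hv
  refine mem_VDvar.mpr ⟨g * a, b * g⁻¹, hg.mul ha, hb.mul hg.inv, ?_⟩
  refine ((matOf_vecOf _).trans (lowEq_lowerPart _)).trans ?_
  have := (h.mul_left hg).mul_right hg.inv
  simpa only [Matrix.mul_assoc] using this

end Orbits

section Labels
variable {n : ℕ} {K : Type} [Field K] {c : Fin n → ℕ} {φ : Fin n → K}

/-- A labelling of the rows by the column of the nonzero entry, or by a number `≥ n` if the row
is zero. -/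
structure IsLabel (c : Fin n → ℕ) : Prop where
  inj : Function.Injective c
  lt : ∀ e, c e < n → c e < e

/-- The monomial matrix with entry `φ e` in row `e` and column `c e`. -/
def labelMat (c : Fin n → ℕ) (φ : Fin n → K) : Matrix (Fin n) (Fin n) K :=
  fun e k => if c e = k then φ e else 0

theorem labelMat_mul_of_lt (b : Matrix (Fin n) (Fin n) K) {e k : Fin n} (h : c e = k) (m : Fin n) :
    (labelMat c φ * b) e m = φ e * b k m := by
  rw [Matrix.mul_apply, Finset.sum_eq_single k]
  · simp [labelMat, h]
  · intro l _ hl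
    have : c e ≠ l := fun h' => hl (Fin.ext (h'.symm.trans h))
    simp [labelMat, this]
  · simp

theorem labelMat_mul_eq_zero {b : Matrix (Fin n) (Fin n) K} (hb : IsUni n K b) {e m : Fin n}
    (h : (m : ℕ) < c e) : (labelMat c φ * b) e m = 0 := by
  rw [Matrix.mul_apply]
  refine Finset.sum_eq_zero fun l _ => ?_
  by_cases hl : c e = l
  · rw [hb.2 l m (by rw [Fin.lt_def]; omega), mul_zero]
  · simp [labelMat, hl]

theorem labelMat_mul_label {b : Matrix (Fin n) (Fin n) K} (hb : IsUni n K b) {e m : Fin n}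
    (h : c e = m) : (labelMat c φ * b) e m = φ e := by
  rw [labelMat_mul_of_lt b h, hb.1, mul_one]

end Labels

section SliceOrbits
variable {n : ℕ} {K : Type} [Field K] {c : Fin n → ℕ} {φ : Fin n → K}

theorem eq_zero_of_lowEq (hc : IsLabel c) (hφ : ∀ e, φ e ≠ 0) {a b g : Matrix (Fin n) (Fin n) K}
    (ha : IsUni n K a) (hb : IsUni n K b) (hg : IsUni n K g)
    (h : LowEq (g * (labelMat c φ * a)) (labelMat c φ * b * g)) {k e : Fin n} (hke : k < e)
    (h1 : c e < k) (h2 : c e < c k) : g k e = 0 := by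
  induction hm : c e using Nat.strong_induction_on generalizing e with
  | _ m ih =>
    have hme : c e < n := by omega
    set f : Fin n := ⟨c e, hme⟩ with hf
    have hfe : c e = (f : ℕ) := rfl
    have hlow := h k f (by rw [Fin.lt_def]; omega)
    have hr : (labelMat c φ * b * g) k f = 0 := by
      rw [Matrix.mul_assoc]
      exact labelMat_mul_eq_zero (hb.mul hg) (by rw [← hfe]; exact h2)
    rw [hr, Matrix.mul_apply, Finset.sum_eq_single e] at hlow
    · rw [labelMat_mul_label ha hfe] at hlow
      simpa [hφ e] using hlow
    · intro l _ hl
      rcases lt_trichotomy l k with hlk | rfl | hlk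
      · rw [hg.2 k l hlk, zero_mul]
      · rw [labelMat_mul_eq_zero ha (by rw [← hfe]; exact h2), mul_zero]
      · rcases lt_trichotomy (c l) (c e) with hle | hle | hle
        · rw [ih (c l) (by omega) hlk (by omega) (by omega) rfl, zero_mul]
        · exact absurd (hc.inj hle) hl
        · rw [labelMat_mul_eq_zero ha (by rw [← hfe]; exact hle), mul_zero]
    · simp

theorem exists_pat_of_lowEq (hc : IsLabel c) (hφ : ∀ e, φ e ≠ 0)
    {a b g : Matrix (Fin n) (Fin n) K} (ha : IsUni n K a) (hb : IsUni n K b) (hg : IsUni n K g)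
    (h : LowEq (g * (labelMat c φ * a)) (labelMat c φ * b * g)) :
    ∃ g', IsPat c g' ∧ Intertwines c (maskMat c fun t => (labelMat c φ * a) t.1 t.2)
      (maskMat c fun t => (labelMat c φ * b) t.1 t.2) g' := by
  have hz : ∀ {k e : Fin n}, k < e → c e < k → c e < c k → g k e = 0 :=
    fun h1 h2 h3 => eq_zero_of_lowEq hc hφ ha hb hg h h1 h2 h3
  set g' : Matrix (Fin n) (Fin n) K := fun k e => if k = e ∨ c k < c e then g k e else 0 with hg'
  refine ⟨g', ⟨fun k => by simp [hg', hg.1], ?_⟩, ?_⟩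
  · intro k l hkl h0
    have h1 : c k < c l := by
      by_contra h1
      simp [hg', hkl, h1] at h0
    refine ⟨?_, h1⟩
    by_contra hlt
    have : l < k := lt_of_le_of_ne (not_lt.mp hlt) (Ne.symm hkl)
    simp [hg', hkl, h1, hg.2 k l this] at h0
  · rintro k e ⟨hke, hcke, hek⟩
    have hl := h e k hke
    rw [Matrix.mul_apply, Matrix.mul_apply] at hl ⊢
    convert hl.symm using 1
    · refine Finset.sum_congr rfl fun l _ => ?_
      rcases lt_trichotomy k l with hkl | rfl | hlk
      · simp [hg', hg.2 l k hkl]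
      · have : Tri c k e := ⟨hke, hcke, hek⟩
        simp [hg', maskMat, this]
      · by_cases hel : c e ≤ l
        swap
        · have : ¬ Tri c l e := fun ht => hel ht.2.2
          rw [labelMat_mul_eq_zero hb (not_le.mp hel)]
          simp [maskMat, this]
        by_cases hlk' : c l < c k
        · have : Tri c l e := ⟨lt_trans hlk hke, by omega, hel⟩
          simp [hg', maskMat, this, hlk']
        · have hne : c l ≠ c k := fun h' => hlk.ne (hc.inj h')
          rw [hz hlk (by omega) (by omega)]
          simp [hg', hlk', hlk.ne]
    · refine Finset.sum_congr rfl fun l _ => ?_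
      rcases lt_trichotomy l e with hle | rfl | hel
      · simp [hg', hg.2 e l hle]
      · have : Tri c k l := ⟨hke, hcke, hek⟩
        simp [hg', maskMat, this]
      · by_cases hlk : c l ≤ k
        swap
        · have : ¬ Tri c k l := fun ht => hlk ht.2.2
          rw [labelMat_mul_eq_zero ha (not_le.mp hlk)]
          simp [maskMat, this]
        by_cases hel' : c e < c l
        · have : Tri c k l := ⟨lt_trans hke hel, by omega, hlk⟩
          simp [hg', maskMat, this, hel']
        · have hne : c l ≠ c e := fun h' => hel.ne' (hc.inj h')
          rw [hz hel (by omega) (by omega)]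
          simp [hg', hel', hel.ne]

theorem exists_lowEq_of_pat (hc : IsLabel c) (hφ : ∀ e, φ e ≠ 0)
    {a b g' : Matrix (Fin n) (Fin n) K} (ha : IsUni n K a) (hb : IsUni n K b) (hg' : IsPat c g')
    (h : Intertwines c (maskMat c fun t => (labelMat c φ * a) t.1 t.2)
      (maskMat c fun t => (labelMat c φ * b) t.1 t.2) g') :
    ∃ g, IsUni n K g ∧ LowEq (g * (labelMat c φ * a)) (labelMat c φ * b * g) := by
  have hg'0 : ∀ k l : Fin n, l < k → g' k l = 0 := by
    intro k l hlk
    by_contra h0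
    have := (hg'.2 k l hlk.ne' h0).1
    rw [Fin.lt_def] at hlk
    omega
  set A := labelMat c φ * a with hA
  set B := labelMat c φ * b with hB
  have hsol : ∀ m : Fin n, ∃ x : Fin n → K, x m = 1 ∧ (∀ k, m < k → x k = 0) ∧
      (∀ k : Fin n, (¬ ∃ e : Fin n, c e = k ∧ k < m ∧ m < e ∧ c e < c m) → x k = g' k m) ∧
      ∀ k e : Fin n, c e = k → k < m → m < e → c e < c m →
        φ e * ∑ l, b k l * x l = ∑ l, g' e l * A l m := by
    intro m
    set Q : Fin n → Prop := fun k => ∃ e : Fin n, c e = k ∧ k < m ∧ m < e ∧ c e < c m with hQ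
    set L : Matrix (Fin n) (Fin n) K := fun k l => if Q k then b k l else
      (1 : Matrix (Fin n) (Fin n) K) k l with hL
    have hLu : IsUni n K L := by
      constructor
      · intro i
        by_cases hq : Q i <;> simp [hL, hq, hb.1]
      · intro i j hij
        by_cases hq : Q i
        · simp [hL, hq, hb.2 i j hij]
        · simp [hL, hq, Matrix.one_apply_ne hij.ne']
    set r : Fin n → K := fun k => if hk : Q k then (φ hk.choose)⁻¹ *
      ∑ l, g' hk.choose l * A l m else g' k m with hr
    have hQm : ∀ k, m ≤ k → ¬ Q k := fun k hk ⟨e, _, h1, _⟩ => absurd h1 (not_lt.mpr hk)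
    have hrm : r m = 1 := by simp [hr, hQm m le_rfl, hg'.1]
    have hr0 : ∀ k, m < k → r k = 0 := by
      intro k hk
      simp [hr, hQm k hk.le, hg'0 k m hk]
    have hLx : L.mulVec (L⁻¹.mulVec r) = r := by
      rw [Matrix.mulVec_mulVec, hLu.mul_inv, Matrix.one_mulVec]
    refine ⟨L⁻¹.mulVec r, ?_, ?_, ?_, ?_⟩
    · rw [Matrix.mulVec, dotProduct, Finset.sum_eq_single m, hLu.inv.1, hrm, one_mul]
      · intro l _ hl
        rcases lt_or_gt_of_ne hl with hl | hl
        · rw [hLu.inv.2 m l hl, zero_mul]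
        · rw [hr0 l hl, mul_zero]
      · simp
    · intro k hk
      rw [Matrix.mulVec, dotProduct]
      refine Finset.sum_eq_zero fun l _ => ?_
      rcases lt_or_ge l k with hl | hl
      · rw [hLu.inv.2 k l hl, zero_mul]
      · rw [hr0 l (lt_of_lt_of_le hk hl), mul_zero]
    · intro k hk
      have h1 := congrFun hLx k
      have hLk : L k = (1 : Matrix (Fin n) (Fin n) K) k := by
        funext l
        simp only [hL]
        rw [if_neg hk]
      rw [Matrix.mulVec, hLk] at h1
      change (1 : Matrix (Fin n) (Fin n) K).mulVec _ k = _ at h1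
      rw [Matrix.one_mulVec] at h1
      rw [h1]
      simp only [hr]
      rw [dif_neg hk]
    · intro k e he h1 h2 h3
      have hk : Q k := ⟨e, he, h1, h2, h3⟩
      have hch : hk.choose = e := hc.inj (hk.choose_spec.1.trans he.symm)
      have h4 := congrFun hLx k
      have hLk : L k = b k := by
        funext l
        simp only [hL]
        rw [if_pos hk]
      rw [Matrix.mulVec, hLk, dotProduct] at h4
      rw [h4]
      simp only [hr]
      rw [dif_pos hk, hch, ← mul_assoc, mul_inv_cancel₀ (hφ e), one_mul]
  choose x hx1 hx0 hxg hxs using hsol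
  set g : Matrix (Fin n) (Fin n) K := fun k m => x m k with hgdef
  have hg : IsUni n K g := ⟨fun m => hx1 m, fun k m hmk => hx0 m k hmk⟩
  refine ⟨g, hg, ?_⟩
  intro e m hme
  have hleft : (g * A) e m = ∑ l, g' e l * A l m := by
    rw [Matrix.mul_apply]
    refine Finset.sum_congr rfl fun l _ => ?_
    by_cases hq : ∃ e' : Fin n, c e' = e ∧ e < l ∧ l < e' ∧ c e' < c l
    · obtain ⟨e', h1, h2, h3, h4⟩ := hq
      rw [hA, labelMat_mul_eq_zero ha (by rw [Fin.lt_def] at hme; omega), mul_zero, mul_zero]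
    · simp only [hgdef, hxg l e hq]
  rw [hleft]
  have hAz : ∀ l k : Fin n, (k : ℕ) < c l → A l k = 0 := fun l k h => labelMat_mul_eq_zero ha h
  rcases lt_trichotomy (m : ℕ) (c e) with hlt | heq | hgt
  · have hr : (B * g) e m = 0 := by
      rw [hB, Matrix.mul_assoc]
      exact labelMat_mul_eq_zero (hb.mul hg) hlt
    rw [hr]
    refine Finset.sum_eq_zero fun l _ => ?_
    by_cases hl : g' e l = 0
    · rw [hl, zero_mul]
    · have : c e ≤ c l := by
        rcases eq_or_ne e l with rfl | hel
        · exact le_rfl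
        · exact (hg'.2 e l hel hl).2.le
      rw [hAz l m (by omega), mul_zero]
  · have hr : (B * g) e m = φ e := by
      rw [hB, Matrix.mul_assoc]
      exact labelMat_mul_label (hb.mul hg) heq.symm
    rw [hr, Finset.sum_eq_single e, hg'.1, one_mul, hA, labelMat_mul_label ha heq.symm]
    · intro l _ hl
      by_cases h0 : g' e l = 0
      · rw [h0, zero_mul]
      · have := (hg'.2 e l hl.symm h0).2
        rw [hAz l m (by omega), mul_zero]
    · simp
  · have hne : c e ≠ c m := fun h' => hme.ne' (hc.inj h')
    rcases lt_or_gt_of_ne hne with hcm | hcm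
    · set k : Fin n := ⟨c e, by omega⟩ with hk
      have hek : c e = (k : ℕ) := rfl
      rw [hB, Matrix.mul_assoc, labelMat_mul_of_lt _ hek, Matrix.mul_apply]
      exact (hxs m k e hek hgt hme hcm).symm
    · have htri : Tri c m e := ⟨hme, hcm, hgt.le⟩
      have hI := h m e htri
      rw [Matrix.mul_apply, Matrix.mul_apply] at hI
      rw [Matrix.mul_apply]
      convert hI.symm using 1
      · refine Finset.sum_congr rfl fun l _ => ?_
        by_cases h0 : g' e l = 0
        · rw [h0, zero_mul, zero_mul]
        by_cases hlm : c l ≤ m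
        · have : Tri c m l := by
            rcases eq_or_ne e l with rfl | hel
            · exact htri
            · obtain ⟨h1, h2⟩ := hg'.2 e l hel h0
              rw [Fin.lt_def] at hme
              exact ⟨by omega, by omega, hlm⟩
          simp [maskMat, this]
        · have : ¬ Tri c m l := fun ht => hlm ht.2.2
          rw [hAz l m (not_le.mp hlm)]
          simp [maskMat, this]
      · refine Finset.sum_congr rfl fun l _ => ?_
        by_cases hel : c e ≤ l
        swap
        · have : ¬ Tri c l e := fun ht => hel ht.2.2
          rw [hB, labelMat_mul_eq_zero hb (not_le.mp hel)]
          simp [maskMat, this]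
        have hq : ¬ ∃ e' : Fin n, c e' = l ∧ l < m ∧ m < e' ∧ c e' < c m := by
          rintro ⟨e', h1, h2, h3, h4⟩
          omega
        simp only [hgdef, hxg m l hq]
        by_cases h0 : g' l m = 0
        · rw [h0, mul_zero, mul_zero]
        have : Tri c l e := by
          rcases eq_or_ne l m with rfl | hlm
          · exact htri
          · obtain ⟨h1, h2⟩ := hg'.2 l m hlm h0
            rw [Fin.lt_def] at hme
            exact ⟨by omega, by omega, hel⟩
        simp [maskMat, this]

end SliceOrbits

section Factorization
variable {n : ℕ} {K : Type} [Field K] {c : Fin n → ℕ} {φ : Fin n → K}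

/-- A matrix-valued function with regular entries. -/
def MatReg {σ : Type} (A : (σ → K) → Matrix (Fin n) (Fin n) K) : Prop :=
  ∀ a b, RegOn Set.univ (fun v => A v a b)

namespace MatReg
variable {σ : Type} {A B : (σ → K) → Matrix (Fin n) (Fin n) K}

theorem const (M : Matrix (Fin n) (Fin n) K) : MatReg (fun _ : σ → K => M) :=
  fun a b => RegOn.const (M a b)

theorem mul (hA : MatReg A) (hB : MatReg B) : MatReg (fun v => A v * B v) := fun a b =>
  (RegOn.sum Finset.univ fun l _ => (hA a l).mul (hB l b)).congr fun _ _ => Matrix.mul_apply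

theorem add (hA : MatReg A) (hB : MatReg B) : MatReg (fun v => A v + B v) :=
  fun a b => (hA a b).add (hB a b)

theorem sub (hA : MatReg A) (hB : MatReg B) : MatReg (fun v => A v - B v) :=
  fun a b => (hA a b).sub (hB a b)

theorem lowerPart (hA : MatReg A) : MatReg (fun v => lowerPart n K (A v)) := fun a b =>
  RegOn.ite _ (fun _ => hA a b) fun _ => RegOn.const 0

theorem matOf : MatReg (matOf n K) := by
  intro a b
  by_cases h : IsPosRoot n ((a : ℕ) + 1, (b : ℕ) + 1)
  · exact (RegOn.coord _).congr fun v _ => by rw [_root_.matOf, dif_pos h]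
  · exact (RegOn.const 0).congr fun v _ => by rw [_root_.matOf, dif_neg h]

end MatReg

/-- The matrix with the part of column `j` of `M` above row `i`, divided by `t`, as column `i`. -/
def colElim (i j : Fin n) (t : K) (M : Matrix (Fin n) (Fin n) K) : Matrix (Fin n) (Fin n) K :=
  fun k l => if l = i ∧ k < i then M k j / t else 0

/-- The matrix with the part of row `i` of `M` right of column `j`, divided by `t`, as row `j`. -/
def rowElim (i j : Fin n) (t : K) (M : Matrix (Fin n) (Fin n) K) : Matrix (Fin n) (Fin n) K :=
  fun k l => if k = j ∧ j < l then M i l / t else 0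

theorem MatReg.colElim {σ : Type} {M : (σ → K) → Matrix (Fin n) (Fin n) K} (hM : MatReg M)
    (i j : Fin n) {t : K} (ht : t ≠ 0) : MatReg (fun v => colElim i j t (M v)) := fun k _ =>
  RegOn.ite _ (fun _ => (hM k j).div (RegOn.const t) fun _ _ => ht) fun _ => RegOn.const 0

theorem MatReg.rowElim {σ : Type} {M : (σ → K) → Matrix (Fin n) (Fin n) K} (hM : MatReg M)
    (i j : Fin n) {t : K} (ht : t ≠ 0) : MatReg (fun v => rowElim i j t (M v)) := fun _ l =>
  RegOn.ite _ (fun _ => (hM i l).div (RegOn.const t) fun _ _ => ht) fun _ => RegOn.const 0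

theorem colElim_mul (i j : Fin n) (t : K) (M A : Matrix (Fin n) (Fin n) K) (a b : Fin n) :
    (colElim i j t M * A) a b = if a < i then M a j / t * A i b else 0 := by
  rw [Matrix.mul_apply, Finset.sum_eq_single i]
  · by_cases h : a < i <;> simp [colElim, h]
  · intro l _ hl
    simp [colElim, hl]
  · simp

theorem mul_rowElim (i j : Fin n) (t : K) (M A : Matrix (Fin n) (Fin n) K) (a b : Fin n) :
    (A * rowElim i j t M) a b = if j < b then A a j * (M i b / t) else 0 := by
  rw [Matrix.mul_apply, Finset.sum_eq_single j]
  · by_cases h : j < b <;> simp [rowElim, h]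
  · intro l _ hl
    simp [rowElim, hl]
  · simp

theorem colElim_mul_self (i j : Fin n) (t : K) (M : Matrix (Fin n) (Fin n) K) :
    colElim i j t M * colElim i j t M = 0 := by
  ext a b
  rw [colElim_mul]
  simp [colElim]

theorem rowElim_mul_self (i j : Fin n) (t : K) (M : Matrix (Fin n) (Fin n) K) :
    rowElim i j t M * rowElim i j t M = 0 := by
  ext a b
  rw [mul_rowElim]
  simp [rowElim]

theorem isUni_one_add {E : Matrix (Fin n) (Fin n) K} (h : ∀ a b, b ≤ a → E a b = 0) :
    IsUni n K (1 + E) := by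
  refine ⟨fun i => by simp [h i i le_rfl], fun i j hij => ?_⟩
  simp [Matrix.one_apply_ne hij.ne', h i j hij.le]

theorem isUni_colElim (i j : Fin n) (t : K) (M : Matrix (Fin n) (Fin n) K) :
    IsUni n K (1 + colElim i j t M) := by
  refine isUni_one_add fun a b hab => if_neg ?_
  rintro ⟨rfl, h⟩
  exact absurd h (not_lt.mpr hab)

theorem isUni_rowElim (i j : Fin n) (t : K) (M : Matrix (Fin n) (Fin n) K) :
    IsUni n K (1 + rowElim i j t M) := by
  refine isUni_one_add fun a b hab => if_neg ?_
  rintro ⟨rfl, h⟩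
  exact absurd h (not_lt.mpr hab)

/-- The result of clearing column `j` above, and row `i` to the right of, the pivot `(i, j)`. -/
def elimMat (i j : Fin n) (t : K) (M : Matrix (Fin n) (Fin n) K) : Matrix (Fin n) (Fin n) K :=
  lowerPart n K ((1 - colElim i j t M) * M * (1 - rowElim i j t M))

theorem lowEq_elimMat (i j : Fin n) (t : K) (M : Matrix (Fin n) (Fin n) K) :
    LowEq ((1 + colElim i j t M) * elimMat i j t M * (1 + rowElim i j t M)) M := by
  refine (((lowEq_lowerPart _).mul_left (isUni_colElim i j t M)).mul_right
    (isUni_rowElim i j t M)).trans ?_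
  have h1 : (1 + colElim i j t M) * (1 - colElim i j t M) = 1 := by
    have := colElim_mul_self i j t M
    rw [add_mul, mul_sub, mul_sub, this]
    simp
  have h2 : (1 - rowElim i j t M) * (1 + rowElim i j t M) = 1 := by
    have := rowElim_mul_self i j t M
    rw [sub_mul, mul_add, mul_add, this]
    simp
  rw [Matrix.mul_assoc, Matrix.mul_assoc, h2, Matrix.mul_one, ← Matrix.mul_assoc, h1,
    Matrix.one_mul]
  exact LowEq.refl M

theorem elimMat_apply {i j : Fin n} {t : K} {M : Matrix (Fin n) (Fin n) K} (ht : t ≠ 0)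
    (hij : M i j = t) (hkj : ∀ k, i < k → M k j = 0) {a b : Fin n} (hab : b < a) :
    elimMat i j t M a b = M a b - (if a < i then M a j / t * M i b else 0) -
      if j < b ∧ a = i then M i b else 0 := by
  have hN : ∀ a b, ((1 - colElim i j t M) * M) a b =
      M a b - if a < i then M a j / t * M i b else 0 := by
    intro a b
    rw [sub_mul, Matrix.one_mul, Matrix.sub_apply, colElim_mul]
  have hNj : ((1 - colElim i j t M) * M) a j = if a = i then t else 0 := by
    rw [hN]
    rcases lt_trichotomy a i with h | rfl | h
    · simp [h, h.ne, hij, ht]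
    · simp [hij]
    · simp [hkj a h, h.ne', not_lt.mpr h.le]
  rw [elimMat, lowEq_lowerPart _ a b hab, mul_sub, Matrix.mul_one, Matrix.sub_apply, mul_rowElim,
    hNj,
    hN]
  congr 1
  by_cases h1 : j < b <;> by_cases h2 : a = i <;> simp [h1, h2, mul_div_cancel₀ _ ht]

theorem col_eq_of_lowEq {M g h : Matrix (Fin n) (Fin n) K} {j : Fin n}
    (hh : IsUni n K h) (hM : LowEq M (g * labelMat c φ * h))
    (hag : ∀ a b : Fin n, b < a → ((b : ℕ) < j ∨ c a < j) → M a b = labelMat c φ a b)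
    {k : Fin n} (hk : j < k) (hck : (j : ℕ) ≤ c k) : M k j = (g * labelMat c φ) k j := by
  have h1 := hM.mul_right hh.inv
  rw [Matrix.mul_assoc _ h, hh.mul_inv, Matrix.mul_one] at h1
  rw [← h1 k j hk, Matrix.mul_apply, Finset.sum_eq_single j, hh.inv.1, mul_one]
  · intro l _ hl
    rcases lt_or_gt_of_ne hl with hl | hl
    · have : c k ≠ l := by rw [Fin.lt_def] at hl; omega
      rw [hag k l (hl.trans hk) (Or.inl hl)]
      simp [labelMat, this]
    · rw [hh.inv.2 l j hl, mul_zero]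
  · simp

theorem mul_labelMat_apply (hc : IsLabel c) (g : Matrix (Fin n) (Fin n) K) {i j : Fin n}
    (hij : c i = j) (k : Fin n) : (g * labelMat c φ) k j = g k i * φ i := by
  rw [Matrix.mul_apply, Finset.sum_eq_single i]
  · simp [labelMat, hij]
  · intro l _ hl
    have : c l ≠ j := fun h => hl (hc.inj (h.trans hij.symm))
    simp [labelMat, this]
  · simp

theorem exists_factor_upto (hc : IsLabel c) (hφ : ∀ e, φ e ≠ 0) (m : ℕ) (hm : m ≤ n) :
    ∃ G H M : (PRoot n → K) → Matrix (Fin n) (Fin n) K, MatReg G ∧ MatReg H ∧ MatReg M ∧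
      (∀ v, IsUni n K (G v)) ∧ (∀ v, IsUni n K (H v)) ∧
      (∀ v, LowEq (matOf n K v) (G v * M v * H v)) ∧ (∀ v a b, a ≤ b → M v a b = 0) ∧
      (∀ v, (∃ g h, IsUni n K g ∧ IsUni n K h ∧ LowEq (matOf n K v) (g * labelMat c φ * h)) →
        ∀ a b : Fin n, b < a → ((b : ℕ) < m ∨ c a < m) → M v a b = labelMat c φ a b) ∧
      ∀ v, (∃ a, IsUni n K a ∧ LowEq (matOf n K v) (labelMat c φ * a)) → G v = 1 := by
  induction m with
  | zero =>
    refine ⟨fun _ => 1, fun _ => 1, matOf n K, MatReg.const 1, MatReg.const 1, MatReg.matOf,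
      fun _ => IsUni.one, fun _ => IsUni.one, fun v => ?_, fun v a b hab => ?_,
      fun v _ a b _ h => by omega, fun v _ => rfl⟩
    · simpa using LowEq.refl (matOf n K v)
    · rw [matOf, dif_neg]
      rintro ⟨_, h, _⟩
      rw [Fin.le_def] at hab
      simp only at h
      omega
  | succ m ih =>
    obtain ⟨G, H, M, hG, hH, hM, hGu, hHu, hf, hM0, hag, hsl⟩ := ih (by omega)
    set j : Fin n := ⟨m, by omega⟩ with hj
    have hMV : ∀ v, (∃ g h, IsUni n K g ∧ IsUni n K h ∧
        LowEq (matOf n K v) (g * labelMat c φ * h)) → ∃ g h, IsUni n K g ∧ IsUni n K h ∧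
        LowEq (M v) (g * labelMat c φ * h) := by
      rintro v ⟨g, h, hg, hh, hv⟩
      refine ⟨(G v)⁻¹ * g, h * (H v)⁻¹, (hGu v).inv.mul hg, hh.mul (hHu v).inv, ?_⟩
      have := (((hf v).symm.trans hv).mul_left (hGu v).inv).mul_right (hHu v).inv
      rw [Matrix.mul_assoc (G v), ← Matrix.mul_assoc _ (G v), (hGu v).inv_mul, Matrix.one_mul,
        Matrix.mul_assoc (M v), (hHu v).mul_inv, Matrix.mul_one] at this
      simpa only [Matrix.mul_assoc] using this
    by_cases hi : ∃ i, c i = m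
    · obtain ⟨i, hi⟩ := hi
      have hpiv : ∀ v, (∃ g h, IsUni n K g ∧ IsUni n K h ∧
          LowEq (matOf n K v) (g * labelMat c φ * h)) →
          M v i j = φ i ∧ ∀ k, i < k → M v k j = 0 := by
        intro v hv
        obtain ⟨g, h, hg, hh, hv'⟩ := hMV v hv
        have hji : j < i := by
          have := hc.lt i (by omega)
          rw [Fin.lt_def]
          simp only [hj]
          omega
        constructor
        · rw [col_eq_of_lowEq hh hv' (hag v hv) hji hi.ge, mul_labelMat_apply hc g hi, hg.1,
            one_mul]
        · intro k hk
          by_cases hck : m ≤ c k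
          · rw [col_eq_of_lowEq hh hv' (hag v hv) (hji.trans hk) hck, mul_labelMat_apply hc g hi,
              hg.2 k i hk, zero_mul]
          · rw [hag v hv k j (hji.trans hk) (Or.inr (by omega)), labelMat, if_neg]
            simp only [hj]
            omega
      refine ⟨fun v => G v * (1 + colElim i j (φ i) (M v)),
        fun v => (1 + rowElim i j (φ i) (M v)) * H v, fun v => elimMat i j (φ i) (M v),
        hG.mul ((MatReg.const 1).add (hM.colElim i j (hφ i))),
        ((MatReg.const 1).add (hM.rowElim i j (hφ i))).mul hH,
        ((((MatReg.const 1).sub (hM.colElim i j (hφ i))).mul hM).mul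
          ((MatReg.const 1).sub (hM.rowElim i j (hφ i)))).lowerPart,
        fun v => (hGu v).mul (isUni_colElim _ _ _ _), fun v => (isUni_rowElim _ _ _ _).mul (hHu v),
        fun v => (hf v).trans ?_, fun v a b hab => if_neg (not_lt.mpr hab), ?_, ?_⟩
      · have := ((lowEq_elimMat i j (φ i) (M v)).mul_left (hGu v)).mul_right (hHu v)
        simpa only [Matrix.mul_assoc] using this.symm
      · intro v hv a b hab hcase
        obtain ⟨hp1, hp2⟩ := hpiv v hv
        beta_reduce
        rw [elimMat_apply (hφ i) hp1 hp2 hab]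
        have hag' := hag v hv
        have hjm : (j : ℕ) = m := rfl
        have hji : j < i := by
          have := hc.lt i (by omega)
          rw [Fin.lt_def]
          omega
        have hrow : ∀ b, b < j → M v i b = 0 := by
          intro b hb
          rw [Fin.lt_def] at hb
          rw [hag' i b (by rw [Fin.lt_def] at *; omega) (Or.inl (by omega)), labelMat, if_neg]
          omega
        rcases lt_trichotomy b j with hbj | rfl | hbj
        · rw [hrow b hbj, hag' a b hab (Or.inl hbj)]
          simp
        · simp only [lt_irrefl, false_and, if_false, sub_zero, hp1, div_mul_cancel₀ _ (hφ i)]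
          rcases lt_trichotomy a i with h | rfl | h
          · have : c a ≠ m := fun h' => h.ne (hc.inj (h'.trans hi.symm))
            simp [h, labelMat, hj, this]
          · have : labelMat c φ a j = φ a := if_pos hi
            simp [hp1, this]
          · have : c a ≠ m := fun h' => h.ne' (hc.inj (h'.trans hi.symm))
            have : labelMat c φ a j = 0 := if_neg this
            simp [hp2 a h, not_lt.mpr h.le, this]
        · have hca : c a < m + 1 := by
            rw [Fin.lt_def] at hbj
            omega
          rcases Nat.lt_succ_iff_lt_or_eq.mp hca with hlt | heq
          · have hne : a ≠ i := by rintro rfl; omega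
            have haj : M v a j = 0 := by
              rw [hag' a j (hbj.trans hab) (Or.inr hlt), labelMat, if_neg (by omega)]
            simp [haj, hne, hag' a b hab (Or.inr hlt)]
          · have : a = i := hc.inj (heq.trans hi.symm)
            subst this
            have : c a ≠ b := by rw [Fin.lt_def] at hbj; omega
            simp [hbj, labelMat, this]
      · rintro v ⟨a, ha, hva⟩
        have hV : ∃ g h, IsUni n K g ∧ IsUni n K h ∧
            LowEq (matOf n K v) (g * labelMat c φ * h) :=
          ⟨1, a, IsUni.one, ha, by simpa using hva⟩
        have hG1 := hsl v ⟨a, ha, hva⟩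
        have hMa : LowEq (M v) (labelMat c φ * (a * (H v)⁻¹)) := by
          have := ((hf v).symm.trans hva).mul_right (hHu v).inv
          rw [hG1, Matrix.one_mul, Matrix.mul_assoc (M v), (hHu v).mul_inv, Matrix.mul_one,
            Matrix.mul_assoc] at this
          exact this
        have hE : colElim i j (φ i) (M v) = 0 := by
          ext k l
          rw [colElim]
          split_ifs with hkl
          swap
          · rfl
          obtain ⟨_, hki⟩ := hkl
          have : M v k j = 0 := by
            rcases le_or_gt k j with hkj | hkj
            · exact hM0 v k j hkj
            · have hne : c k ≠ m := fun h' => hki.ne (hc.inj (h'.trans hi.symm))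
              rcases lt_or_gt_of_ne hne with hlt | hgt
              · rw [hag v hV k j hkj (Or.inr hlt), labelMat, if_neg hne]
              · rw [hMa k j hkj, labelMat_mul_eq_zero (ha.mul (hHu v).inv) hgt]
          rw [this, zero_div]
          rfl
        simp [hG1, hE]
    · refine ⟨G, H, M, hG, hH, hM, hGu, hHu, hf, hM0, fun v hv a b hab hcase => ?_, hsl⟩
      by_cases hold : (b : ℕ) < m ∨ c a < m
      · exact hag v hv a b hab hold
      push Not at hi hold
      have hca := hi a
      have hbj : b = j := Fin.ext (by simp only [hj]; omega)
      subst hbj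
      obtain ⟨g, h, hg, hh, hv'⟩ := hMV v hv
      rw [col_eq_of_lowEq hh hv' (hag v hv) hab hold.2, Matrix.mul_apply, labelMat,
        if_neg (hi a)]
      refine Finset.sum_eq_zero fun l _ => ?_
      rw [labelMat, if_neg (hi l), mul_zero]

theorem exists_factor (hc : IsLabel c) (hφ : ∀ e, φ e ≠ 0) :
    ∃ G H : (PRoot n → K) → Matrix (Fin n) (Fin n) K, MatReg G ∧ MatReg H ∧
      (∀ v, IsUni n K (G v)) ∧ (∀ v, IsUni n K (H v)) ∧
      (∀ v, (∃ g h, IsUni n K g ∧ IsUni n K h ∧ LowEq (matOf n K v) (g * labelMat c φ * h)) →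
        LowEq (matOf n K v) (G v * labelMat c φ * H v)) ∧
      ∀ v, (∃ a, IsUni n K a ∧ LowEq (matOf n K v) (labelMat c φ * a)) → G v = 1 := by
  obtain ⟨G, H, M, hG, hH, _, hGu, hHu, hf, _, hag, hsl⟩ := exists_factor_upto hc hφ n le_rfl
  refine ⟨G, H, hG, hH, hGu, hHu, fun v hv => (hf v).trans ?_, hsl⟩
  exact (LowEq.mul_left (hGu v) fun a b hab => hag v hv a b hab (Or.inl b.2)).mul_right (hHu v)

end Factorization

section SliceReduction
open MvPolynomial
variable {n : ℕ} {K : Type} [Field K] {c : Fin n → ℕ} {φ : Fin n → K}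

theorem MatReg.vecOf {σ : Type} {A : (σ → K) → Matrix (Fin n) (Fin n) K} (hA : MatReg A)
    (γ : PRoot n) : RegOn Set.univ (fun v => vecOf n K (A v) γ) := hA _ _

theorem MatReg.coadjPt {σ : Type} {A : (σ → K) → Matrix (Fin n) (Fin n) K} (hA : MatReg A)
    (g : Matrix (Fin n) (Fin n) K) (γ : PRoot n) :
    RegOn Set.univ (fun v => coadjPt n K g (_root_.vecOf n K (A v)) γ) := by
  refine MatReg.vecOf (((((MatReg.const g).mul
    (B := fun v => _root_.matOf n K (_root_.vecOf n K (A v)))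
    fun a b => ?_)).mul (MatReg.const g⁻¹)).lowerPart) γ
  by_cases h : IsPosRoot n ((a : ℕ) + 1, (b : ℕ) + 1)
  · exact (hA.vecOf ⟨_, h⟩).congr fun v _ => dif_pos h
  · exact (RegOn.const 0).congr fun v _ => dif_neg h

/-- The unitriangular matrix whose product with `labelMat c φ` has entries `p` at the free
places. -/
noncomputable def sliceMat (c : Fin n → ℕ) (φ : Fin n → K) (p : Fin n × Fin n → K) :
    Matrix (Fin n) (Fin n) K :=
  1 + Matrix.of fun k d : Fin n => ∑ e,
    if c e = (k : ℕ) ∧ (e, d) ∈ freePlaces c then p (e, d) / φ e else 0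

theorem isUni_sliceMat (p : Fin n × Fin n → K) : IsUni n K (sliceMat c φ p) := by
  refine isUni_one_add fun k d hkd => ?_
  rw [Matrix.of_apply]
  refine Finset.sum_eq_zero fun e _ => if_neg ?_
  rintro ⟨h1, ⟨_, _, h3⟩, h4⟩
  simp only at h3 h4
  rw [Fin.le_def] at hkd
  omega

theorem labelMat_mul_sliceMat (hc : IsLabel c) (hφ : ∀ e, φ e ≠ 0) (p : Fin n × Fin n → K)
    {e d : Fin n} (h : (e, d) ∈ freePlaces c) : (labelMat c φ * sliceMat c φ p) e d = p (e, d) := by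
  have h3 : c e ≤ d := h.1.2.2
  have h4 : c e ≠ d := h.2
  set k : Fin n := ⟨c e, by omega⟩ with hk
  have hek : c e = (k : ℕ) := rfl
  have hkd : k ≠ d := fun h' => h4 (by rw [← h'])
  rw [labelMat_mul_of_lt _ hek, sliceMat, Matrix.add_apply, Matrix.one_apply_ne hkd, zero_add,
    Matrix.of_apply, Finset.sum_eq_single e, if_pos ⟨hek, h⟩, mul_div_cancel₀ _ (hφ e)]
  · intro e' _ he'
    exact if_neg fun h' => he' (hc.inj (h'.1.trans hek.symm))
  · simp

theorem matReg_sliceMat (hφ : ∀ e, φ e ≠ 0) : MatReg (sliceMat (K := K) c φ) := by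
  refine (MatReg.const 1).add (B := fun p => Matrix.of fun k d : Fin n => ∑ e,
    if c e = (k : ℕ) ∧ (e, d) ∈ freePlaces c then p (e, d) / φ e else 0)
    fun k d => (RegOn.sum Finset.univ (f := fun e p => if c e = (k : ℕ) ∧ (e, d) ∈ freePlaces c then
      p (e, d) / φ e else 0) fun e _ => ?_).congr fun p _ => rfl
  exact RegOn.ite _ (fun _ => (RegOn.coord _).div (RegOn.const _) fun _ _ => hφ e)
    fun _ => RegOn.const 0

theorem coadjRel_label_iff (hc : IsLabel c) (hφ : ∀ e, φ e ≠ 0) {a b : Matrix (Fin n) (Fin n) K}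
    (ha : IsUni n K a) (hb : IsUni n K b) {y w : Fin n × Fin n → K}
    (hy : maskMat c y = maskMat c fun t => (labelMat c φ * a) t.1 t.2)
    (hw : maskMat c w = maskMat c fun t => (labelMat c φ * b) t.1 t.2) :
    CoadjRel (labelMat c φ * a) (labelMat c φ * b) ↔ BumpRel c ∅ y w := by
  rw [BumpRel, hy, hw]
  constructor
  · rintro ⟨g, hg, h⟩
    exact ⟨by simp, exists_pat_of_lowEq hc hφ ha hb hg h⟩
  · rintro ⟨-, g, hg, h⟩
    exact exists_lowEq_of_pat hc hφ ha hb hg h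

theorem maskMat_eq_label_mul {a : Matrix (Fin n) (Fin n) K} (ha : IsUni n K a)
    {y : Fin n × Fin n → K} (h1 : ∀ e d, (e, d) ∈ freePlaces c → y (e, d) = (labelMat c φ * a) e d)
    (h2 : ∀ t, t ∉ freePlaces c → y t = labelMat c φ t.1 t.2) :
    maskMat c y = maskMat c fun t => (labelMat c φ * a) t.1 t.2 := by
  ext e k
  by_cases hke : Tri c k e
  · simp only [maskMat, if_pos hke]
    by_cases hf : (e, k) ∈ freePlaces c
    · exact h1 e k hf
    · have hek : c e = k := by
        by_contra hne
        exact hf ⟨hke, hne⟩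
      rw [h2 _ hf, labelMat_mul_label ha hek]
      simp [labelMat, hek]
  · simp only [maskMat, if_neg hke]

theorem reduces_slice [Infinite K] (hc : IsLabel c) (hφ : ∀ e, φ e ≠ 0) {D : Set (ℕ × ℕ)}
    {ψ : ℕ × ℕ → K} (hD : XDphi n K D ψ = labelMat c φ)
    (hI : (vanishing (PRoot n) K (VDvar n K D ψ)).IsPrime) :
    Reduces (IrrSet.ofPrime (VDvar n K D ψ) hI)
      (fun v w => ∃ g, IsUni n K g ∧ coadjPt n K g v = w)
      (affineIrr (freePlaces c ∪ ∅) fun t => labelMat c φ t.1 t.2) (BumpRel c ∅) := by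
  obtain ⟨G, H, hG, hH, hGu, hHu, hfac, hsl⟩ := exists_factor hc hφ
  have hV : ∀ v, v ∈ VDvar n K D ψ ↔ ∃ g h, IsUni n K g ∧ IsUni n K h ∧
      LowEq (matOf n K v) (g * labelMat c φ * h) := fun v => by rw [mem_VDvar, hD]
  set A : (PRoot n → K) → Matrix (Fin n) (Fin n) K := fun v => H v * G v with hA
  have hAu : ∀ v, IsUni n K (A v) := fun v => (hHu v).mul (hGu v)
  set ρ : (PRoot n → K) → Fin n × Fin n → K := fun v t =>
    if t ∈ freePlaces c then (labelMat c φ * A v) t.1 t.2 else labelMat c φ t.1 t.2 with hρ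
  have hρm : ∀ v, maskMat c (ρ v) = maskMat c fun t => (labelMat c φ * A v) t.1 t.2 := fun v =>
    maskMat_eq_label_mul (hAu v) (fun e d h => if_pos h) fun t h => if_neg h
  have hrel : ∀ v ∈ VDvar n K D ψ, CoadjRel (matOf n K v) (labelMat c φ * A v) := by
    intro v hv
    refine CoadjRel.symm ⟨G v, hGu v, ?_⟩
    have := ((hfac v ((hV v).mp hv)).mul_right (hGu v)).symm
    simpa only [hA, Matrix.mul_assoc] using this
  set s₀ : (Fin n × Fin n → K) → PRoot n → K := fun p =>
    vecOf n K (labelMat c φ * sliceMat c φ p) with hs₀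
  have hs₀m : ∀ p, LowEq (matOf n K (s₀ p)) (labelMat c φ * sliceMat c φ p) :=
    fun p => matOf_vecOf _
  have hs₀V : ∀ p, s₀ p ∈ VDvar n K D ψ := fun p =>
    (hV _).mpr ⟨1, sliceMat c φ p, IsUni.one, isUni_sliceMat p, by simpa using hs₀m p⟩
  have hmem : ∀ p ∈ (affineIrr (freePlaces c ∪ ∅) fun t => labelMat c φ t.1 t.2).carrier,
      ∀ t, t ∉ freePlaces c → p t = labelMat c φ t.1 t.2 :=
    fun p hp t ht => hp t (by simpa using ht)
  have hρs : ∀ p ∈ (affineIrr (freePlaces c ∪ ∅) fun t => labelMat c φ t.1 t.2).carrier,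
      ρ (s₀ p) = p := by
    intro p hp
    funext t
    by_cases ht : t ∈ freePlaces c
    · have h1 := hsl (s₀ p) ⟨_, isUni_sliceMat p, hs₀m p⟩
      have h2 := (hfac (s₀ p) ((hV _).mp (hs₀V p))).symm.trans (hs₀m p)
      rw [h1, Matrix.one_mul] at h2
      simp only [hρ, if_pos ht, hA, h1, Matrix.mul_one]
      rw [h2 t.1 t.2 ht.1.1, labelMat_mul_sliceMat hc hφ p ht]
    · rw [hmem p hp t ht]
      exact if_neg ht
  have hr : ∀ v ∈ VDvar n K D ψ, ∀ w ∈ VDvar n K D ψ,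
      ((∃ g, IsUni n K g ∧ coadjPt n K g v = w) ↔ BumpRel c ∅ (ρ v) (ρ w)) := by
    intro v hv w hw
    rw [coadjRel_iff, ← coadjRel_label_iff hc hφ (hAu v) (hAu w) (hρm v) (hρm w)]
    exact ⟨fun h => (hrel v hv).symm.trans (h.trans (hrel w hw)),
      fun h => (hrel v hv).trans (h.trans (hrel w hw).symm)⟩
  have hρT : ∀ v, ρ v ∈ (affineIrr (freePlaces c ∪ ∅) fun t => labelMat c φ t.1 t.2).carrier :=
    fun v t ht => if_neg (by simpa using ht)
  have hsect : ∀ x ∈ VDvar n K D ψ, ∃ g, IsUni n K g ∧ coadjPt n K g (s₀ (ρ x)) = x := by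
    intro x hx
    rw [hr _ (hs₀V _) x hx, hρs _ (hρT x)]
    exact BumpRel.refl _ _ _
  choose! u hu hux using hsect
  refine Reduces.of_sections 1 1 ?_ ρ ?_ (fun v _ _ => ⟨hρT v, by simp⟩)
    (fun v hv _ w hw _ => hr v hv w hw) (fun x p => coadjPt n K (u x) (s₀ p))
    (fun x hx _ => ⟨fun γ => ?_, fun p hp _ => ⟨?_, by simp, ?_⟩, hux x hx⟩) ?_
  · exact ⟨s₀ 0, hs₀V 0, by simp⟩
  · intro t
    exact RegOn.ite _ (fun _ => (((MatReg.const _).mul (hH.mul hG)) _ _).mono (Set.subset_univ _))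
      fun _ => RegOn.const _
  · exact (((MatReg.const _).mul (matReg_sliceMat hφ)).coadjPt (u x) γ).mono (Set.subset_univ _)
  · exact coadjPt_mem_VDvar (hu x hx) (hs₀V p)
  · have h1 := coadjPt_mem_VDvar (hu x hx) (hs₀V p)
    have h2 := (hr _ h1 _ (hs₀V p)).mp
      ((coadjRel_iff _ _).mpr ((coadjRel_iff _ _).mp ⟨u x, hu x hx, rfl⟩).symm)
    rwa [hρs p hp] at h2
  · exact fun p hp _ => ⟨s₀ p, hs₀V p, by simp, hρs p hp⟩

theorem exists_coadjPt_poly (g : Matrix (Fin n) (Fin n) K) (f : MvPolynomial (PRoot n) K) :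
    ∃ f' : MvPolynomial (PRoot n) K, ∀ v, eval v f' = eval (coadjPt n K g v) f := by
  have hM : ∀ a b : Fin n, ∃ P : MvPolynomial (PRoot n) K, ∀ v, eval v P = matOf n K v a b := by
    intro a b
    by_cases h : IsPosRoot n ((a : ℕ) + 1, (b : ℕ) + 1)
    · exact ⟨X ⟨_, h⟩, fun v => by rw [eval_X, matOf, dif_pos h]⟩
    · exact ⟨0, fun v => by rw [map_zero, matOf, dif_neg h]⟩
  choose P hP using hM
  have hQ : ∀ γ : PRoot n, ∃ Q : MvPolynomial (PRoot n) K, ∀ v, eval v Q = coadjPt n K g v γ := by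
    intro γ
    set a : Fin n := ⟨γ.1.1 - 1, by obtain ⟨h1, h2, h3⟩ := γ.2; omega⟩
    set b : Fin n := ⟨γ.1.2 - 1, by obtain ⟨h1, h2, h3⟩ := γ.2; omega⟩
    refine ⟨if (b : ℕ) < a then ∑ l, (∑ k, C (g a k) * P k l) * C (g⁻¹ l b) else 0, fun v => ?_⟩
    change _ = lowerPart n K (g * matOf n K v * g⁻¹) a b
    by_cases hab : (b : ℕ) < a
    · simp only [lowerPart, if_pos hab, Matrix.mul_apply, map_sum, map_mul, eval_C, hP]
    · simp only [lowerPart, if_neg hab, map_zero]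
  choose Q hQ using hQ
  refine ⟨aeval Q f, fun v => ?_⟩
  rw [eval_aeval_eq]
  simp only [hQ]

theorem tendsto_coadjPt {D : Set (ℕ × ℕ)} {ψ : ℕ × ℕ → K}
    (hI : (vanishing (PRoot n) K (VDvar n K D ψ)).IsPrime) {g : Matrix (Fin n) (Fin n) K}
    (hg : IsUni n K g) : Filter.Tendsto (coadjPt n K g)
      (IrrSet.ofPrime (VDvar n K D ψ) hI).gen (IrrSet.ofPrime (VDvar n K D ψ) hI).gen := by
  rintro U ⟨h, ⟨v, hv, hv0⟩, hU⟩
  obtain ⟨h', hh'⟩ := exists_coadjPt_poly g h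
  refine ⟨h', ⟨coadjPt n K g⁻¹ v, coadjPt_mem_VDvar hg.inv hv, ?_⟩, fun w hw hw0 => ?_⟩
  · have : coadjPt n K g (coadjPt n K g⁻¹ v) = v := by
      rw [coadjPt_eq_iff hg]
      have := (((coadjPt_eq_iff hg.inv v _).mp rfl).mul_left hg).mul_right hg
      rw [← Matrix.mul_assoc, hg.mul_inv, Matrix.one_mul, Matrix.mul_assoc, Matrix.mul_assoc,
        hg.inv_mul, Matrix.mul_one] at this
      exact this.symm
    rwa [hh', this]
  · exact hU _ (coadjPt_mem_VDvar hg hw) (by rwa [← hh'])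

end SliceReduction

section DiagramRun
variable {n : ℕ} {c₀ c : Fin n → ℕ}

/-- The places that come after column `b` or lie in column `b` above row `r`. -/
def Rem (b r e k : ℕ) : Prop := b < k ∨ (k = b ∧ e < r)

/-- The places left unmarked because of the still unprocessed entries of the labelling `c₀`. -/
def ExtPlace (c₀ : Fin n → ℕ) (b r : ℕ) (e k : Fin n) : Prop :=
  c₀ e = k ∨ (∃ i, e < i ∧ c₀ i = k ∧ Rem b r i k ∧ (k : ℕ) ≤ c₀ e) ∨
    (c₀ e < k ∧ Rem b r e (c₀ e) ∧ c₀ e ≤ c₀ k)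

/-- The root with zero-based row `e` and column `k`. -/
def rootAt (e k : Fin n) : ℕ × ℕ := ((e : ℕ) + 1, (k : ℕ) + 1)

/-- The relation between a marking state and the labelling `c` obtained from `c₀` by bumping, when
the places outside `Rem b r` have been processed. -/
structure RunInv (c₀ c : Fin n → ℕ) (s : MState) (b r : ℕ) : Prop where
  inj : Function.Injective c
  unmarked : ∀ e k : Fin n, k < e → Rem b r e k →
    (s (rootAt e k) = none ↔ Tri c k e ∨ ExtPlace c₀ b r e k)
  tri : ∀ e k : Fin n, Tri c k e → Rem b r e k
  label : ∀ a : Fin n, Rem b r a (c₀ a) → c a = c₀ a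
  label' : ∀ a : Fin n, ¬ Rem b r a (c₀ a) → ∃ a' : Fin n, ¬ Rem b r a' (c₀ a') ∧ c a = c₀ a'

theorem RunInv.congr {s : MState} {b r b' r' : ℕ} (hc₀ : IsLabel c₀) (h : RunInv c₀ c s b r)
    (hb : b < n) (hb' : b' < n)
    (hR : ∀ e k : Fin n, k < e → (Rem b r e k ↔ Rem b' r' e k)) : RunInv c₀ c s b' r' := by
  have hlab : ∀ a : Fin n, Rem b r a (c₀ a) ↔ Rem b' r' a (c₀ a) := by
    intro a
    by_cases ha : c₀ a < n
    · exact hR a ⟨c₀ a, ha⟩ (hc₀.lt a ha)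
    · exact iff_of_true (Or.inl (by omega)) (Or.inl (by omega))
  have hext : ∀ e k : Fin n, k < e → (ExtPlace c₀ b r e k ↔ ExtPlace c₀ b' r' e k) := by
    intro e k hke
    unfold ExtPlace
    rw [hlab e]
    refine or_congr_right (or_congr_left (exists_congr fun i => and_congr_right fun hi => ?_))
    rw [hR i k (hke.trans hi)]
  refine ⟨h.inj, fun e k hke hr => ?_, fun e k ht => ?_, fun a ha => ?_, fun a ha => ?_⟩
  · rw [h.unmarked e k hke ((hR e k hke).mpr hr), hext e k hke]
  · exact (hR e k ht.1).mp (h.tri e k ht)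
  · exact h.label a ((hlab a).mpr ha)
  · obtain ⟨a', h1, h2⟩ := h.label' a (mt (hlab a).mp ha)
    exact ⟨a', mt (hlab a').mpr h1, h2⟩

theorem markStep_rootAt (s : MState) (e b e' k' : Fin n) :
    markStep s (rootAt e b) (rootAt e' k') = none ↔ s (rootAt e' k') = none ∧
      ¬ (e' = e ∧ k' = b) ∧ ¬ (k' = b ∧ b < e' ∧ e' < e ∧ s (rootAt e e') = none) ∧
      ¬ (e' = e ∧ b < k' ∧ k' < e ∧ s (rootAt k' b) = none) := by
  have hinj : ∀ a b a' b' : Fin n, rootAt a b = rootAt a' b' ↔ a = a' ∧ b = b' := by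
    intro a b a' b'
    simp [rootAt, Fin.ext_iff]
  have h2 : (rootAt e' k').2 = (rootAt e b).2 ↔ k' = b := by simp [rootAt, Fin.ext_iff]
  have h1 : (rootAt e' k').1 = (rootAt e b).1 ↔ e' = e := by simp [rootAt, Fin.ext_iff]
  have h3 : (rootAt e b).2 < (rootAt e' k').1 ↔ b < e' := by simp [rootAt]
  have h4 : (rootAt e' k').1 < (rootAt e b).1 ↔ e' < e := by simp [rootAt]
  have h5 : (rootAt e b).2 < (rootAt e' k').2 ↔ b < k' := by simp [rootAt]
  have h6 : (rootAt e' k').2 < (rootAt e b).1 ↔ k' < e := by simp [rootAt]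
  have h7 : ((rootAt e b).1, (rootAt e' k').1) = rootAt e e' := rfl
  have h8 : ((rootAt e' k').2, (rootAt e b).2) = rootAt k' b := rfl
  simp only [markStep, hinj, h1, h2, h3, h4, h5, h6, h7, h8]
  split_ifs with g1 g2 g3
  · simp [g1]
  · simp [g2]
  · simp [g3]
  · exact ⟨fun h => ⟨h, g1, fun hh => g2 ⟨hh.1, hh.2.1, hh.2.2.1, h, hh.2.2.2⟩,
      fun hh => g3 ⟨hh.1, hh.2.1, hh.2.2.1, h, hh.2.2.2⟩⟩, fun h => h.1⟩

namespace RunInv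
variable {s : MState} {e b : Fin n}

theorem ext_self : ExtPlace c₀ b (e + 1) e b ↔ c₀ e = b := by
  unfold ExtPlace Rem
  constructor
  · rintro (h | ⟨i, h1, _, h2, _⟩ | ⟨h1, h2, _⟩)
    · exact h
    · rw [Fin.lt_def] at h1; omega
    · omega
  · exact Or.inl

theorem unmarked_self (h : RunInv c₀ c s b (e + 1)) (hbe : b < e) :
    s (rootAt e b) = none ↔ Tri c b e ∨ c₀ e = b := by
  rw [h.unmarked e b hbe (Or.inr ⟨rfl, by omega⟩), ext_self]

theorem isBump (h : RunInv c₀ c s b (e + 1)) (ht : Tri c b e) : IsBump c b e where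
  inj := h.inj
  tri := ht
  min := fun k e' ht' => by
    rcases h.tri e' k ht' with h1 | h1
    · exact le_of_lt h1
    · exact h1.1.ge
  max := fun e' ht' => by
    rcases h.tri e' b ht' with h1 | h1
    · exact absurd h1 (lt_irrefl _)
    · omega

theorem label_lt (hc₀ : IsLabel c₀) (h : RunInv c₀ c s b (e + 1)) (he : c₀ e = b) {a : Fin n}
    (ha : ¬ Rem b (e + 1) a (c₀ a)) : c a < b := by
  obtain ⟨a', h1, h2⟩ := h.label' a ha
  unfold Rem at h1
  rcases Nat.lt_or_ge (c₀ a') b with h3 | h3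
  · omega
  · have : a' = e := hc₀.inj (by omega)
    subst this
    omega

theorem lab_iff (a : Fin n) : Rem b e a (c₀ a) ↔ Rem b (e + 1) a (c₀ a) ∧ ¬ (a = e ∧ c₀ e = b) := by
  unfold Rem
  rcases eq_or_ne a e with rfl | h
  · simp only [true_and]
    omega
  · have := Fin.val_ne_of_ne h
    simp only [h, false_and, not_false_eq_true, and_true]
    omega

theorem extPlace_iff (he : c₀ e ≠ b) (e' k : Fin n) :
    ExtPlace c₀ b e e' k ↔ ExtPlace c₀ b (e + 1) e' k := by
  have hlab : ∀ a : Fin n, Rem b e a (c₀ a) ↔ Rem b (e + 1) a (c₀ a) := by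
    intro a
    simp [lab_iff, he]
  unfold ExtPlace
  rw [hlab e']
  refine or_congr_right (or_congr_left (exists_congr fun i => and_congr_right fun hi =>
    and_congr_right fun hik => ?_))
  rw [← hik, hlab i]

theorem rem_of_ne {e' k : Fin n} (h : Rem b (e + 1) e' k) (h2 : ¬ (e' = e ∧ k = b)) :
    Rem b e e' k := by
  rw [Fin.ext_iff, Fin.ext_iff] at h2
  unfold Rem at *
  omega

theorem skip (h : RunInv c₀ c s b (e + 1)) (ht : ¬ Tri c b e)
    (he : c₀ e ≠ b) : RunInv c₀ c s b e := by
  have hlab : ∀ a : Fin n, Rem b e a (c₀ a) ↔ Rem b (e + 1) a (c₀ a) := by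
    intro a
    simp [lab_iff, he]
  refine ⟨h.inj, fun e' k hke hr => ?_, fun e' k ht' => ?_, fun a ha => ?_, fun a ha => ?_⟩
  · rw [h.unmarked e' k hke (by unfold Rem at *; omega), extPlace_iff he]
  · exact rem_of_ne (h.tri e' k ht') (by rintro ⟨rfl, rfl⟩; exact ht ht')
  · exact h.label a ((hlab a).mp ha)
  · obtain ⟨a', h1, h2⟩ := h.label' a (mt (hlab a).mpr ha)
    exact ⟨a', mt (hlab a').mp h1, h2⟩

theorem unmarked_of_ne (h : RunInv c₀ c s b (e + 1)) (hb : Tri c b e) (he : c₀ e ≠ b)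
    {e' k' : Fin n} (hke : k' < e') (hr : Rem b e e' k') :
    markStep s (rootAt e b) (rootAt e' k') = none ↔
      (Tri c k' e' ∧ ¬ (k' = b ∧ c e' ≤ c e) ∧ ¬ (e' = e ∧ Tri c b k')) ∨
        ExtPlace c₀ b e e' k' := by
  obtain ⟨hb1, hb2, hb3⟩ := hb
  have hPe : ¬ Rem b (e + 1) e (c₀ e) := by
    intro hh
    have := h.label e hh
    unfold Rem at hh
    omega
  have hExt : ∀ k : Fin n, b < k → ¬ ExtPlace c₀ b (e + 1) e k := by
    intro k hk
    rw [Fin.lt_def] at hk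
    unfold Rem at hPe
    rintro (h1 | ⟨i, _, _, _, h1⟩ | ⟨_, h1, _⟩)
    · omega
    · omega
    · exact hPe h1
  have hExt' : ∀ k : Fin n, k < e → ExtPlace c₀ b (e + 1) k b → c e ≤ c k := by
    intro k hk h1
    rw [Fin.lt_def] at hk
    have h2 : (b : ℕ) ≤ c₀ k := by
      rcases h1 with h1 | ⟨i, _, _, _, h1⟩ | ⟨h0, h1, _⟩
      · omega
      · exact h1
      · unfold Rem at h1
        omega
    have h3 := h.label k (by unfold Rem; omega)
    omega
  have hr' : Rem b (e + 1) e' k' := by unfold Rem at *; omega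
  rw [markStep_rootAt, h.unmarked e' k' hke hr', extPlace_iff he]
  rcases eq_or_ne k' b with rfl | hk
  · have he' : e' < e := by
      rw [Fin.lt_def]
      unfold Rem at hr
      omega
    have hne := he'.ne
    have hinj : c e' ≠ c e := fun hh => hne (h.inj hh)
    have hT : s (rootAt e e') = none ↔ c e' < c e := by
      rw [h.unmarked e e' he' (Or.inl hke)]
      simp only [hExt e' hke, or_false]
      unfold Tri
      rw [Fin.lt_def] at hke he'
      omega
    have := hExt' e' he'
    simp only [hne, hT, he', hke, false_and, not_false_eq_true, true_and, lt_irrefl, and_true]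
    constructor
    · rintro ⟨h1 | h1, h2⟩
      · exact Or.inl ⟨h1, by omega⟩
      · exact Or.inr h1
    · rintro (⟨h1, h2⟩ | h1)
      · exact ⟨Or.inl h1, by omega⟩
      · have := this h1
        exact ⟨Or.inr h1, by omega⟩
  · have hbk : b < k' := by
      rw [Fin.lt_def]
      have := Fin.val_ne_of_ne hk
      unfold Rem at hr
      omega
    rcases eq_or_ne e' e with rfl | hee
    · have h1 := h.unmarked k' b hbk (Or.inr ⟨rfl, by rw [Fin.lt_def] at hke; omega⟩)
      have h2 := hExt k' hbk
      have h3 := hExt' k' hke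
      have h4 : Tri c k' e' → ¬ ExtPlace c₀ b (e' + 1) k' b := fun h5 h6 => by
        have := h3 h6
        unfold Tri at h5
        omega
      simp only [hk, hbk, hke, h1, h2, and_false, not_false_eq_true, false_and, true_and, or_false,
        not_or]
      exact ⟨fun h5 => ⟨h5.1, h5.2.1⟩, fun h5 => ⟨h5.1, h5.2, h4 h5.1⟩⟩
    · simp only [hk, hee, and_false, not_false_eq_true, false_and, and_true]

theorem unmarked_of_eq (hc₀ : IsLabel c₀) (h : RunInv c₀ c s b (e + 1)) (hbe : b < e)
    (he : c₀ e = b) {e' k' : Fin n} (hke : k' < e') (hr : Rem b e e' k') :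
    markStep s (rootAt e b) (rootAt e' k') = none ↔
      (Tri c k' e' ∧ ¬ (k' = b ∧ c e' ≤ c e) ∧ ¬ (e' = e ∧ Tri c b k')) ∨
        ExtPlace c₀ b e e' k' := by
  have hce : c e = b := by rw [h.label e (Or.inr ⟨he, by omega⟩), he]
  have hrow : ∀ k : Fin n, b < k → k < e → (Tri c k e ↔ c₀ k < b) := by
    intro k hk hke
    have hne : c₀ k ≠ b := fun hh => hke.ne (hc₀.inj (hh.trans he.symm))
    have h1 := h.label k
    have h2 : ¬ Rem b (e + 1) k (c₀ k) → c k < b := h.label_lt hc₀ he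
    rw [Fin.lt_def] at hk hke
    unfold Tri
    unfold Rem at h1 h2
    omega
  have hnone : ∀ k : Fin n, b < k → k < e → s (rootAt e k) = none := by
    intro k hk hke
    rw [h.unmarked e k hke (Or.inl hk), hrow k hk hke]
    rcases Nat.lt_or_ge (c₀ k) b with h1 | h1
    · exact Or.inl h1
    · refine Or.inr (Or.inr (Or.inr ⟨?_, Or.inr ⟨he, by omega⟩, by omega⟩))
      rw [he]
      exact hk
  have hr' : Rem b (e + 1) e' k' := by unfold Rem at *; omega
  rw [markStep_rootAt]
  rcases eq_or_ne k' b with rfl | hk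
  · have he' : e' < e := by
      rw [Fin.lt_def]
      unfold Rem at hr
      omega
    refine iff_of_false (fun hh => hh.2.2.1 ⟨rfl, hke, he', hnone e' hke he'⟩) ?_
    rintro (⟨h1, h2, -⟩ | h1)
    · exact h2 ⟨rfl, hce ▸ h1.2.2⟩
    · rcases h1 with h1 | ⟨i, h0, h1, h2, _⟩ | ⟨h0, h1, _⟩
      · exact he'.ne (hc₀.inj (h1.trans he.symm))
      · have : i = e := hc₀.inj (h1.trans he.symm)
        subst this
        unfold Rem at h2
        omega
      · unfold Rem at h1
        omega
  · have hbk : b < k' := by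
      rw [Fin.lt_def]
      have := Fin.val_ne_of_ne hk
      unfold Rem at hr
      omega
    rcases eq_or_ne e' e with rfl | hee
    · have h1 := h.unmarked k' b hbk (Or.inr ⟨rfl, by rw [Fin.lt_def] at hke; omega⟩)
      have hne : c₀ k' ≠ b := fun hh => hke.ne (hc₀.inj (hh.trans he.symm))
      have h2 : ExtPlace c₀ b (e' + 1) k' b ↔ ¬ c₀ k' < b := by
        constructor
        · rintro (h1 | ⟨i, _, _, _, h1⟩ | ⟨h0, h1, _⟩)
          · omega
          · omega
          · unfold Rem at h1
            omega
        · intro h1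
          exact Or.inr (Or.inl ⟨e', hke, he, Or.inr ⟨rfl, by omega⟩, by omega⟩)
      have h3 : ¬ ExtPlace c₀ b e' e' k' := by
        rw [Fin.lt_def] at hbk
        rintro (h1 | ⟨i, _, _, _, h1⟩ | ⟨h0, h1, _⟩)
        · omega
        · omega
        · unfold Rem at h1
          omega
      simp only [hk, hbk, hke, h1, h2, h3, hrow k' hbk hke, hnone k' hbk hke,
        and_false, not_false_eq_true, false_and, true_and, or_false, not_or, not_not]
      exact and_comm
    · have h1 : ExtPlace c₀ b e e' k' ↔ ExtPlace c₀ b (e + 1) e' k' := by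
        unfold ExtPlace
        rw [lab_iff e']
        simp only [hee, false_and, not_false_eq_true, and_true]
        refine or_congr_right (or_congr_left (exists_congr fun i => and_congr_right fun hi =>
          and_congr_right fun hik => ?_))
        rw [← hik, lab_iff i]
        have : ¬ (i = e ∧ c₀ e = b) := by
          rintro ⟨rfl, h2⟩
          exact hk (Fin.ext (hik.symm.trans h2))
        simp [this]
      rw [h.unmarked e' k' hke hr', h1]
      simp only [hk, hee, and_false, not_false_eq_true, false_and, and_true]

theorem step (hc₀ : IsLabel c₀) (h : RunInv c₀ c s b (e + 1)) (hbe : b < e)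
    (hs : Tri c b e ∨ c₀ e = b) {c' : Fin n → ℕ} (hinj : Function.Injective c')
    (htri : ∀ k e', Tri c' k e' ↔
      Tri c k e' ∧ ¬ (k = b ∧ c e' ≤ c e) ∧ ¬ (e' = e ∧ Tri c b k))
    (hl : ∀ a : Fin n, Rem b e a (c₀ a) → c' a = c a)
    (hl' : ∀ a : Fin n, ¬ Rem b e a (c₀ a) → ∃ a' : Fin n, ¬ Rem b e a' (c₀ a') ∧ c' a = c a') :
    RunInv c₀ c' (markStep s (rootAt e b)) b e := by
  refine ⟨hinj, fun e' k hke hr => ?_, fun e' k ht => ?_, fun a ha => ?_, fun a ha => ?_⟩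
  · rw [htri]
    by_cases he : c₀ e = b
    · exact h.unmarked_of_eq hc₀ hbe he hke hr
    · exact h.unmarked_of_ne (hs.resolve_right he) he hke hr
  · rw [htri] at ht
    refine rem_of_ne (h.tri e' k ht.1) ?_
    rintro ⟨rfl, rfl⟩
    exact ht.2.1 ⟨rfl, le_rfl⟩
  · rw [hl a ha]
    exact h.label a ((lab_iff a).mp ha).1
  · obtain ⟨a', h1, h2⟩ := hl' a ha
    rw [h2]
    by_cases h3 : Rem b (e + 1) a' (c₀ a')
    · exact ⟨a', h1, h.label a' h3⟩
    · obtain ⟨a'', h4, h5⟩ := h.label' a' h3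
      exact ⟨a'', fun hh => h4 ((lab_iff a'').mp hh).1, h5⟩

theorem bump (hc₀ : IsLabel c₀) (h : RunInv c₀ c s b (e + 1)) (ht : Tri c b e) :
    RunInv c₀ (bumpLabel c b e) (markStep s (rootAt e b)) b e := by
  have hb : ¬ Rem b e b (c₀ b) := by
    intro hh
    have h1 := h.label b ((lab_iff b).mp hh).1
    unfold Tri at ht
    unfold Rem at hh
    omega
  have he : ¬ Rem b e e (c₀ e) := by
    intro hh
    have h1 := h.label e ((lab_iff e).mp hh).1
    unfold Tri at ht
    unfold Rem at hh
    omega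
  refine h.step hc₀ ht.1 (Or.inl ht) (bumpLabel_injective h.inj b e)
    (fun k e' => (h.isBump ht).tri_iff k e') (fun a ha => ?_) (fun a ha => ?_)
  · exact bumpLabel_of_ne c (by rintro rfl; exact hb ha) (by rintro rfl; exact he ha)
  · rcases eq_or_ne a b with rfl | h1
    · exact ⟨e, he, bumpLabel_left c a e⟩
    · rcases eq_or_ne a e with rfl | h2
      · exact ⟨b, hb, bumpLabel_right c b a⟩
      · exact ⟨a, ha, bumpLabel_of_ne c h1 h2⟩

theorem mark_of_not_tri (hc₀ : IsLabel c₀) (h : RunInv c₀ c s b (e + 1)) (hbe : b < e)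
    (ht : ¬ Tri c b e) (he : c₀ e = b) : RunInv c₀ c (markStep s (rootAt e b)) b e := by
  have hce : c e = b := by rw [h.label e (Or.inr ⟨he, by omega⟩), he]
  have hb : ∀ k, ¬ Tri c b k := by
    intro k hk
    unfold Tri at *
    rw [Fin.lt_def] at hbe
    omega
  refine h.step hc₀ hbe (Or.inr he) h.inj (fun k e' => ?_) (fun a _ => rfl)
    (fun a ha => ⟨a, ha, rfl⟩)
  refine ⟨fun h1 => ⟨h1, ?_, fun h2 => hb k h2.2⟩, fun h1 => h1.1⟩
  rintro ⟨rfl, -⟩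
  exact hb e' h1

end RunInv
end DiagramRun

section DiagramChain
variable {n : ℕ} {c₀ : Fin n → ℕ}

/-- The order in which the positive roots are processed. -/
def RootGT (γ δ : ℕ × ℕ) : Prop := γ.2 < δ.2 ∨ (γ.2 = δ.2 ∧ δ.1 < γ.1)

theorem rootAt_inj {e k e' k' : Fin n} : rootAt e k = rootAt e' k' ↔ e = e' ∧ k = k' := by
  simp [rootAt, Fin.ext_iff]

theorem IsPosRoot.exists_rootAt {γ : ℕ × ℕ} (h : IsPosRoot n γ) :
    ∃ e k : Fin n, k < e ∧ γ = rootAt e k := by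
  obtain ⟨h1, h2, h3⟩ := h
  refine ⟨⟨γ.1 - 1, by omega⟩, ⟨γ.2 - 1, by omega⟩, ?_, ?_⟩
  · rw [Fin.lt_def]
    dsimp only
    omega
  · ext <;> dsimp only [rootAt] <;> omega

theorem isPosRoot_rootAt {e k : Fin n} : IsPosRoot n (rootAt e k) ↔ k < e := by
  rw [Fin.lt_def]
  unfold IsPosRoot rootAt
  omega

theorem exists_bumpChain (hc₀ : IsLabel c₀) (l : List (ℕ × ℕ)) :
    ∀ (c : Fin n → ℕ) (s : MState) (b r : ℕ), b < n → (∀ γ ∈ l, IsPosRoot n γ) →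
      l.Pairwise RootGT → (∀ e k : Fin n, k < e → (rootAt e k ∈ l ↔ Rem b r e k)) →
      RunInv c₀ c s b r → ∃ L, BumpChain c L ∧ ∀ e k : Fin n, c₀ e ≠ k →
        ((e, k) ∈ L ↔ rootAt e k ∈ (diagRun s l).map Prod.fst) := by
  induction l with
  | nil =>
    intro c s b r _ _ _ hmem h
    refine ⟨[], .nil fun k e ht => ?_, fun e k _ => by simp [diagRun]⟩
    simpa using (hmem e k ht.1).mpr (h.tri e k ht)
  | cons ξ l ih =>
    intro c s b r hb hpos hpw hmem h
    obtain ⟨e, d, hde, rfl⟩ := (hpos ξ List.mem_cons_self).exists_rootAt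
    rw [List.pairwise_cons] at hpw
    have hcur : Rem b r e d := (hmem e d hde).mp List.mem_cons_self
    have h' : RunInv c₀ c s d (e + 1) := by
      refine h.congr hc₀ hb d.2 fun e' k hk => ⟨fun hr => ?_, fun hr => ?_⟩
      · rcases List.mem_cons.mp ((hmem e' k hk).mpr hr) with h1 | h1
        · obtain ⟨rfl, rfl⟩ := rootAt_inj.mp h1
          exact Or.inr ⟨rfl, by omega⟩
        · have h2 := hpw.1 _ h1
          unfold RootGT rootAt at h2
          unfold Rem
          dsimp only at h2
          omega
      · unfold Rem at *
        omega
    have hmem' : ∀ e' k : Fin n, k < e' → (rootAt e' k ∈ l ↔ Rem d e e' k) := by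
      intro e' k hk
      refine ⟨fun h1 => ?_, fun hr => ?_⟩
      · have h2 := hpw.1 _ h1
        unfold RootGT rootAt at h2
        unfold Rem
        dsimp only at h2
        omega
      · have h2 : Rem b r e' k := by unfold Rem at *; omega
        refine (List.mem_cons.mp ((hmem e' k hk).mpr h2)).resolve_left fun h3 => ?_
        obtain ⟨rfl, rfl⟩ := rootAt_inj.mp h3
        unfold Rem at hr
        omega
    have next := fun c s => ih c s d e d.2 (fun γ hγ => hpos γ (List.mem_cons_of_mem _ hγ)) hpw.2
      hmem'
    have hself := h'.unmarked_self hde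
    by_cases ht : Tri c d e
    · obtain ⟨L, hL, hL'⟩ := next _ _ (h'.bump hc₀ ht)
      refine ⟨(e, d) :: L, .cons (h'.isBump ht) hL, fun e' k hk => ?_⟩
      rw [diagRun, if_pos (hself.mpr (Or.inl ht)), List.map_cons, List.mem_cons, List.mem_cons,
        hL' e' k hk, rootAt_inj, Prod.mk.injEq]
    · by_cases he : c₀ e = d
      · obtain ⟨L, hL, hL'⟩ := next _ _ (h'.mark_of_not_tri hc₀ hde ht he)
        refine ⟨L, hL, fun e' k hk => ?_⟩
        rw [diagRun, if_pos (hself.mpr (Or.inr he)), List.map_cons, List.mem_cons, hL' e' k hk,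
          rootAt_inj]
        refine (or_iff_right ?_).symm
        rintro ⟨rfl, rfl⟩
        exact hk he
      · obtain ⟨L, hL, hL'⟩ := next _ _ (h'.skip ht he)
        refine ⟨L, hL, fun e' k hk => ?_⟩
        rw [diagRun, if_neg (fun hh => (hself.mp hh).elim ht he), hL' e' k hk]

theorem mem_rootList {γ : ℕ × ℕ} : γ ∈ rootList n ↔ IsPosRoot n γ := by
  obtain ⟨i, j⟩ := γ
  simp only [rootList, List.mem_flatMap, List.mem_filterMap, List.mem_range, IsPosRoot,
    Option.ite_none_right_eq_some, Option.some.injEq, Prod.mk.injEq]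
  constructor
  · rintro ⟨j0, h1, k, h2, h3, h4, h5⟩
    omega
  · rintro ⟨h1, h2, h3⟩
    exact ⟨j - 1, by omega, n - i, by omega, by omega, by omega, by omega⟩

theorem pairwise_rootList : (rootList n).Pairwise RootGT := by
  rw [rootList, List.pairwise_flatMap]
  refine ⟨fun j _ => ?_, ?_⟩
  · rw [List.pairwise_filterMap]
    refine List.pairwise_lt_range.imp_of_mem fun {k k'} hk hk' hlt γ hγ δ hδ => ?_
    simp only [Option.ite_none_right_eq_some, Option.some.injEq] at hγ hδ
    obtain ⟨h1, rfl⟩ := hγ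
    obtain ⟨h2, rfl⟩ := hδ
    unfold RootGT
    dsimp only
    omega
  · refine List.pairwise_lt_range.imp fun {j j'} hlt γ hγ δ hδ => ?_
    simp only [List.mem_filterMap, Option.ite_none_right_eq_some, Option.some.injEq] at hγ hδ
    obtain ⟨k, _, h1, rfl⟩ := hγ
    obtain ⟨k', _, h2, rfl⟩ := hδ
    unfold RootGT
    dsimp only
    omega

theorem mem_of_mem_diagRun {l : List (ℕ × ℕ)} {s : MState} {γ : ℕ × ℕ}
    (h : γ ∈ (diagRun s l).map Prod.fst) : γ ∈ l := by
  induction l generalizing s with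
  | nil => simp [diagRun] at h
  | cons ξ l ih =>
    rw [diagRun] at h
    split_ifs at h
    · rw [List.map_cons, List.mem_cons] at h
      exact List.mem_cons.mpr (h.imp_right ih)
    · exact List.mem_cons_of_mem _ (ih h)

theorem initMark_rootAt {D : Set (ℕ × ℕ)}
    (hlab : ∀ e k : Fin n, rootAt e k ∈ D ↔ c₀ e = k) {e k : Fin n} (hke : k < e) :
    initMark n D (rootAt e k) = none ↔
      c₀ e = k ∨ c₀ e < k ∨ ∃ i, e < i ∧ c₀ i = k := by
  have hsing : IsSingular n D (rootAt e k) ↔ c₀ e < k ∨ ∃ i, e < i ∧ c₀ i = k := by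
    constructor
    · rintro ⟨-, β, γ, hβ, ⟨h1, rfl⟩ | ⟨h1, rfl⟩, hγ⟩
      · obtain ⟨a, m, hma, rfl⟩ := hβ.exists_rootAt
        have h2 := (hlab e m).mp hγ
        simp only [rootAt, Fin.lt_def] at h1 hma
        exact Or.inl (by omega)
      · obtain ⟨i, m, hmi, rfl⟩ := hβ.exists_rootAt
        have h2 := (hlab i k).mp hγ
        simp only [rootAt, Fin.lt_def] at h1 hmi
        exact Or.inr ⟨i, by rw [Fin.lt_def]; omega, h2⟩
    · refine fun h => ⟨isPosRoot_rootAt.mpr hke, ?_⟩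
      rcases h with h | ⟨i, h1, h2⟩
      · let m : Fin n := ⟨c₀ e, h.trans k.2⟩
        exact ⟨rootAt k m, rootAt e m, isPosRoot_rootAt.mpr h, Or.inl ⟨rfl, rfl⟩,
          (hlab e m).mpr rfl⟩
      · exact ⟨rootAt i e, rootAt i k, isPosRoot_rootAt.mpr h1, Or.inr ⟨rfl, rfl⟩,
          (hlab i k).mpr h2⟩
  have hpos : IsPosRoot n (rootAt e k) := isPosRoot_rootAt.mpr hke
  rw [← hsing, ← hlab]
  simp only [initMark, MD, Set.mem_ofPred_eq, hpos, true_and, ite_eq_right_iff, reduceCtorEq,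
    imp_false]
  tauto

theorem runInv_initMark {D : Set (ℕ × ℕ)} (hc₀ : IsLabel c₀)
    (hlab : ∀ e k : Fin n, rootAt e k ∈ D ↔ c₀ e = k) :
    RunInv c₀ c₀ (initMark n D) 0 n := by
  have hrem : ∀ (e : Fin n) (k : ℕ), Rem 0 n e k := by
    intro e k
    unfold Rem
    omega
  refine ⟨hc₀.inj, fun e k hke _ => ?_, fun e k _ => hrem e k, fun a _ => rfl,
    fun a ha => absurd (hrem a _) ha⟩
  rw [initMark_rootAt hlab hke, ExtPlace, Tri]
  rw [Fin.lt_def] at hke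
  simp only [hrem, true_and]
  constructor
  · rintro (h | h | ⟨i, h1, h2⟩)
    · exact Or.inr (Or.inl h)
    · omega
    · rcases Nat.lt_or_ge (c₀ e) k with h3 | h3
      · omega
      · exact Or.inr (Or.inr (Or.inl ⟨i, h1, h2, h3⟩))
  · rintro (h | h | ⟨i, h1, h2, _⟩ | h)
    · omega
    · exact Or.inl h
    · exact Or.inr (Or.inr ⟨i, h1, h2⟩)
    · exact Or.inr (Or.inl h.1)

theorem exists_label {D : Set (ℕ × ℕ)} (hD : IsBasic n D) :
    ∃ c : Fin n → ℕ, IsLabel c ∧ ∀ e k : Fin n, rootAt e k ∈ D ↔ c e = k := by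
  obtain ⟨hpos, hrow, hcol⟩ := hD
  have hex : ∀ e : Fin n, ∃ m : ℕ, (∃ k : Fin n, m = k ∧ rootAt e k ∈ D) ∨
      (m = n + e ∧ ∀ k : Fin n, rootAt e k ∉ D) := by
    intro e
    by_cases h : ∃ k : Fin n, rootAt e k ∈ D
    · obtain ⟨k, hk⟩ := h
      exact ⟨k, Or.inl ⟨k, rfl, hk⟩⟩
    · exact ⟨n + e, Or.inr ⟨rfl, not_exists.mp h⟩⟩
  choose c hc using hex
  have hlab : ∀ e k : Fin n, rootAt e k ∈ D ↔ c e = k := by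
    intro e k
    rcases hc e with ⟨k', h1, h2⟩ | ⟨h1, h2⟩
    · rw [h1]
      refine ⟨fun h => ?_, fun h => ?_⟩
      · rw [(rootAt_inj.mp (hrow _ h _ h2 rfl)).2]
      · rwa [← Fin.ext h]
    · exact iff_of_false (h2 k) (by omega)
  refine ⟨c, ⟨fun e e' h => ?_, fun e h => ?_⟩, hlab⟩
  · rcases hc e with ⟨k, h1, h2⟩ | ⟨h1, _⟩
    · have h3 := (hlab e' k).mpr (by omega)
      exact (rootAt_inj.mp (hcol _ h2 _ h3 rfl)).1
    · rcases hc e' with ⟨k, h3, _⟩ | ⟨h3, _⟩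
      · omega
      · exact Fin.ext (by omega)
  · exact isPosRoot_rootAt.mp (hpos _ ((hlab e ⟨c e, h⟩).mpr rfl))

end DiagramChain

/-- the field of invariants `K(V_{D,φ})^N` of the coadjoint
action of `N = UT(n,K)` on the basic variety `V_{D,φ}` is a purely
transcendental extension of `K` of transcendence degree `|C(D)| − |D|`:
there is a family `{F_ξ : ξ ∈ C(D) ∖ D}` of invariants, algebraically
independent over `K`, whose `K`-extension inside `K(V_{D,φ})` is exactly the
field of invariants. -/
theorem stmt15 (n : ℕ) (hn : 2 ≤ n) (K : Type) [Field K] [CharZero K]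
    (D : Set (ℕ × ℕ)) (hD : IsBasic n D)
    (φ : ℕ × ℕ → K) (hφ : ∀ γ ∈ D, φ γ ≠ 0)
    [hI : (vanishing (PRoot n) K (VDvar n K D φ)).IsPrime] :
    ∃ F : {γ : ℕ × ℕ // γ ∈ CD n D ∧ γ ∉ D} → RatFld n K (VDvar n K D φ),
      (∀ ξ, IsInvariantRat n K (VDvar n K D φ) (F ξ)) ∧
      AlgebraicIndependent K F ∧
      (∀ G ∈ IntermediateField.adjoin K (Set.range F),
        IsInvariantRat n K (VDvar n K D φ) G) ∧
      (∀ G, IsInvariantRat n K (VDvar n K D φ) G →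
        G ∈ IntermediateField.adjoin K (Set.range F)) := by
  have : Infinite K := CharZero.infinite K
  obtain ⟨c, hc, hlab⟩ := exists_label hD
  let ψ : Fin n → K := fun e => if φ (e + 1, c e + 1) = 0 then 1 else φ (e + 1, c e + 1)
  have hψ : ∀ e, ψ e ≠ 0 := by
    intro e
    dsimp only [ψ]
    split_ifs with h
    · exact one_ne_zero
    · exact h
  have hX : XDphi n K D φ = labelMat c ψ := by
    ext e k
    have h1 := hlab e k
    by_cases h2 : c e = k
    · have h3 : φ (e + 1, k + 1) ≠ 0 := hφ _ (h1.mpr h2)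
      have h4 : ((e : ℕ) + 1, (k : ℕ) + 1) ∈ D := h1.mpr h2
      simp [XDphi, labelMat, h4, ψ, h2, h3]
    · have h4 : ((e : ℕ) + 1, (k : ℕ) + 1) ∉ D := fun hh => h2 (h1.mp hh)
      simp [XDphi, labelMat, h4, h2]
  obtain ⟨L, hL, hL'⟩ := exists_bumpChain hc (rootList n) c (initMark n D) 0 n (by omega)
    (fun γ hγ => mem_rootList.mp hγ) pairwise_rootList
    (fun e k hke => iff_of_true (mem_rootList.mpr (isPosRoot_rootAt.mpr hke))
      (by unfold Rem; omega)) (runInv_initMark hc hlab)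
  have hpos : ∀ γ ∈ CD n D, IsPosRoot n γ := fun γ hγ => mem_rootList.mp (mem_of_mem_diagRun hγ)
  choose p q _ hpq using fun γ : {γ : ℕ × ℕ // γ ∈ CD n D ∧ γ ∉ D} =>
    (hpos γ.1 γ.2.1).exists_rootAt
  refine exists_generators_of_reduces (fun g hg => tendsto_coadjPt hI hg) exists_coadjPt_poly
    (fun γ => (p γ, q γ)) (fun γ δ h => ?_) ?_ ((reduces_slice hc hψ hX hI).trans_eq
      (reduces_chain hL (F := {t | c t.1 = t.2}) (by simp) (fun k e _ => Iff.rfl) fun t ht => ?_))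
  · have h1 : p γ = p δ ∧ q γ = q δ := by simpa using h
    exact Subtype.ext (by rw [hpq γ, hpq δ, h1.1, h1.2])
  · ext ⟨e, k⟩
    simp only [Set.mem_range, Set.empty_union, Set.mem_ofPred_eq, Prod.mk.injEq]
    constructor
    · rintro ⟨γ, rfl, rfl⟩
      have h1 : c (p γ) ≠ q γ := fun h => γ.2.2 (hpq γ ▸ (hlab _ _).mpr h)
      refine ⟨(hL' _ _ h1).mpr ?_, h1⟩
      rw [← hpq γ]
      exact γ.2.1
    · rintro ⟨h1, h2⟩
      let γ : {γ : ℕ × ℕ // γ ∈ CD n D ∧ γ ∉ D} :=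
        ⟨rootAt e k, (hL' e k h2).mp h1, fun h => h2 ((hlab e k).mp h)⟩
      obtain ⟨h3, h4⟩ := rootAt_inj.mp (hpq γ)
      exact ⟨γ, h3.symm, h4.symm⟩
  · have h1 : c t.1 = t.2 := ht
    simpa [labelMat, h1] using hψ t.1
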